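/- arXiv:2008.10044 — 2 statements merged into one kernel-verified Lean document; each statement's English description precedes it below -/
import Mathlib

section
/- Let A be a Nakayama algebra. For a simple module S let M_S = S if pd S < ∞ and M_S = IS otherwise, and let N_S = S if id S < ∞ and N_S = PS otherwise; set d = max over simple S of pd M_S and d' = max over simple S of id N_S. Then fin-pro A = fin-inj A = del A = des A = d = d'. -/
open CategoryTheory CategoryTheory.Limits

noncomputable section

namespace ArtinAlg

variable (A : Type) [Ring A]

/-- `M` admits a projective resolution of length at most `n`. -/
inductive ProjDimLE : ℕ → ModuleCat.{0} A → Prop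
  | zero (M : ModuleCat.{0} A) (h : Projective M) : ProjDimLE 0 M
  | succ (n : ℕ) (M P : ModuleCat.{0} A) (f : P ⟶ M) (hP : Projective P) (hf : Epi f)
      (h : ProjDimLE n (kernel f)) : ProjDimLE (n + 1) M

/-- `M` admits an injective coresolution of length at most `n`. -/
inductive InjDimLE : ℕ → ModuleCat.{0} A → Prop
  | zero (M : ModuleCat.{0} A) (h : Injective M) : InjDimLE 0 M
  | succ (n : ℕ) (M I : ModuleCat.{0} A) (f : M ⟶ I) (hI : Injective I) (hf : Mono f)
      (h : InjDimLE n (cokernel f)) : InjDimLE (n + 1) M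

/-- The projective dimension `pd M ∈ ℕ∞`. -/
def projDim (M : ModuleCat.{0} A) : ℕ∞ :=
  sInf {d : ℕ∞ | ∃ n : ℕ, d = n ∧ ProjDimLE A n M}

/-- The injective dimension `id M ∈ ℕ∞`. -/
def injDim (M : ModuleCat.{0} A) : ℕ∞ :=
  sInf {d : ℕ∞ | ∃ n : ℕ, d = n ∧ InjDimLE A n M}

/-- `f : P ⟶ M` is a projective cover: `P` is projective and `f` is an essential
(superfluous) epimorphism. -/
def IsProjectiveCoverHom {P M : ModuleCat.{0} A} (f : P ⟶ M) : Prop :=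
  Projective P ∧ Epi f ∧ ∀ (N : ModuleCat.{0} A) (g : N ⟶ P), Epi (g ≫ f) → Epi g

/-- `P` is a projective cover of `M`. -/
def IsProjCoverOf (M P : ModuleCat.{0} A) : Prop :=
  ∃ f : P ⟶ M, IsProjectiveCoverHom A f

/-- `f : M ⟶ I` is an injective envelope: `I` is injective and `f` is an essential
monomorphism. -/
def IsInjectiveEnvelopeHom {M I : ModuleCat.{0} A} (f : M ⟶ I) : Prop :=
  Injective I ∧ Mono f ∧ ∀ (N : ModuleCat.{0} A) (g : I ⟶ N), Mono (f ≫ g) → Mono g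

/-- `I` is an injective envelope of `M`. -/
def IsInjEnvOf (M I : ModuleCat.{0} A) : Prop :=
  ∃ f : M ⟶ I, IsInjectiveEnvelopeHom A f

/-- `X ≅ Ω M`, the kernel of a projective cover of `M`. -/
def IsSyzygyOf (M X : ModuleCat.{0} A) : Prop :=
  ∃ (P : ModuleCat.{0} A) (f : P ⟶ M), IsProjectiveCoverHom A f ∧ Nonempty (X ≅ kernel f)

/-- `X ≅ Σ M`, the cokernel of an injective envelope of `M`. -/
def IsCosyzygyOf (M X : ModuleCat.{0} A) : Prop :=
  ∃ (I : ModuleCat.{0} A) (f : M ⟶ I), IsInjectiveEnvelopeHom A f ∧ Nonempty (X ≅ cokernel f)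

/-- `X ≅ Ω^n M`. -/
def IsNthSyzygy : ℕ → ModuleCat.{0} A → ModuleCat.{0} A → Prop
  | 0, M, X => Nonempty (X ≅ M)
  | n + 1, M, X => ∃ Y, IsSyzygyOf A M Y ∧ IsNthSyzygy n Y X

/-- `X ≅ Σ^n M`. -/
def IsNthCosyzygy : ℕ → ModuleCat.{0} A → ModuleCat.{0} A → Prop
  | 0, M, X => Nonempty (X ≅ M)
  | n + 1, M, X => ∃ Y, IsCosyzygyOf A M Y ∧ IsNthCosyzygy n Y X

/-- `X` is a direct summand of `Y`. -/
def IsDirectSummandOf (X Y : ModuleCat.{0} A) : Prop :=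
  ∃ (i : X ⟶ Y) (r : Y ⟶ X), i ≫ r = 𝟙 X

/-- `X ∈ add W` : `X` is a direct summand of a finite direct sum of copies of `W`. -/
def InAdd (X W : ModuleCat.{0} A) : Prop :=
  ∃ n : ℕ, IsDirectSummandOf A X (ModuleCat.of A (Fin n → ↥W))

/-- The delooping level of `M` is at most `d` :
`Ω^d M ∈ add (A ⊕ Ω^{d+1} M')` for some finitely generated `M'`. -/
def DelLE (d : ℕ) (M : ModuleCat.{0} A) : Prop :=
  ∃ X, IsNthSyzygy A d M X ∧
    ∃ M' : ModuleCat.{0} A, Module.Finite A ↥M' ∧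
      ∃ X', IsNthSyzygy A (d + 1) M' X' ∧ InAdd A X (ModuleCat.of A (A × ↥X'))

/-- The delooping level `del M ∈ ℕ∞`. -/
def delLevel (M : ModuleCat.{0} A) : ℕ∞ :=
  sInf {d : ℕ∞ | ∃ n : ℕ, d = n ∧ DelLE A n M}

/-- The delooping level of the algebra: the supremum of `del S` over the simple modules. -/
def delAlg : ℕ∞ :=
  sSup {d : ℕ∞ | ∃ S : ModuleCat.{0} A, IsSimpleModule A ↥S ∧ delLevel A S = d}

/-- `Q` is a minimal injective cogenerator: the injective envelope of the direct sum of
a complete set of representatives of the simple modules. -/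
def IsMinimalInjectiveCogenerator (Q : ModuleCat.{0} A) : Prop :=
  ∃ (ι : Type) (_ : Fintype ι) (S : ι → ModuleCat.{0} A),
    (∀ i, IsSimpleModule A ↥(S i)) ∧
    (∀ T : ModuleCat.{0} A, IsSimpleModule A ↥T → ∃! i, Nonempty (↥T ≃ₗ[A] ↥(S i))) ∧
    IsInjEnvOf A (ModuleCat.of A (∀ i, ↥(S i))) Q

/-- The desuspending level of `M` is at most `d` :
`Σ^d M ∈ add (D(A) ⊕ Σ^{d+1} M')` for some finitely generated `M'`. -/
def DesLE (d : ℕ) (M : ModuleCat.{0} A) : Prop :=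
  ∃ X, IsNthCosyzygy A d M X ∧
    ∃ Q, IsMinimalInjectiveCogenerator A Q ∧
      ∃ M' : ModuleCat.{0} A, Module.Finite A ↥M' ∧
        ∃ X', IsNthCosyzygy A (d + 1) M' X' ∧ InAdd A X (ModuleCat.of A (↥Q × ↥X'))

/-- The desuspending level `des M ∈ ℕ∞`. -/
def desLevel (M : ModuleCat.{0} A) : ℕ∞ :=
  sInf {d : ℕ∞ | ∃ n : ℕ, d = n ∧ DesLE A n M}

/-- The desuspending level of the algebra. -/
def desAlg : ℕ∞ :=
  sSup {d : ℕ∞ | ∃ S : ModuleCat.{0} A, IsSimpleModule A ↥S ∧ desLevel A S = d}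

/-- The (small) finitistic projective dimension `fin-pro A`. -/
def finProDim : ℕ∞ :=
  sSup {d : ℕ∞ | ∃ M : ModuleCat.{0} A, Module.Finite A ↥M ∧ projDim A M = d ∧ d ≠ ⊤}

/-- The (small) finitistic injective dimension `fin-inj A`. -/
def finInjDim : ℕ∞ :=
  sSup {d : ℕ∞ | ∃ M : ModuleCat.{0} A, Module.Finite A ↥M ∧ injDim A M = d ∧ d ≠ ⊤}

/-- The big finitistic projective dimension `Fin-pro A`. -/
def bigFinProDim : ℕ∞ :=
  sSup {d : ℕ∞ | ∃ M : ModuleCat.{0} A, projDim A M = d ∧ d ≠ ⊤}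

/-- The big finitistic injective dimension `Fin-inj A`. -/
def bigFinInjDim : ℕ∞ :=
  sSup {d : ℕ∞ | ∃ M : ModuleCat.{0} A, injDim A M = d ∧ d ≠ ⊤}

/-- `M` is an indecomposable nonzero module. -/
def Indec (M : ModuleCat.{0} A) : Prop :=
  Nontrivial ↥M ∧ ∀ (N₁ N₂ : Submodule A ↥M), IsCompl N₁ N₂ → N₁ = ⊥ ∨ N₂ = ⊥

/-- `M` is serial (uniserial): its submodules form a chain. -/
def IsUniserial (M : ModuleCat.{0} A) : Prop :=
  ∀ N₁ N₂ : Submodule A ↥M, N₁ ≤ N₂ ∨ N₂ ≤ N₁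

/-- `A` is a Nakayama algebra: all finitely generated indecomposable modules are serial. -/
def IsNakayama : Prop :=
  ∀ M : ModuleCat.{0} A, Module.Finite A ↥M → Indec A M → IsUniserial A M

/-- `A` is connected: it is not a nontrivial product of algebras. -/
def IsConnectedAlgebra : Prop :=
  Nontrivial A ∧ ∀ e : A, IsIdempotentElem e → e ∈ Set.center A → e = 0 ∨ e = 1

/-- `A` is a cyclic Nakayama algebra: connected Nakayama with no simple projective module. -/
def IsCyclicNakayama : Prop :=
  IsNakayama A ∧ IsConnectedAlgebra A ∧
    ¬ ∃ S : ModuleCat.{0} A, IsSimpleModule A ↥S ∧ Projective S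

/-- `T ≅ top M` (and `top M` is simple): there is an essential epimorphism `M ⟶ T`. -/
def IsSimpleTopOf (M T : ModuleCat.{0} A) : Prop :=
  IsSimpleModule A ↥T ∧
    ∃ f : M ⟶ T, Epi f ∧ ∀ (N : ModuleCat.{0} A) (g : N ⟶ M), Epi (g ≫ f) → Epi g

/-- `S ≅ soc M` (and `soc M` is simple): there is an essential monomorphism `S ⟶ M`. -/
def IsSimpleSocOf (M S : ModuleCat.{0} A) : Prop :=
  IsSimpleModule A ↥S ∧
    ∃ f : S ⟶ M, Mono f ∧ ∀ (N : ModuleCat.{0} A) (g : M ⟶ N), Mono (f ≫ g) → Mono g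

/-- `0 ⟶ N ⟶ E ⟶ M ⟶ 0` is an almost split (Auslander-Reiten) sequence. -/
def IsAlmostSplitSeq {N E M : ModuleCat.{0} A} (f : N ⟶ E) (g : E ⟶ M) : Prop :=
  Mono f ∧ Epi g ∧ (∃ w : f ≫ g = 0, (ShortComplex.mk f g w).Exact) ∧
  (¬ ∃ s : M ⟶ E, s ≫ g = 𝟙 M) ∧ Indec A N ∧ Indec A M ∧
  ∀ (X : ModuleCat.{0} A) (h : X ⟶ M), (¬ ∃ s : M ⟶ X, s ≫ h = 𝟙 M) → ∃ h' : X ⟶ E, h' ≫ g = h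

/-- `N ≅ τ M`, the Auslander-Reiten translate of `M` : there is an almost split sequence
`0 ⟶ N ⟶ E ⟶ M ⟶ 0`. -/
def IsTauOf (N M : ModuleCat.{0} A) : Prop :=
  ∃ (E : ModuleCat.{0} A) (f : N ⟶ E) (g : E ⟶ M), IsAlmostSplitSeq A f g

/-- `U ≅ ψ S = τ⁻ top (I S)`. -/
def IsPsiOf (S U : ModuleCat.{0} A) : Prop :=
  ∃ I, IsInjEnvOf A S I ∧ ∃ T, IsSimpleTopOf A I T ∧ IsTauOf A T U

/-- `T ≅ γ S = τ soc (P S)`. -/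
def IsGammaOf (S T : ModuleCat.{0} A) : Prop :=
  ∃ P, IsProjCoverOf A S P ∧ ∃ U, IsSimpleSocOf A P U ∧ IsTauOf A T U

/-- `T ≅ φ S = top (I S)`. -/
def IsPhiOf (S T : ModuleCat.{0} A) : Prop :=
  ∃ I, IsInjEnvOf A S I ∧ IsSimpleTopOf A I T

/-- There is a `ψ`-path `(S_1, …, S_m)` of cardinality `m` ending in `S`. -/
def PsiPathTo (m : ℕ) (S : ModuleCat.{0} A) : Prop :=
  1 ≤ m ∧ ∃ c : ℕ → ModuleCat.{0} A,
    (∀ i < m, IsSimpleModule A ↥(c i)) ∧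
    (∀ i, i + 1 < m → IsPsiOf A (c i) (c (i + 1))) ∧
    Nonempty (c (m - 1) ≅ S)

/-- `a(S)`: the supremum of the cardinalities of `ψ`-paths ending in `S`. -/
def aVal (S : ModuleCat.{0} A) : ℕ∞ :=
  sSup {d : ℕ∞ | ∃ m : ℕ, d = m ∧ PsiPathTo A m S}

/-- `a(A)`: the maximum of `a(S)` over the simple modules which are not `ψ`-cyclic. -/
def aAlg : ℕ∞ :=
  sSup {d : ℕ∞ | ∃ S : ModuleCat.{0} A, IsSimpleModule A ↥S ∧ aVal A S ≠ ⊤ ∧ aVal A S = d}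

/-- `S` is a composition factor of `M`: a simple subquotient of `M`. -/
def IsCompFactorOf (S M : ModuleCat.{0} A) : Prop :=
  IsSimpleModule A ↥S ∧ ∃ N' N : Submodule A ↥M, N' ≤ N ∧
    Nonempty ((↥N ⧸ N'.comap N.subtype) ≃ₗ[A] ↥S)

/-- `e(S) = min {pd S, pd (I S)} = x`. -/
def ERelVal (S : ModuleCat.{0} A) (x : ℕ∞) : Prop :=
  ∃ I, IsInjEnvOf A S I ∧ x = min (projDim A S) (projDim A I)

/-- `e*(S) = min {id S, id (P S)} = x`. -/
def EStarVal (S : ModuleCat.{0} A) (x : ℕ∞) : Prop :=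
  ∃ P, IsProjCoverOf A S P ∧ x = min (injDim A S) (injDim A P)

/-- `T = h(S) = top (Ω^{e(S)} N S)`, the homological permutation. -/
def HRel (S T : ModuleCat.{0} A) : Prop :=
  IsSimpleModule A ↥S ∧ IsSimpleModule A ↥T ∧
  ∃ z : ℕ, ERelVal A S z ∧
    ∃ N, ((Odd z ∧ N = S) ∨ (Even z ∧ IsInjEnvOf A S N)) ∧
      ∃ X, IsNthSyzygy A z N X ∧ IsSimpleTopOf A X T

/-- `S = h*(T) = soc (Σ^{e*(T)} N* T)`, the inverse homological permutation. -/
def HStarRel (T S : ModuleCat.{0} A) : Prop :=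
  IsSimpleModule A ↥T ∧ IsSimpleModule A ↥S ∧
  ∃ z : ℕ, EStarVal A T z ∧
    ∃ N, ((Odd z ∧ N = T) ∨ (Even z ∧ IsProjCoverOf A T N)) ∧
      ∃ X, IsNthCosyzygy A z N X ∧ IsSimpleSocOf A X S

/-- The `t`-fold relational iterate of a relation on modules (up to isomorphism). -/
def IterRel (r : ModuleCat.{0} A → ModuleCat.{0} A → Prop) :
    ℕ → ModuleCat.{0} A → ModuleCat.{0} A → Prop
  | 0, X, Y => Nonempty (X ≅ Y)
  | n + 1, X, Y => ∃ Z, r X Z ∧ IterRel r n Z Y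

end ArtinAlg


namespace Nak

open ArtinAlg CategoryTheory.Abelian

section Basic

variable {A : Type} [Ring A]

theorem se {X Y Z : Type} [AddCommGroup X] [AddCommGroup Y] [AddCommGroup Z]
    [Module A X] [Module A Y] [Module A Z] (f : X →ₗ[A] Y) (g : Y →ₗ[A] Z)
    (hf : Function.Injective f) (hg : Function.Surjective g) (h : Function.Exact f g) :
    (ModuleCat.shortComplexOfCompEqZero f g h.linearMap_comp_eq_zero).ShortExact :=
  ModuleCat.shortComplex_shortExact _ h hf hg

theorem se_ker {M N : ModuleCat.{0} A} (f : M ⟶ N) [Epi f] :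
    (ShortComplex.mk _ _ (kernel.condition f)).ShortExact :=
  { exact := ShortComplex.exact_kernel f }

theorem se_coker {M N : ModuleCat.{0} A} (f : M ⟶ N) [Mono f] :
    (ShortComplex.mk _ _ (cokernel.condition f)).ShortExact :=
  { exact := ShortComplex.exact_cokernel f }

theorem projDimLE_iff (n : ℕ) (M : ModuleCat.{0} A) :
    ProjDimLE A n M ↔ HasProjectiveDimensionLT M (n + 1) := by
  constructor
  · intro h
    induction h with
    | zero M h => infer_instance
    | succ n M P f hP hf h ih =>
      exact (se_ker f).hasProjectiveDimensionLT_X₃ (n + 1) ih inferInstance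
  · induction n generalizing M with
    | zero => intro h; exact .zero M (projective_iff_hasProjectiveDimensionLT_one.mpr h)
    | succ n ih =>
      intro h
      obtain ⟨p⟩ := EnoughProjectives.presentation M
      refine .succ n M p.p p.f p.projective p.epi (ih _ ?_)
      have := p.epi
      have := p.projective
      exact (se_ker p.f).hasProjectiveDimensionLT_X₁ (n + 1) inferInstance h

theorem injDimLE_iff (n : ℕ) (M : ModuleCat.{0} A) :
    InjDimLE A n M ↔ HasInjectiveDimensionLT M (n + 1) := by
  constructor
  · intro h
    induction h with
    | zero M h => infer_instance
    | succ n M P f hP hf h ih =>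
      exact (se_coker f).hasInjectiveDimensionLT_X₁ (n + 1) ih inferInstance
  · induction n generalizing M with
    | zero => intro h; exact .zero M (injective_iff_hasInjectiveDimensionLT_one.mpr h)
    | succ n ih =>
      intro h
      obtain ⟨p⟩ := EnoughInjectives.presentation M
      refine .succ n M p.J p.f p.injective p.mono (ih _ ?_)
      have := p.mono
      have := p.injective
      exact (se_coker p.f).hasInjectiveDimensionLT_X₃ (n + 1) inferInstance h

/-- Infimum of an upward closed set of naturals inside `ℕ∞`. -/
theorem sInf_le_iff' (p : ℕ → Prop) (hp : ∀ m n, m ≤ n → p m → p n) (n : ℕ) :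
    sInf {d : ℕ∞ | ∃ n : ℕ, d = n ∧ p n} ≤ n ↔ p n := by
  constructor
  · intro h
    have hne : {d : ℕ∞ | ∃ n : ℕ, d = n ∧ p n}.Nonempty := by
      by_contra hc
      rw [Set.not_nonempty_iff_eq_empty] at hc
      rw [hc] at h
      simp at h
    obtain ⟨m, hm, hpm⟩ := csInf_mem hne
    rw [hm] at h
    exact hp m n (by exact_mod_cast h) hpm
  · intro h
    exact sInf_le ⟨n, rfl, h⟩

theorem projDim_le_iff (n : ℕ) (M : ModuleCat.{0} A) :
    projDim A M ≤ n ↔ HasProjectiveDimensionLT M (n + 1) := by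
  rw [← projDimLE_iff]
  refine sInf_le_iff' _ ?_ n
  intro m n hmn h
  rw [projDimLE_iff] at h ⊢
  exact hasProjectiveDimensionLT_of_ge M (m + 1) _ (by omega)

theorem injDim_le_iff (n : ℕ) (M : ModuleCat.{0} A) :
    injDim A M ≤ n ↔ HasInjectiveDimensionLT M (n + 1) := by
  rw [← injDimLE_iff]
  refine sInf_le_iff' _ ?_ n
  intro m n hmn h
  rw [injDimLE_iff] at h ⊢
  exact hasInjectiveDimensionLT_of_ge M (m + 1) _ (by omega)

/-- finite projective dimension -/
def FinPd (M : ModuleCat.{0} A) : Prop := ∃ n, HasProjectiveDimensionLT M n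

/-- finite injective dimension -/
def FinId (M : ModuleCat.{0} A) : Prop := ∃ n, HasInjectiveDimensionLT M n

theorem projDim_ne_top_iff (M : ModuleCat.{0} A) : projDim A M ≠ ⊤ ↔ FinPd M := by
  constructor
  · intro h
    obtain ⟨n, hn⟩ := ENat.ne_top_iff_exists.mp h
    exact ⟨n + 1, (projDim_le_iff n M).mp hn.ge⟩
  · rintro ⟨n, hn⟩ h
    have := (projDim_le_iff n M).mpr (hasProjectiveDimensionLT_of_ge M n _ (by omega))
    rw [h] at this
    simp at this

theorem injDim_ne_top_iff (M : ModuleCat.{0} A) : injDim A M ≠ ⊤ ↔ FinId M := by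
  constructor
  · intro h
    obtain ⟨n, hn⟩ := ENat.ne_top_iff_exists.mp h
    exact ⟨n + 1, (injDim_le_iff n M).mp hn.ge⟩
  · rintro ⟨n, hn⟩ h
    have := (injDim_le_iff n M).mpr (hasInjectiveDimensionLT_of_ge M n _ (by omega))
    rw [h] at this
    simp at this

section ses
variable {S : ShortComplex (ModuleCat.{0} A)}

theorem FinPd.x2 (hS : S.ShortExact) (h1 : FinPd S.X₁) (h3 : FinPd S.X₃) : FinPd S.X₂ := by
  obtain ⟨m, hm⟩ := h1
  obtain ⟨n, hn⟩ := h3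
  exact ⟨m + n, hS.hasProjectiveDimensionLT_X₂ _ (hasProjectiveDimensionLT_of_ge _ m _ (by omega))
    (hasProjectiveDimensionLT_of_ge _ n _ (by omega))⟩

theorem FinPd.x3 (hS : S.ShortExact) (h1 : FinPd S.X₁) (h2 : FinPd S.X₂) : FinPd S.X₃ := by
  obtain ⟨m, hm⟩ := h1
  obtain ⟨n, hn⟩ := h2
  exact ⟨m + n + 1, hS.hasProjectiveDimensionLT_X₃ _
    (hasProjectiveDimensionLT_of_ge _ m _ (by omega))
    (hasProjectiveDimensionLT_of_ge _ n _ (by omega))⟩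

theorem FinPd.x1 (hS : S.ShortExact) (h2 : FinPd S.X₂) (h3 : FinPd S.X₃) : FinPd S.X₁ := by
  obtain ⟨m, hm⟩ := h2
  obtain ⟨n, hn⟩ := h3
  exact ⟨m + n, hS.hasProjectiveDimensionLT_X₁ _
    (hasProjectiveDimensionLT_of_ge _ m _ (by omega))
    (hasProjectiveDimensionLT_of_ge _ n _ (by omega))⟩

theorem FinId.x2 (hS : S.ShortExact) (h1 : FinId S.X₁) (h3 : FinId S.X₃) : FinId S.X₂ := by
  obtain ⟨m, hm⟩ := h1
  obtain ⟨n, hn⟩ := h3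
  exact ⟨m + n, hS.hasInjectiveDimensionLT_X₂ _ (hasInjectiveDimensionLT_of_ge _ m _ (by omega))
    (hasInjectiveDimensionLT_of_ge _ n _ (by omega))⟩

theorem FinId.x1 (hS : S.ShortExact) (h2 : FinId S.X₂) (h3 : FinId S.X₃) : FinId S.X₁ := by
  obtain ⟨m, hm⟩ := h2
  obtain ⟨n, hn⟩ := h3
  exact ⟨m + n + 1, hS.hasInjectiveDimensionLT_X₁ _
    (hasInjectiveDimensionLT_of_ge _ n _ (by omega))
    (hasInjectiveDimensionLT_of_ge _ m _ (by omega))⟩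

theorem FinId.x3 (hS : S.ShortExact) (h1 : FinId S.X₁) (h2 : FinId S.X₂) : FinId S.X₃ := by
  obtain ⟨m, hm⟩ := h1
  obtain ⟨n, hn⟩ := h2
  exact ⟨m + n, hS.hasInjectiveDimensionLT_X₃ _
    (hasInjectiveDimensionLT_of_ge _ n _ (by omega))
    (hasInjectiveDimensionLT_of_ge _ m _ (by omega))⟩

/-- contravariant two-out-of-three for vanishing of `Ext`. -/
theorem ext_sub_x2 (hS : S.ShortExact) (Y : ModuleCat.{0} A) (n : ℕ) (h1 : Subsingleton (Ext S.X₁ Y n))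
    (h3 : Subsingleton (Ext S.X₃ Y n)) : Subsingleton (Ext S.X₂ Y n) := by
  refine subsingleton_of_forall_eq 0 fun x => ?_
  obtain ⟨x₃, rfl⟩ := Ext.contravariant_sequence_exact₂ hS _ x (Subsingleton.elim _ _)
  rw [Subsingleton.elim x₃ 0, Ext.comp_zero]

theorem ext_sub_x2' (hS : S.ShortExact) (Y : ModuleCat.{0} A) (n : ℕ) (h1 : Subsingleton (Ext Y S.X₁ n))
    (h3 : Subsingleton (Ext Y S.X₃ n)) : Subsingleton (Ext Y S.X₂ n) := by
  refine subsingleton_of_forall_eq 0 fun x => ?_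
  obtain ⟨x₃, rfl⟩ := Ext.covariant_sequence_exact₂ _ hS x (Subsingleton.elim _ _)
  rw [Subsingleton.elim x₃ 0, Ext.zero_comp]

theorem ext_shift (hS : S.ShortExact) [Projective S.X₂] (Y : ModuleCat.{0} A) (n : ℕ) :
    Subsingleton (Ext S.X₁ Y (n + 1)) ↔ Subsingleton (Ext S.X₃ Y (n + 2)) := by
  constructor
  · intro h
    refine subsingleton_of_forall_eq 0 fun x => ?_
    obtain ⟨x₁, rfl⟩ := Ext.contravariant_sequence_exact₃ hS _ x
      (Ext.eq_zero_of_projective _) (show 1 + (n + 1) = n + 2 by omega)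
    rw [Subsingleton.elim x₁ 0, Ext.comp_zero]
  · intro h
    refine subsingleton_of_forall_eq 0 fun x => ?_
    obtain ⟨x₁, rfl⟩ := Ext.contravariant_sequence_exact₁ hS _ x
      (show 1 + (n + 1) = n + 2 by omega) (Subsingleton.elim _ _)
    rw [Ext.eq_zero_of_projective x₁, Ext.comp_zero]

theorem ext_shift' (hS : S.ShortExact) [Injective S.X₂] (Y : ModuleCat.{0} A) (n : ℕ) :
    Subsingleton (Ext Y S.X₃ (n + 1)) ↔ Subsingleton (Ext Y S.X₁ (n + 2)) := by
  constructor
  · intro h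
    refine subsingleton_of_forall_eq 0 fun x => ?_
    obtain ⟨x₁, rfl⟩ := Ext.covariant_sequence_exact₁ _ hS x
      (Ext.eq_zero_of_injective _) rfl
    rw [Subsingleton.elim x₁ 0, Ext.zero_comp]
  · intro h
    refine subsingleton_of_forall_eq 0 fun x => ?_
    obtain ⟨x₁, rfl⟩ := Ext.covariant_sequence_exact₃ _ hS x
      rfl (Subsingleton.elim _ _)
    rw [Ext.eq_zero_of_injective x₁, Ext.zero_comp]

end ses

theorem ext_sub_iso {X X' : ModuleCat.{0} A} (e : X ≅ X') (Y : ModuleCat.{0} A) (n : ℕ)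
    (h : Subsingleton (Ext X' Y n)) : Subsingleton (Ext X Y n) := by
  refine subsingleton_of_forall_eq 0 fun x => ?_
  have h1 : (Ext.mk₀ (e.hom ≫ e.inv)).comp x (zero_add n) = x := by simp
  rw [← h1, ← Ext.mk₀_comp_mk₀_assoc, Subsingleton.elim ((Ext.mk₀ e.inv).comp x (zero_add n)) 0,
    Ext.comp_zero]

theorem ext_sub_iso' {X X' : ModuleCat.{0} A} (e : X ≅ X') (Y : ModuleCat.{0} A) (n : ℕ)
    (h : Subsingleton (Ext Y X' n)) : Subsingleton (Ext Y X n) := by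
  refine subsingleton_of_forall_eq 0 fun x => ?_
  have h1 : x.comp (Ext.mk₀ (e.hom ≫ e.inv)) (add_zero n) = x := by simp
  rw [← h1, ← Ext.mk₀_comp_mk₀, ← Ext.comp_assoc _ _ _ (add_zero n) (add_zero 0) (by omega),
    Subsingleton.elim (x.comp (Ext.mk₀ e.hom) (add_zero n)) 0,
    Ext.zero_comp]

theorem syz_shift (k : ℕ) (M X Y : ModuleCat.{0} A) (h : IsNthSyzygy A k M X) (j : ℕ) :
    Subsingleton (Ext X Y (j + 1)) ↔ Subsingleton (Ext M Y (j + 1 + k)) := by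
  induction k generalizing M with
  | zero =>
    obtain ⟨e⟩ := h
    exact ⟨ext_sub_iso e.symm Y _, ext_sub_iso e Y _⟩
  | succ k ih =>
    obtain ⟨Z, ⟨P, f, ⟨hP, hf, -⟩, ⟨e⟩⟩, hZ⟩ := h
    rw [ih Z hZ]
    have h1 := ext_shift (se_ker f) Y (j + k)
    have h2 : Subsingleton (Ext Z Y (j + k + 1)) ↔ Subsingleton (Ext (kernel f) Y (j + k + 1)) :=
      ⟨ext_sub_iso e.symm Y _, ext_sub_iso e Y _⟩
    rw [show j + 1 + k = j + k + 1 by omega, show j + 1 + (k + 1) = j + k + 2 by omega, h2]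
    exact h1

theorem cosyz_shift (k : ℕ) (M X Y : ModuleCat.{0} A) (h : IsNthCosyzygy A k M X) (j : ℕ) :
    Subsingleton (Ext Y X (j + 1)) ↔ Subsingleton (Ext Y M (j + 1 + k)) := by
  induction k generalizing M with
  | zero =>
    obtain ⟨e⟩ := h
    exact ⟨ext_sub_iso' e.symm Y _, ext_sub_iso' e Y _⟩
  | succ k ih =>
    obtain ⟨Z, ⟨P, f, ⟨hP, hf, -⟩, ⟨e⟩⟩, hZ⟩ := h
    rw [ih Z hZ]
    have h1 := ext_shift' (se_coker f) Y (j + k)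
    have h2 : Subsingleton (Ext Y Z (j + k + 1)) ↔
        Subsingleton (Ext Y (cokernel f) (j + k + 1)) :=
      ⟨ext_sub_iso' e.symm Y _, ext_sub_iso' e Y _⟩
    rw [show j + 1 + k = j + k + 1 by omega, show j + 1 + (k + 1) = j + k + 2 by omega, h2]
    exact h1

/-- the identity of an object of the additive closure of a product is a sum of maps factoring through one of the two factors. -/
theorem inAdd_decomp {X : ModuleCat.{0} A} {B X' : Type} [AddCommGroup B] [Module A B]
    [AddCommGroup X'] [Module A X'] (h : InAdd A X (ModuleCat.of A (B × X'))) :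
    ∃ (n : ℕ) (a : Fin n → (X ⟶ ModuleCat.of A B)) (b : Fin n → (ModuleCat.of A B ⟶ X))
      (c : Fin n → (X ⟶ ModuleCat.of A X')) (d : Fin n → (ModuleCat.of A X' ⟶ X)),
      𝟙 X = ∑ i, (a i ≫ b i + c i ≫ d i) := by
  obtain ⟨n, i, r, hir⟩ := h
  refine ⟨n,
    fun j => ModuleCat.ofHom (LinearMap.fst A B X' ∘ₗ LinearMap.proj j ∘ₗ i.hom),
    fun j => ModuleCat.ofHom (r.hom ∘ₗ LinearMap.single A (fun _ => B × X') j ∘ₗ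
      LinearMap.inl A B X'),
    fun j => ModuleCat.ofHom (LinearMap.snd A B X' ∘ₗ LinearMap.proj j ∘ₗ i.hom),
    fun j => ModuleCat.ofHom (r.hom ∘ₗ LinearMap.single A (fun _ => B × X') j ∘ₗ
      LinearMap.inr A B X'), ?_⟩
  rw [← hir]
  ext x
  have : ∀ y : Fin n → B × X', r.hom y = ∑ j, (r.hom (Pi.single j ((y j).1, 0)) +
      r.hom (Pi.single j (0, (y j).2))) := by
    intro y
    conv_lhs => rw [← Finset.univ_sum_single y]
    rw [map_sum]
    refine Finset.sum_congr rfl fun j _ => ?_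
    rw [← map_add, ← Pi.single_add]
    simp
  simp [ModuleCat.hom_sum, LinearMap.sum_apply]
  exact this (i.hom x)

theorem ext_sub_inAdd {X Y : ModuleCat.{0} A} {B X' : Type} [AddCommGroup B] [Module A B]
    [AddCommGroup X'] [Module A X'] (h : InAdd A X (ModuleCat.of A (B × X'))) (n : ℕ)
    (hB : Subsingleton (Ext (ModuleCat.of A B) Y n))
    (hX : Subsingleton (Ext (ModuleCat.of A X') Y n)) : Subsingleton (Ext X Y n) := by
  obtain ⟨m, a, b, c, d, hid⟩ := inAdd_decomp h
  refine subsingleton_of_forall_eq 0 fun x => ?_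
  have h1 : (Ext.mk₀ (𝟙 X)).comp x (zero_add n) = x := by simp
  rw [← h1, hid, Ext.mk₀_sum, Ext.sum_comp]
  refine Finset.sum_eq_zero fun i _ => ?_
  rw [Ext.mk₀_add, Ext.add_comp, ← Ext.mk₀_comp_mk₀_assoc, ← Ext.mk₀_comp_mk₀_assoc,
    Subsingleton.elim ((Ext.mk₀ (b i)).comp x (zero_add n)) 0,
    Subsingleton.elim ((Ext.mk₀ (d i)).comp x (zero_add n)) 0]
  simp

theorem ext_sub_inAdd' {X Y : ModuleCat.{0} A} {B X' : Type} [AddCommGroup B] [Module A B]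
    [AddCommGroup X'] [Module A X'] (h : InAdd A X (ModuleCat.of A (B × X'))) (n : ℕ)
    (hB : Subsingleton (Ext Y (ModuleCat.of A B) n))
    (hX : Subsingleton (Ext Y (ModuleCat.of A X') n)) : Subsingleton (Ext Y X n) := by
  obtain ⟨m, a, b, c, d, hid⟩ := inAdd_decomp h
  refine subsingleton_of_forall_eq 0 fun x => ?_
  have h1 : x.comp (Ext.mk₀ (𝟙 X)) (add_zero n) = x := by simp
  rw [← h1, hid, Ext.mk₀_sum, Ext.comp_sum]
  refine Finset.sum_eq_zero fun i _ => ?_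
  rw [Ext.mk₀_add, Ext.comp_add, ← Ext.mk₀_comp_mk₀, ← Ext.mk₀_comp_mk₀,
    ← Ext.comp_assoc _ _ _ (add_zero n) (add_zero 0) (by omega),
    ← Ext.comp_assoc _ _ _ (add_zero n) (add_zero 0) (by omega),
    Subsingleton.elim (x.comp (Ext.mk₀ (a i)) (add_zero n)) 0,
    Subsingleton.elim (x.comp (Ext.mk₀ (c i)) (add_zero n)) 0]
  simp

end Basic

end Nak

namespace Nak

open ArtinAlg CategoryTheory.Abelian

section Detect

variable {A : Type} [Ring A]

theorem ext_fl (Y : ModuleCat.{0} A) (n : ℕ)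
    (h : ∀ S : ModuleCat.{0} A, IsSimpleModule A S → Subsingleton (Ext S Y n))
    (X : Type) [AddCommGroup X] [Module A X] (hX : IsFiniteLength A X) :
    Subsingleton (Ext (ModuleCat.of A X) Y n) := by
  induction hX with
  | of_subsingleton =>
    rename_i M _ _ _
    refine subsingleton_of_forall_eq 0 fun x => ?_
    have h1 : (Ext.mk₀ (𝟙 (ModuleCat.of A M))).comp x (zero_add n) = x := by simp
    have h2 : 𝟙 (ModuleCat.of A M) = 0 := by
      ext x
      exact Subsingleton.elim _ _
    rw [← h1, h2, Ext.mk₀_zero, Ext.zero_comp]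
  | of_simple_quotient _ ih =>
    rename_i M _ _ N hs _
    exact ext_sub_x2 (se N.subtype N.mkQ N.injective_subtype N.mkQ_surjective
      (LinearMap.exact_subtype_mkQ N)) Y n ih (h (ModuleCat.of A (M ⧸ N)) hs)

theorem ext_fl' (Y : ModuleCat.{0} A) (n : ℕ)
    (h : ∀ S : ModuleCat.{0} A, IsSimpleModule A S → Subsingleton (Ext Y S n))
    (X : Type) [AddCommGroup X] [Module A X] (hX : IsFiniteLength A X) :
    Subsingleton (Ext Y (ModuleCat.of A X) n) := by
  induction hX with
  | of_subsingleton =>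
    rename_i M _ _ _
    refine subsingleton_of_forall_eq 0 fun x => ?_
    have h1 : x.comp (Ext.mk₀ (𝟙 (ModuleCat.of A M))) (add_zero n) = x := by simp
    have h2 : 𝟙 (ModuleCat.of A M) = 0 := by
      ext x
      exact Subsingleton.elim _ _
    rw [← h1, h2, Ext.mk₀_zero, Ext.comp_zero]
  | of_simple_quotient _ ih =>
    rename_i M _ _ N hs _
    exact ext_sub_x2' (se N.subtype N.mkQ N.injective_subtype N.mkQ_surjective
      (LinearMap.exact_subtype_mkQ N)) Y n ih (h (ModuleCat.of A (M ⧸ N)) hs)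

theorem idLT_of_fg (n : ℕ) (M : ModuleCat.{0} A)
    (h : ∀ X : ModuleCat.{0} A, Module.Finite A X → Subsingleton (Ext X M (n + 1))) :
    HasInjectiveDimensionLT M (n + 1) := by
  induction n generalizing M with
  | zero =>
    have hb : Module.Baer A M := by
      intro I g
      have hs := se I.subtype I.mkQ I.injective_subtype I.mkQ_surjective
        (LinearMap.exact_subtype_mkQ I)
      have hsub := h (ModuleCat.of A (A ⧸ I)) inferInstance
      obtain ⟨x, hx⟩ := Ext.contravariant_sequence_exact₁ hs M
        (Ext.mk₀ (ModuleCat.ofHom g : ModuleCat.of A I ⟶ M)) (show 1 + 0 = 0 + 1 by omega)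
        (hsub.elim _ _)
      obtain ⟨y, rfl⟩ := (Ext.mk₀_bijective _ _).2 x
      rw [Ext.mk₀_comp_mk₀] at hx
      have hx := (Ext.mk₀_bijective _ _).1 hx
      refine ⟨y.hom, fun x hxI => ?_⟩
      exact congrArg (fun (t : ModuleCat.of A I ⟶ M) => t.hom ⟨x, hxI⟩) hx
    have := (Module.injective_iff_injective_object A M).mp hb.injective
    infer_instance
  | succ n ih =>
    obtain ⟨p⟩ := EnoughInjectives.presentation M
    have := p.mono
    have := p.injective
    have hs := se_coker p.f
    refine hs.hasInjectiveDimensionLT_X₁ (n + 1) (ih _ fun X hX => ?_) inferInstance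
    exact (ext_shift' hs X n).mpr (h X hX)

theorem pdLT_of_fg [IsNoetherianRing A] (n : ℕ) (M : ModuleCat.{0} A) (hM : Module.Finite A M)
    (h : ∀ X : ModuleCat.{0} A, Module.Finite A X → Subsingleton (Ext M X (n + 1))) :
    HasProjectiveDimensionLT M (n + 1) := by
  induction n generalizing M with
  | zero =>
    obtain ⟨k, f, hf⟩ := Module.Finite.exists_fin' A M
    have hs := se (LinearMap.ker f).subtype f (Submodule.injective_subtype _) hf
      (LinearMap.exact_subtype_ker_map f)
    have hsub := h (ModuleCat.of A (LinearMap.ker f)) inferInstance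
    obtain ⟨x, hx⟩ := Ext.covariant_sequence_exact₃ M hs (Ext.mk₀ (𝟙 M)) rfl (hsub.elim _ _)
    obtain ⟨y, rfl⟩ := (Ext.mk₀_bijective _ _).2 x
    rw [Ext.mk₀_comp_mk₀] at hx
    have hx := (Ext.mk₀_bijective _ _).1 hx
    have hP : Projective (ModuleCat.of A (Fin k → A)) :=
      (IsProjective.iff_projective (R := A) (Fin k → A)).mp inferInstance
    exact Retract.hasProjectiveDimensionLT (Y := ModuleCat.of A (Fin k → A))
      ⟨y, ModuleCat.ofHom f, hx⟩ 1
  | succ n ih =>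
    obtain ⟨k, f, hf⟩ := Module.Finite.exists_fin' A M
    have hs := se (LinearMap.ker f).subtype f (Submodule.injective_subtype _) hf
      (LinearMap.exact_subtype_ker_map f)
    have hP : Projective (ModuleCat.of A (Fin k → A)) :=
      (IsProjective.iff_projective (R := A) (Fin k → A)).mp inferInstance
    refine hs.hasProjectiveDimensionLT_X₃ (n + 1) (ih _ (inferInstanceAs (Module.Finite A
      (LinearMap.ker f))) fun X hX => ?_) ?_
    · exact (@ext_shift _ _ _ hs hP X n).mpr (h X hX)
    · exact hasProjectiveDimensionLT_of_ge _ 1 _ (by omega)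

theorem fl_of_fg [IsArtinianRing A] (X : Type) [AddCommGroup X] [Module A X]
    (h : Module.Finite A X) : IsFiniteLength A X := by
  rw [isFiniteLength_iff_isNoetherian_isArtinian]
  exact ⟨inferInstance, inferInstance⟩

theorem finInj_le_del [IsArtinianRing A] : finInjDim A ≤ delAlg A := by
  refine sSup_le ?_
  rintro _ ⟨M, hM, rfl, ht⟩
  obtain ⟨n, hn⟩ := ENat.ne_top_iff_exists.mp ht
  rw [← hn]
  rcases n with _ | n
  · simp
  have hnot : ¬ HasInjectiveDimensionLT M (n + 1) := by
    intro h
    have := (injDim_le_iff n M).mpr h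
    rw [← hn] at this
    have : n + 1 ≤ n := by exact_mod_cast this
    omega
  have hlt : HasInjectiveDimensionLT M (n + 1 + 1) := (injDim_le_iff (n + 1) M).mp hn.ge
  have hex : ∃ S : ModuleCat.{0} A, IsSimpleModule A S ∧ ¬ Subsingleton (Ext S M (n + 1)) := by
    by_contra! hc
    exact hnot (idLT_of_fg n M fun X hX => ext_fl M (n + 1) hc X (fl_of_fg X hX))
  obtain ⟨S, hS, hSn⟩ := hex
  refine le_trans ?_ (le_sSup ⟨S, hS, rfl⟩)
  refine le_sInf ?_
  rintro _ ⟨m, rfl, X, hX, M', -, X', hX', hadd⟩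
  by_contra! hc
  have hc : m < n + 1 := by exact_mod_cast hc
  obtain ⟨j, rfl⟩ : ∃ j, n = j + m := ⟨n - m, by omega⟩
  apply hSn
  rw [show j + m + 1 = j + 1 + m by omega, ← syz_shift m S X M hX j]
  have hP : Projective (ModuleCat.of A A) :=
      (IsProjective.iff_projective (R := A) A).mp inferInstance
  refine ext_sub_inAdd hadd (j + 1) (subsingleton_of_forall_eq 0 fun x =>
    Ext.eq_zero_of_projective x) ?_
  refine (syz_shift (m + 1) M' X' M hX' j).mpr ?_
  exact hlt.subsingleton _ _ _ (by omega) _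

theorem finPro_le_des [IsArtinianRing A] : finProDim A ≤ desAlg A := by
  refine sSup_le ?_
  rintro _ ⟨M, hM, rfl, ht⟩
  obtain ⟨n, hn⟩ := ENat.ne_top_iff_exists.mp ht
  rw [← hn]
  rcases n with _ | n
  · simp
  have hnot : ¬ HasProjectiveDimensionLT M (n + 1) := by
    intro h
    have := (projDim_le_iff n M).mpr h
    rw [← hn] at this
    have : n + 1 ≤ n := by exact_mod_cast this
    omega
  have hlt : HasProjectiveDimensionLT M (n + 1 + 1) := (projDim_le_iff (n + 1) M).mp hn.ge
  have hex : ∃ S : ModuleCat.{0} A, IsSimpleModule A S ∧ ¬ Subsingleton (Ext M S (n + 1)) := by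
    by_contra! hc
    exact hnot (pdLT_of_fg n M hM fun X hX => ext_fl' M (n + 1) hc X (fl_of_fg X hX))
  obtain ⟨S, hS, hSn⟩ := hex
  refine le_trans ?_ (le_sSup ⟨S, hS, rfl⟩)
  refine le_sInf ?_
  rintro _ ⟨m, rfl, X, hX, Q, ⟨_, _, _, _, _, _, hQ, _⟩, M', -, X', hX', hadd⟩
  by_contra! hc
  have hc : m < n + 1 := by exact_mod_cast hc
  obtain ⟨j, rfl⟩ : ∃ j, n = j + m := ⟨n - m, by omega⟩
  apply hSn
  rw [show j + m + 1 = j + 1 + m by omega, ← cosyz_shift m S X M hX j]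
  refine ext_sub_inAdd' hadd (j + 1) (subsingleton_of_forall_eq 0 fun x =>
    Ext.eq_zero_of_injective x) ?_
  refine (cosyz_shift (m + 1) M' X' M hX' j).mpr ?_
  exact hlt.subsingleton _ _ _ (by omega) _

end Detect

end Nak

namespace Nak

open ArtinAlg CategoryTheory.Abelian

section FgInj

variable {A : Type} [Ring A]

/-- elements killed by the `n`-th power of the radical -/
def socn (I : Type) [AddCommGroup I] [Module A I] (n : ℕ) : Submodule A I where
  carrier := {x | ∀ a ∈ (Ring.jacobson A) ^ n, a • x = 0}
  add_mem' := by
    intro x y hx hy a ha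
    rw [smul_add, hx a ha, hy a ha, add_zero]
  zero_mem' := fun a _ => smul_zero a
  smul_mem' := by
    intro c x hx a ha
    rw [smul_smul]
    exact hx _ (Ideal.mul_mem_right _ _ ha)

theorem semisimple_socn_one [IsArtinianRing A] (I : Type) [AddCommGroup I] [Module A I]
    (N : Submodule A I) (hN : N ≤ socn I 1) : IsSemisimpleModule A N := by
  have h : Module.IsTorsionBySet A N (Ring.jacobson A : Ideal A) := by
    rintro ⟨x, hx⟩ ⟨a, ha⟩
    apply Subtype.ext
    exact hN hx a (by rw [Submodule.pow_one]; exact ha)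
  let _ := h.module
  exact (h.semilinearMap.isSemisimpleModule_iff_of_bijective Function.bijective_id).2
      inferInstance

/-- `E` is an essential extension of `M` inside `I`. -/
def EssIn {I : Type} [AddCommGroup I] [Module A I] (M E : Submodule A I) : Prop :=
  M ≤ E ∧ ∀ X ≤ E, X ⊓ M = ⊥ → X = ⊥

theorem ess_socle [IsArtinianRing A] {I : Type} [AddCommGroup I] [Module A I]
    (M E : Submodule A I) (h : EssIn M E) : E ⊓ socn I 1 ≤ M := by
  have hss := semisimple_socn_one I (E ⊓ socn I 1) inf_le_right
  obtain ⟨X, hX⟩ := exists_isCompl (M.comap (E ⊓ socn I 1).subtype)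
  have h0 : X.map (E ⊓ socn I 1).subtype = ⊥ := by
    apply h.2
    · rintro _ ⟨x, -, rfl⟩
      exact x.2.1
    · rw [eq_bot_iff]
      rintro _ ⟨⟨x, hx, rfl⟩, hxM⟩
      have : x ∈ (M.comap (E ⊓ socn I 1).subtype) ⊓ X := ⟨hxM, hx⟩
      rw [hX.inf_eq_bot] at this
      rw [Submodule.mem_bot] at this
      subst this
      simp
  have h1 : X = ⊥ := by
    exact Submodule.map_injective_of_injective (Submodule.injective_subtype _)
      (h0.trans (Submodule.map_bot _).symm)
  have h2 := hX.sup_eq_top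
  rw [h1, sup_bot_eq] at h2
  intro x hx
  have : (⟨x, hx⟩ : ↥(E ⊓ socn I 1)) ∈ M.comap (E ⊓ socn I 1).subtype := by
    rw [h2]; trivial
  exact this

theorem ess_fg (R : Type) [CommRing R] [IsArtinianRing R] [Algebra R A] [Module.Finite R A]
    {I : Type} [AddCommGroup I] [Module A I]
    (M E : Submodule A I) (h : EssIn M E) (hM : Module.Finite A M) : Module.Finite A E := by
  have : IsArtinianRing A := IsArtinianRing.of_finite R A
  let _ : Module R I := Module.compHom I (algebraMap R A)
  have : IsScalarTower R A I := ⟨fun r a x => by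
    rw [Algebra.smul_def, mul_smul]; rfl⟩
  have hMR : Module.Finite R M := Module.Finite.trans A M
  have hJ : Module.Finite R (Ring.jacobson A : Ideal A) := by
    have : IsNoetherian R A := inferInstance
    exact Module.IsNoetherian.finite R ((Ring.jacobson A : Ideal A).restrictScalars R)
  have key : ∀ n, IsNoetherian R ↥(E ⊓ socn I n) := by
    intro n
    induction n with
    | zero =>
      have : Subsingleton ↥(E ⊓ socn I 0) := by
        refine subsingleton_of_forall_eq 0 ?_
        rintro ⟨x, -, hx⟩
        apply Subtype.ext
        have := hx 1 (by rw [Submodule.pow_zero, Ideal.one_eq_top]; trivial)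
        simpa using this
      infer_instance
    | succ n ih =>
      let Φ : ↥(E ⊓ socn I (n + 1)) →ₗ[R] ((Ring.jacobson A : Ideal A) →ₗ[R] ↥(E ⊓ socn I n)) :=
        LinearMap.mk₂ R (fun x j => (⟨(j : A) • (x : I), E.smul_mem _ x.2.1, by
            intro a ha
            rw [smul_smul]
            exact x.2.2 _ (by
              rw [Submodule.pow_succ]
              exact Ideal.mul_mem_mul ha j.2)⟩ : ↥(E ⊓ socn I n)))
          (by intro x y j; apply Subtype.ext; simp)
          (by
            intro r x j; apply Subtype.ext
            show (j : A) • (algebraMap R A r • (x : I)) = algebraMap R A r • ((j : A) • (x : I))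
            rw [smul_smul, smul_smul, Algebra.commutes])
          (by intro x j k; apply Subtype.ext; simp [add_smul])
          (by intro r x j; apply Subtype.ext; simp)
      have hker : LinearMap.ker Φ ≤ ((M.comap (E ⊓ socn I (n + 1)).subtype).restrictScalars R) := by
        intro x hx
        refine ess_socle M E h ⟨x.2.1, ?_⟩
        intro a ha
        rw [Submodule.pow_one] at ha
        have := congrArg (fun t => ((t ⟨a, ha⟩ : ↥(E ⊓ socn I n)) : I)) (LinearMap.mem_ker.mp hx)
        exact this
      have hk : IsNoetherian R (LinearMap.ker Φ) := by
        let f : LinearMap.ker Φ →ₗ[R] M :=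
          { toFun := fun x => ⟨x.1.1, hker x.2⟩
            map_add' := fun x y => rfl
            map_smul' := fun r x => rfl }
        refine isNoetherian_of_injective f ?_
        intro x y hxy
        exact Subtype.ext (Subtype.ext (congrArg (fun t : M => (t : I)) hxy))
      exact isNoetherian_of_range_eq_ker (LinearMap.ker Φ).subtype Φ (by simp)
  obtain ⟨n, hn⟩ := IsSemiprimaryRing.isNilpotent (R := A)
  have hE : E ⊓ socn I n = E := by
    refine inf_eq_left.mpr ?_
    intro x _ a ha
    rw [hn] at ha
    have : a = 0 := ha
    rw [this, zero_smul]
  have := key n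
  rw [hE] at this
  have : Module.Finite R E := inferInstance
  exact Module.Finite.of_restrictScalars_finite R A E

theorem exists_fg_inj (R : Type) [CommRing R] [IsArtinianRing R] [Algebra R A] [Module.Finite R A]
    (M : Type) [AddCommGroup M] [Module A M] (hM : Module.Finite A M) :
    ∃ (Q : ModuleCat.{0} A) (f : M →ₗ[A] Q), Module.Finite A Q ∧ Injective Q ∧
      Function.Injective f := by
  obtain ⟨p⟩ := EnoughInjectives.presentation (ModuleCat.of A M)
  have hmono : Function.Injective p.f.hom := (ModuleCat.mono_iff_injective _).mp p.mono
  have hinj := p.injective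
  let I := p.J
  let M' : Submodule A I := LinearMap.range p.f.hom
  have hM' : Module.Finite A M' := Module.Finite.range _
  -- maximal essential extension
  obtain ⟨E, hME, hE⟩ := zorn_le_nonempty₀ {E : Submodule A I | EssIn M' E} (by
    intro c hc hchain y hy
    refine ⟨sSup c, ⟨(hc hy).1.trans (le_sSup hy), ?_⟩, fun z hz => le_sSup hz⟩
    intro X hX hXM
    by_contra hne
    obtain ⟨x, hx, hx0⟩ := Submodule.exists_mem_ne_zero_of_ne_bot hne
    have hxs := hX hx
    rw [Submodule.mem_sSup_of_directed ⟨y, hy⟩ hchain.directedOn] at hxs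
    obtain ⟨E, hE, hxE⟩ := hxs
    have h1 := (hc hE).2 (Submodule.span A {x}) (by simpa using hxE) (by
      rw [eq_bot_iff, ← hXM]
      exact inf_le_inf_right _ (by simpa using hx))
    rw [Submodule.span_singleton_eq_bot] at h1
    exact hx0 h1) M' ⟨le_rfl, fun X hX h => by rwa [inf_eq_left.mpr hX] at h⟩
  have hEess : EssIn M' E := hE.prop
  have hEfg := ess_fg R M' E hEess hM'
  -- maximal complement
  obtain ⟨C, -, hC⟩ := zorn_le_nonempty₀ {C : Submodule A I | C ⊓ E = ⊥} (by
    intro c hc hchain y hy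
    refine ⟨sSup c, ?_, fun z hz => le_sSup hz⟩
    rw [Set.mem_ofPred_eq, eq_bot_iff]
    rintro x ⟨hxs, hxE⟩
    change x ∈ sSup c at hxs
    rw [Submodule.mem_sSup_of_directed ⟨y, hy⟩ hchain.directedOn] at hxs
    obtain ⟨C, hC, hxC⟩ := hxs
    have := hc hC
    rw [Set.mem_ofPred_eq] at this
    rw [← this]
    exact ⟨hxC, hxE⟩) ⊥ (by simp)
  have hCE : C ⊓ E = ⊥ := hC.prop
  have hCmax : ∀ X : Submodule A I, C ≤ X → X ⊓ E = ⊥ → X ≤ C := fun X h1 h2 => hC.le_of_ge h2 h1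
  have hmod : Module.Injective A I := (Module.injective_iff_injective_object A I).mpr hinj
  have hqinj : Function.Injective (C.mkQ ∘ₗ E.subtype) := by
    rw [← LinearMap.ker_eq_bot, eq_bot_iff]
    rintro ⟨x, hx⟩ hx'
    have : x ∈ C ⊓ E := ⟨by simpa using hx', hx⟩
    rw [hCE] at this
    apply Subtype.ext
    exact this
  obtain ⟨φ, hφ⟩ := hmod.out (C.mkQ ∘ₗ E.subtype) hqinj E.subtype
  let r : I →ₗ[A] I := φ ∘ₗ C.mkQ
  have hrE : ∀ x ∈ E, r x = x := fun x hx => hφ ⟨x, hx⟩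
  have hrange : LinearMap.range r ≤ E := by
    refine hE.le_of_ge (y := LinearMap.range r) ⟨?_, ?_⟩ ?_
    · exact hEess.1.trans fun x hx => ⟨x, hrE x hx⟩
    · intro Y hY hYM
      have hYE : Y ⊓ E = ⊥ := hEess.2 _ inf_le_right (by
        rw [eq_bot_iff, ← hYM]
        exact inf_le_inf_right _ inf_le_left)
      have h1 : Y.comap r ≤ C := by
        refine hCmax _ ?_ ?_
        · intro x hx
          have h0 : C.mkQ x = 0 := by simpa using hx
          show r x ∈ Y
          show φ (C.mkQ x) ∈ Y
          rw [h0, map_zero]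
          exact Y.zero_mem
        · rw [eq_bot_iff, ← hYE]
          rintro x ⟨hx, hxE⟩
          have hx : r x ∈ Y := hx
          rw [hrE x hxE] at hx
          exact ⟨hx, hxE⟩
      rw [eq_bot_iff]
      intro y hy
      obtain ⟨z, rfl⟩ := hY hy
      have hz : z ∈ C := h1 hy
      have h0 : C.mkQ z = 0 := by simpa using hz
      show φ (C.mkQ z) = 0
      rw [h0, map_zero]
    · exact fun x hx => ⟨x, hrE x hx⟩
  let rE : I →ₗ[A] E := r.codRestrict E fun x => hrange ⟨x, rfl⟩
  have hret : Injective (ModuleCat.of A E) := by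
    refine Retract.injective (Y := p.J) ⟨ModuleCat.ofHom E.subtype, ModuleCat.ofHom rE, ?_⟩
    ext x
    exact hrE _ x.2
  refine ⟨ModuleCat.of A E, p.f.hom.codRestrict E fun x => hEess.1 ⟨x, rfl⟩, hEfg, hret, ?_⟩
  intro x y hxy
  exact hmono (congrArg Subtype.val hxy)

end FgInj

end Nak

namespace Nak

open ArtinAlg CategoryTheory.Abelian

section Covers

variable {A : Type} [Ring A]

/-- projective cover, in terms of linear maps -/
structure PCov {P M : Type} [AddCommGroup P] [Module A P] [AddCommGroup M] [Module A M]
    (f : P →ₗ[A] M) : Prop where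
  proj : Module.Projective A P
  surj : Function.Surjective f
  ess : ∀ N : Submodule A P, N.map f = ⊤ → N = ⊤

/-- injective envelope, in terms of linear maps -/
structure IEnv {M I : Type} [AddCommGroup I] [Module A I] [AddCommGroup M] [Module A M]
    (f : M →ₗ[A] I) : Prop where
  inj : Module.Injective A I
  mono : Function.Injective f
  ess : ∀ N : Submodule A I, N.comap f = ⊥ → N = ⊥

theorem pcov_iff {P M : ModuleCat.{0} A} (f : P ⟶ M) :
    IsProjectiveCoverHom A f ↔ PCov f.hom := by
  constructor
  · rintro ⟨h1, h2, h3⟩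
    refine ⟨(IsProjective.iff_projective (R := A) P).mpr h1,
      (ModuleCat.epi_iff_surjective f).mp h2, fun N hN => ?_⟩
    have h4 := h3 (ModuleCat.of A N) (ModuleCat.ofHom N.subtype) (by
      rw [ModuleCat.epi_iff_surjective]
      intro x
      have hx : x ∈ N.map f.hom := by rw [hN]; trivial
      obtain ⟨y, hy, rfl⟩ := hx
      exact ⟨⟨y, hy⟩, rfl⟩)
    rw [ModuleCat.epi_iff_surjective] at h4
    rw [eq_top_iff]
    intro x _
    obtain ⟨y, rfl⟩ := h4 x
    exact y.2
  · rintro ⟨h1, h2, h3⟩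
    refine ⟨(IsProjective.iff_projective (R := A) P).mp h1,
      (ModuleCat.epi_iff_surjective f).mpr h2, fun N g hg => ?_⟩
    rw [ModuleCat.epi_iff_surjective] at hg ⊢
    have := h3 (LinearMap.range g.hom) (by
      rw [eq_top_iff]
      intro x _
      obtain ⟨y, rfl⟩ := hg x
      exact ⟨g.hom y, ⟨y, rfl⟩, rfl⟩)
    exact LinearMap.range_eq_top.mp this

theorem ienv_iff {M I : ModuleCat.{0} A} (f : M ⟶ I) :
    IsInjectiveEnvelopeHom A f ↔ IEnv f.hom := by
  constructor
  · rintro ⟨h1, h2, h3⟩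
    refine ⟨(Module.injective_iff_injective_object A I).mpr h1,
      (ModuleCat.mono_iff_injective f).mp h2, fun N hN => ?_⟩
    have h4 := h3 (ModuleCat.of A (I ⧸ N)) (ModuleCat.ofHom N.mkQ) (by
      rw [ModuleCat.mono_iff_injective]
      show Function.Injective (N.mkQ ∘ₗ f.hom)
      rw [← LinearMap.ker_eq_bot, LinearMap.ker_comp, Submodule.ker_mkQ, hN])
    rw [ModuleCat.mono_iff_injective] at h4
    have h4 : Function.Injective N.mkQ := h4
    rw [← LinearMap.ker_eq_bot, Submodule.ker_mkQ] at h4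
    exact h4
  · rintro ⟨h1, h2, h3⟩
    refine ⟨(Module.injective_iff_injective_object A I).mp h1,
      (ModuleCat.mono_iff_injective f).mpr h2, fun N g hg => ?_⟩
    rw [ModuleCat.mono_iff_injective] at hg ⊢
    have hg : Function.Injective (g.hom ∘ₗ f.hom) := hg
    have := h3 (LinearMap.ker g.hom) (by
      rw [← LinearMap.ker_comp, LinearMap.ker_eq_bot]
      exact hg)
    exact LinearMap.ker_eq_bot.mp this

theorem inj_retract {I N : Type} [AddCommGroup I] [Module A I] [AddCommGroup N] [Module A N]
    (h : Module.Injective A I) (i : N →ₗ[A] I) (r : I →ₗ[A] N) (hr : ∀ x, r (i x) = x) :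
    Module.Injective A N := by
  refine ⟨fun X Y _ _ _ _ f hf g => ?_⟩
  obtain ⟨φ, hφ⟩ := h.out f hf (i ∘ₗ g)
  refine ⟨r ∘ₗ φ, fun x => ?_⟩
  rw [LinearMap.comp_apply, hφ]
  exact hr (g x)

theorem inj_equiv {I N : Type} [AddCommGroup I] [Module A I] [AddCommGroup N] [Module A N]
    (e : N ≃ₗ[A] I) (h : Module.Injective A I) : Module.Injective A N :=
  inj_retract h e.toLinearMap e.symm.toLinearMap (by simp)

theorem inj_compl {I : Type} [AddCommGroup I] [Module A I] (h : Module.Injective A I)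
    (N K : Submodule A I) (hc : IsCompl N K) : Module.Injective A N := by
  refine ⟨fun X Y _ _ _ _ f hf g => ?_⟩
  obtain ⟨φ, hφ⟩ := h.out f hf (N.subtype ∘ₗ g)
  refine ⟨(N.projectionOnto K hc) ∘ₗ φ, fun x => ?_⟩
  rw [LinearMap.comp_apply, hφ]
  exact Submodule.projectionOnto_apply_left hc (g x)

theorem exists_pcov [IsArtinianRing A] (M : Type) [AddCommGroup M] [Module A M]
    (hM : Module.Finite A M) : ∃ (P : ModuleCat.{0} A) (f : P →ₗ[A] M),
      Module.Finite A P ∧ PCov f := by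
  obtain ⟨k, g, hg⟩ := Module.Finite.exists_fin' A M
  obtain ⟨N, ⟨hN1, hN2⟩, hmin⟩ := WellFounded.has_min
    (wellFounded_lt : WellFounded ((· < ·) : Submodule A (Fin k → A) → _ → Prop))
    {N | Module.Projective A N ∧ N.map g = ⊤}
    ⟨⊤, Module.Projective.of_equiv (Submodule.topEquiv).symm, by
      rw [Submodule.map_top, LinearMap.range_eq_top]; exact hg⟩
  refine ⟨ModuleCat.of A N, g ∘ₗ N.subtype, inferInstanceAs (Module.Finite A N), hN1, ?_, ?_⟩
  · intro x
    have hx : x ∈ N.map g := by rw [hN2]; trivial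
    obtain ⟨y, hy, rfl⟩ := hx
    exact ⟨⟨y, hy⟩, rfl⟩
  · intro X hX
    change Submodule A N at X
    change X.map (g ∘ₗ N.subtype) = ⊤ at hX
    have hs : Function.Surjective ((g ∘ₗ N.subtype) ∘ₗ X.subtype) := by
      intro x
      have hx : x ∈ X.map (g ∘ₗ N.subtype) := by rw [hX]; trivial
      obtain ⟨y, hy, rfl⟩ := hx
      exact ⟨⟨y, hy⟩, rfl⟩
    obtain ⟨h, hh⟩ := Module.projective_lifting_property _ (g ∘ₗ N.subtype) hs
    let φ : N →ₗ[A] N := X.subtype ∘ₗ h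
    have hφ : ∀ x, g (φ x : N) = g (x : N) := fun x => LinearMap.congr_fun hh x
    have hφn : ∀ n x, g ((φ ^ n) x : N) = g (x : N) := by
      intro n
      induction n with
      | zero => intro x; rfl
      | succ n ih => intro x; rw [pow_succ', Module.End.mul_apply, hφ, ih]
    obtain ⟨n, hn⟩ := Filter.eventually_atTop.mp φ.eventually_isCompl_ker_pow_range_pow
    have hc := hn (n + 1) (by omega)
    have hR : Module.Projective A (LinearMap.range (φ ^ (n + 1))) := by
      refine Module.Projective.of_split (LinearMap.range (φ ^ (n + 1))).subtype
        (Submodule.projectionOnto _ _ hc.symm) ?_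
      ext x
      simp
    have hmem : (LinearMap.range (φ ^ (n + 1))).map N.subtype ∈
        {N : Submodule A (Fin k → A) | Module.Projective A N ∧ N.map g = ⊤} := by
      refine ⟨Module.Projective.of_equiv
        (Submodule.equivMapOfInjective N.subtype N.injective_subtype _), ?_⟩
      rw [eq_top_iff, ← hN2]
      rintro _ ⟨x, hx, rfl⟩
      exact ⟨_, ⟨_, ⟨⟨x, hx⟩, rfl⟩, rfl⟩, hφn _ _⟩
    have h3 := hmin _ hmem
    have h4 : (LinearMap.range (φ ^ (n + 1))).map N.subtype = N :=
      (Submodule.map_subtype_le _ _).eq_of_not_lt h3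
    rw [eq_top_iff]
    intro x _
    have hx : (x : Fin k → A) ∈ (LinearMap.range (φ ^ (n + 1))).map N.subtype := by
      rw [h4]; exact x.2
    obtain ⟨_, ⟨z, rfl⟩, hz⟩ := hx
    have : (φ ^ (n + 1)) z = x := Subtype.ext hz
    rw [← this, pow_succ', Module.End.mul_apply]
    exact (h _).2

theorem exists_ienv (R : Type) [CommRing R] [IsArtinianRing R] [Algebra R A] [Module.Finite R A]
    (M : Type) [AddCommGroup M] [Module A M]
    (hM : Module.Finite A M) : ∃ (P : ModuleCat.{0} A) (f : M →ₗ[A] P),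
      Module.Finite A P ∧ IEnv f := by
  have : IsArtinianRing A := IsArtinianRing.of_finite R A
  obtain ⟨Q, g, hQ, hQi, hg⟩ := exists_fg_inj R M hM
  have hQi := (Module.injective_iff_injective_object A Q).mpr hQi
  obtain ⟨N, ⟨hN1, hN2⟩, hmin⟩ := WellFounded.has_min
    (wellFounded_lt : WellFounded ((· < ·) : Submodule A Q → _ → Prop))
    {N | Module.Injective A N ∧ LinearMap.range g ≤ N}
    ⟨⊤, inj_compl hQi ⊤ ⊥ isCompl_top_bot, le_top⟩
  let g' : M →ₗ[A] N := g.codRestrict N fun x => hN2 ⟨x, rfl⟩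
  have hg' : Function.Injective g' := fun x y h => hg (congrArg Subtype.val h)
  refine ⟨ModuleCat.of A N, g', inferInstanceAs (Module.Finite A N), hN1, hg', ?_⟩
  intro X hX
  change Submodule A N at X
  change X.comap g' = ⊥ at hX
  have hs : Function.Injective (X.mkQ ∘ₗ g') := by
    rw [← LinearMap.ker_eq_bot, LinearMap.ker_comp, Submodule.ker_mkQ, hX]
  obtain ⟨h, hh⟩ := hN1.out _ hs g'
  let φ : N →ₗ[A] N := h ∘ₗ X.mkQ
  have hφ : ∀ x, φ (g' x) = g' x := hh
  have hφn : ∀ n x, (φ ^ n) (g' x) = g' x := by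
    intro n
    induction n with
    | zero => intro x; rfl
    | succ n ih => intro x; rw [pow_succ, Module.End.mul_apply, hφ, ih]
  obtain ⟨n, hn⟩ := Filter.eventually_atTop.mp φ.eventually_isCompl_ker_pow_range_pow
  have hc := hn (n + 1) (by omega)
  have hR : Module.Injective A (LinearMap.range (φ ^ (n + 1))) := inj_compl hN1 _ _ hc.symm
  have hmem : (LinearMap.range (φ ^ (n + 1))).map N.subtype ∈
      {N : Submodule A Q | Module.Injective A N ∧ LinearMap.range g ≤ N} := by
    refine ⟨inj_equiv
      (Submodule.equivMapOfInjective N.subtype N.injective_subtype _).symm hR, ?_⟩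
    rintro _ ⟨x, rfl⟩
    exact ⟨g' x, ⟨g' x, hφn _ _⟩, rfl⟩
  have h3 := hmin _ hmem
  have h4 : (LinearMap.range (φ ^ (n + 1))).map N.subtype = N :=
    (Submodule.map_subtype_le _ _).eq_of_not_lt h3
  have h5 : LinearMap.range (φ ^ (n + 1)) = ⊤ := by
    rw [eq_top_iff]
    intro x _
    have hx : (x : Q) ∈ (LinearMap.range (φ ^ (n + 1))).map N.subtype := by
      rw [h4]; exact x.2
    obtain ⟨z, hz, hzx⟩ := hx
    have : z = x := Subtype.ext hzx
    exact this ▸ hz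
  have h6 : LinearMap.ker (φ ^ (n + 1)) = ⊥ := by
    have := hc.inf_eq_bot
    rwa [h5, inf_top_eq] at this
  rw [eq_bot_iff, ← h6]
  intro x hx
  have : φ x = 0 := by
    show h (X.mkQ x) = 0
    have : X.mkQ x = 0 := by simpa using hx
    rw [this, map_zero]
  rw [LinearMap.mem_ker, pow_succ, Module.End.mul_apply, this, map_zero]

/-- uniserial modules -/
def Uni (A : Type) [Ring A] (M : Type) [AddCommGroup M] [Module A M] : Prop :=
  ∀ N₁ N₂ : Submodule A M, N₁ ≤ N₂ ∨ N₂ ≤ N₁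

theorem pcov_uni (hNak : IsNakayama A) {P S : Type} [AddCommGroup P] [Module A P]
    [AddCommGroup S] [Module A S] (hS : IsSimpleModule A S) (hP : Module.Finite A P)
    (f : P →ₗ[A] S) (hf : PCov f) : Uni A P := by
  refine hNak (ModuleCat.of A P) hP ⟨?_, ?_⟩
  · have := hS.nontrivial
    exact hf.surj.nontrivial
  · intro N₁ N₂ hc
    change Submodule A P at N₁ N₂
    rcases eq_bot_or_eq_top (N₁.map f) with h1 | h1
    · rcases eq_bot_or_eq_top (N₂.map f) with h2 | h2
      · exfalso
        have := congrArg (Submodule.map f) hc.sup_eq_top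
        rw [Submodule.map_sup, h1, h2, Submodule.map_top, LinearMap.range_eq_top.mpr hf.surj] at this
        simp at this
      · left
        have := hf.ess _ h2
        have h := hc.inf_eq_bot
        rwa [this, inf_top_eq] at h
    · right
      have := hf.ess _ h1
      have h := hc.inf_eq_bot
      rwa [this, top_inf_eq] at h

theorem ienv_uni (hNak : IsNakayama A) {I S : Type} [AddCommGroup I] [Module A I]
    [AddCommGroup S] [Module A S] (hS : IsSimpleModule A S) (hI : Module.Finite A I)
    (f : S →ₗ[A] I) (hf : IEnv f) : Uni A I := by
  refine hNak (ModuleCat.of A I) hI ⟨?_, ?_⟩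
  · have := hS.nontrivial
    exact hf.mono.nontrivial
  · intro N₁ N₂ hc
    change Submodule A I at N₁ N₂
    rcases eq_bot_or_eq_top (N₁.comap f) with h1 | h1
    · exact Or.inl (hf.ess _ h1)
    · rcases eq_bot_or_eq_top (N₂.comap f) with h2 | h2
      · exact Or.inr (hf.ess _ h2)
      · exfalso
        have := congrArg (Submodule.comap f) hc.inf_eq_bot
        rw [Submodule.comap_inf, h1, h2, inf_top_eq] at this
        have h3 : LinearMap.ker f = ⊥ := LinearMap.ker_eq_bot.mpr hf.mono
        rw [Submodule.comap_bot, h3] at this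
        simp at this

end Covers

end Nak

namespace Nak

open ArtinAlg CategoryTheory.Abelian

section Horseshoe

variable {A : Type} [Ring A]

theorem syz_of_pcov {P M : Type} [AddCommGroup P] [Module A P] [AddCommGroup M] [Module A M]
    (f : P →ₗ[A] M) (h : PCov f) :
    IsSyzygyOf A (ModuleCat.of A M) (ModuleCat.of A (LinearMap.ker f)) :=
  ⟨ModuleCat.of A P, ModuleCat.ofHom f, (pcov_iff _).mpr h,
    ⟨(ModuleCat.kernelIsoKer (ModuleCat.ofHom f)).symm⟩⟩

theorem cosyz_of_ienv {I M : Type} [AddCommGroup I] [Module A I] [AddCommGroup M] [Module A M]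
    (f : M →ₗ[A] I) (h : IEnv f) :
    IsCosyzygyOf A (ModuleCat.of A M) (ModuleCat.of A (I ⧸ LinearMap.range f)) :=
  ⟨ModuleCat.of A I, ModuleCat.ofHom f, (ienv_iff _).mpr h,
    ⟨(ModuleCat.cokernelIsoRangeQuotient (ModuleCat.ofHom f)).symm⟩⟩

theorem inAdd_of_retract {X Y Z B : Type} [AddCommGroup X] [Module A X] [AddCommGroup Y] [Module A Y]
    [AddCommGroup Z] [Module A Z] [AddCommGroup B] [Module A B]
    (n : ℕ) (σ : Y →ₗ[A] (Fin n → B)) (π : (Fin n → B) →ₗ[A] Y) (hπ : ∀ y, π (σ y) = y)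
    (i : X →ₗ[A] Z × Y) (r : Z × Y →ₗ[A] X) (hr : ∀ x, r (i x) = x) :
    InAdd A (ModuleCat.of A X) (ModuleCat.of A (B × Z)) := by
  let i' : (Z × Y) →ₗ[A] (Fin (n + 1) → B × Z) :=
    LinearMap.pi (Fin.cons (α := fun _ => (Z × Y) →ₗ[A] B × Z)
      (LinearMap.prod 0 (LinearMap.fst A Z Y))
      (fun j => LinearMap.prod (LinearMap.proj j ∘ₗ σ ∘ₗ LinearMap.snd A Z Y) 0))
  let r' : (Fin (n + 1) → B × Z) →ₗ[A] (Z × Y) :=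
    LinearMap.prod (LinearMap.snd A B Z ∘ₗ LinearMap.proj 0)
      (π ∘ₗ LinearMap.pi fun j => LinearMap.fst A B Z ∘ₗ LinearMap.proj j.succ)
  have hr' : ∀ x, r' (i' x) = x := by
    rintro ⟨z, y⟩
    refine Prod.ext rfl ?_
    exact hπ y
  refine ⟨n + 1, ModuleCat.ofHom (i' ∘ₗ i), ModuleCat.ofHom (r ∘ₗ r'), ?_⟩
  ext x
  show r (r' (i' (i x))) = x
  rw [hr', hr]

theorem lt_of_proj {P : Type} [AddCommGroup P] [Module A P] (h : Module.Projective A P) (n : ℕ) :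
    HasProjectiveDimensionLT (ModuleCat.of A P) (n + 1) := by
  have h1 : Projective (ModuleCat.of A P) := (IsProjective.iff_projective (R := A) P).mp h
  have h2 := (projective_iff_hasProjectiveDimensionLT_one (X := ModuleCat.of A P)).mp h1
  exact hasProjectiveDimensionLT_of_ge _ 1 _ (by omega)

theorem lt_of_inj {P : Type} [AddCommGroup P] [Module A P] (h : Module.Injective A P) (n : ℕ) :
    HasInjectiveDimensionLT (ModuleCat.of A P) (n + 1) := by
  have h1 : Injective (ModuleCat.of A P) := (Module.injective_iff_injective_object A P).mp h
  have h2 := (injective_iff_hasInjectiveDimensionLT_one (X := ModuleCat.of A P)).mp h1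
  exact hasInjectiveDimensionLT_of_ge _ 1 _ (by omega)

theorem proj_of_lt {P : Type} [AddCommGroup P] [Module A P]
    (h : HasProjectiveDimensionLT (ModuleCat.of A P) 1) : Module.Projective A P :=
  (IsProjective.iff_projective (R := A) P).mpr (projective_iff_hasProjectiveDimensionLT_one.mpr h)

theorem inj_of_lt {P : Type} [AddCommGroup P] [Module A P]
    (h : HasInjectiveDimensionLT (ModuleCat.of A P) 1) : Module.Injective A P :=
  (Module.injective_iff_injective_object A P).mpr (injective_iff_hasInjectiveDimensionLT_one.mpr h)

theorem del_aux [IsArtinianRing A] (m : ℕ) : ∀ (X Y Z : Type) [AddCommGroup X] [AddCommGroup Y]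
    [AddCommGroup Z] [Module A X] [Module A Y] [Module A Z] (_ : Module.Finite A X)
    (_ : Module.Finite A Y) (_ : Module.Finite A Z)
    (i : X →ₗ[A] Y) (p : Y →ₗ[A] Z) (_ : Function.Injective i) (_ : Function.Surjective p)
    (_ : Function.Exact i p) (_ : HasProjectiveDimensionLT (ModuleCat.of A Y) (m + 1)),
    ∃ X1, IsNthSyzygy A m (ModuleCat.of A X) X1 ∧ ∃ Z1 : ModuleCat.{0} A,
      IsNthSyzygy A (m + 1) (ModuleCat.of A Z) Z1 ∧
      InAdd A X1 (ModuleCat.of A (A × Z1)) := by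
  induction m with
  | zero =>
    intro X Y Z _ _ _ _ _ _ hX hY hZ i p hi hp hip hpd
    obtain ⟨P, c, hP, hc⟩ := exists_pcov (A := A) Z hZ
    have hYp := proj_of_lt hpd
    refine ⟨_, ⟨Iso.refl _⟩, _, ⟨_, syz_of_pcov c hc, ⟨Iso.refl _⟩⟩, ?_⟩
    have hPp := hc.proj
    obtain ⟨s, hs⟩ := Module.projective_lifting_property c p hc.surj
    obtain ⟨t, ht⟩ := Module.projective_lifting_property p c hp
    have hs : ∀ y, c (s y) = p y := fun y => LinearMap.congr_fun hs y
    have ht : ∀ y, p (t y) = c y := fun y => LinearMap.congr_fun ht y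
    obtain ⟨n, π, hπ⟩ := Module.Finite.exists_fin' A Y
    obtain ⟨σ, hσ⟩ := Module.projective_lifting_property π LinearMap.id hπ
    let i1 : X →ₗ[A] LinearMap.ker c × Y :=
      LinearMap.prod ((s ∘ₗ i).codRestrict (LinearMap.ker c) (fun x => by
        rw [LinearMap.mem_ker, LinearMap.comp_apply, hs, hip.apply_apply_eq_zero])) i
    let e : X ≃ₗ[A] LinearMap.ker p := (LinearEquiv.ofInjective i hi).trans
      (LinearEquiv.ofEq _ _ (LinearMap.exact_iff.mp hip).symm)
    have he : ∀ x, (e x : Y) = i x := fun x => rfl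
    let r0 : LinearMap.ker c × Y →ₗ[A] Y := LinearMap.coprod (t ∘ₗ (LinearMap.ker c).subtype)
        (LinearMap.id - t ∘ₗ s)
    let r1 : LinearMap.ker c × Y →ₗ[A] X := e.symm.toLinearMap ∘ₗ r0.codRestrict _ (by
      rintro ⟨k, y⟩
      have hk : c k = 0 := k.2
      simp [r0, ht, hs, hk])
    refine inAdd_of_retract n σ π (fun y => LinearMap.congr_fun hσ y) i1 r1 ?_
    intro x
    show e.symm _ = x
    rw [LinearEquiv.symm_apply_eq]
    apply Subtype.ext
    rw [he]
    show t (s (i x)) + (i x - t (s (i x))) = i x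
    abel
  | succ m ih =>
    intro X Y Z _ _ _ _ _ _ hX hY hZ i p hi hp hip hpd
    obtain ⟨PX, cX, hPX, hcX⟩ := exists_pcov (A := A) X hX
    obtain ⟨PZ, cZ, hPZ, hcZ⟩ := exists_pcov (A := A) Z hZ
    have hPXp := hcX.proj
    have hPZp := hcZ.proj
    obtain ⟨t, ht⟩ := Module.projective_lifting_property p cZ hp
    have ht : ∀ y, p (t y) = cZ y := fun y => LinearMap.congr_fun ht y
    have hpi : ∀ x, p (i x) = 0 := hip.apply_apply_eq_zero
    let q : PX × PZ →ₗ[A] Y := LinearMap.coprod (i ∘ₗ cX) t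
    have hq : ∀ a b, q (a, b) = i (cX a) + t b := fun a b => by simp [q]
    have hqs : Function.Surjective q := by
      intro y
      obtain ⟨b, hb⟩ := hcZ.surj (p y)
      have : p (y - t b) = 0 := by rw [map_sub, ht, hb, sub_self]
      obtain ⟨x, hx⟩ := (hip _).mp this
      obtain ⟨a, rfl⟩ := hcX.surj x
      exact ⟨(a, b), by rw [hq, hx]; abel⟩
    have hK : HasProjectiveDimensionLT (ModuleCat.of A (LinearMap.ker q)) (m + 1) := by
      have hs := se (LinearMap.ker q).subtype q (Submodule.injective_subtype _) hqs
        (LinearMap.exact_subtype_ker_map q)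
      exact hs.hasProjectiveDimensionLT_X₁ (m + 1) (lt_of_proj inferInstance m) hpd
    let i' : LinearMap.ker cX →ₗ[A] LinearMap.ker q :=
      (LinearMap.inl A PX PZ ∘ₗ (LinearMap.ker cX).subtype).codRestrict _ (by
        intro x
        have hx : cX x = 0 := x.2
        rw [LinearMap.mem_ker]
        show q (x, 0) = 0
        rw [hq, hx, map_zero, map_zero, add_zero])
    let p' : LinearMap.ker q →ₗ[A] LinearMap.ker cZ :=
      (LinearMap.snd A PX PZ ∘ₗ (LinearMap.ker q).subtype).codRestrict _ (by
        rintro ⟨⟨a, b⟩, hab⟩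
        rw [LinearMap.mem_ker, hq] at hab
        rw [LinearMap.mem_ker]
        show cZ b = 0
        have := congrArg p hab
        rwa [map_add, hpi, zero_add, ht, map_zero] at this)
    obtain ⟨X1, h1, Z1, h2, h3⟩ := ih (LinearMap.ker cX) (LinearMap.ker q) (LinearMap.ker cZ)
      inferInstance inferInstance inferInstance i' p'
      (by
        intro x y hxy
        apply Subtype.ext
        exact congrArg (fun z : LinearMap.ker q => (z : PX × PZ).1) hxy)
      (by
        rintro ⟨b, hb⟩
        have hb : cZ b = 0 := hb
        have : p (t b) = 0 := by rw [ht, hb]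
        obtain ⟨x, hx⟩ := (hip _).mp this
        obtain ⟨a, ha⟩ := hcX.surj (-x)
        refine ⟨⟨(a, b), ?_⟩, rfl⟩
        rw [LinearMap.mem_ker, hq, ha, map_neg, hx]
        abel)
      (by
        rintro ⟨⟨a, b⟩, hab⟩
        rw [LinearMap.mem_ker, hq] at hab
        constructor
        · intro h
          have hb : b = 0 := congrArg Subtype.val h
          subst hb
          rw [map_zero, add_zero] at hab
          have ha : cX a = 0 := hi (by rw [hab, map_zero])
          exact ⟨⟨a, ha⟩, rfl⟩
        · rintro ⟨x, hx⟩
          apply Subtype.ext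
          show b = 0
          exact (congrArg (fun z : LinearMap.ker q => (z : PX × PZ).2) hx).symm)
      hK
    exact ⟨X1, ⟨_, syz_of_pcov cX hcX, h1⟩, Z1, ⟨_, syz_of_pcov cZ hcZ, h2⟩, h3⟩

theorem des_aux (R : Type) [CommRing R] [IsArtinianRing R] [Algebra R A] [Module.Finite R A]
    (Q : Type) [AddCommGroup Q] [Module A Q]
    (hQ : ∀ (Y : Type) [AddCommGroup Y] [Module A Y], Module.Finite A Y →
      ∃ (n : ℕ) (σ : Y →ₗ[A] (Fin n → Q)), Function.Injective σ)
    (m : ℕ) : ∀ (X Y Z : Type) [AddCommGroup X] [AddCommGroup Y]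
    [AddCommGroup Z] [Module A X] [Module A Y] [Module A Z] (_ : Module.Finite A X)
    (_ : Module.Finite A Y) (_ : Module.Finite A Z)
    (i : X →ₗ[A] Y) (p : Y →ₗ[A] Z) (_ : Function.Injective i) (_ : Function.Surjective p)
    (_ : Function.Exact i p) (_ : HasInjectiveDimensionLT (ModuleCat.of A Y) (m + 1)),
    ∃ Z1, IsNthCosyzygy A m (ModuleCat.of A Z) Z1 ∧ ∃ X1 : ModuleCat.{0} A,
      IsNthCosyzygy A (m + 1) (ModuleCat.of A X) X1 ∧
      InAdd A Z1 (ModuleCat.of A (Q × X1)) := by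
  induction m with
  | zero =>
    intro X Y Z _ _ _ _ _ _ hX hY hZ i p hi hp hip hpd
    obtain ⟨P, c, hP, hc⟩ := exists_ienv R X hX
    have hYp := inj_of_lt hpd
    refine ⟨_, ⟨Iso.refl _⟩, _, ⟨_, cosyz_of_ienv c hc, ⟨Iso.refl _⟩⟩, ?_⟩
    have hPp := hc.inj
    obtain ⟨s, hs⟩ := hYp.out c hc.mono i
    obtain ⟨t, ht⟩ := hPp.out i hi c
    obtain ⟨n, σ, hσ⟩ := hQ Y hY
    obtain ⟨π, hπ⟩ := hYp.out σ hσ LinearMap.id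
    have hpi : ∀ x, p (i x) = 0 := hip.apply_apply_eq_zero
    let e : (Y ⧸ LinearMap.range i) ≃ₗ[A] Z :=
      (Submodule.quotEquivOfEq _ _ (LinearMap.exact_iff.mp hip).symm).trans
        (p.quotKerEquivOfSurjective hp)
    have he : ∀ y, e ((LinearMap.range i).mkQ y) = p y := fun y => rfl
    let j0 : Y →ₗ[A] (P ⧸ LinearMap.range c) × Y :=
      LinearMap.prod ((LinearMap.range c).mkQ ∘ₗ t) (LinearMap.id - s ∘ₗ t)
    let j1 : Y ⧸ LinearMap.range i →ₗ[A] (P ⧸ LinearMap.range c) × Y :=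
      (LinearMap.range i).liftQ j0 (by
        rintro _ ⟨x, rfl⟩
        rw [LinearMap.mem_ker]
        refine Prod.ext ?_ ?_
        · show (LinearMap.range c).mkQ (t (i x)) = 0
          rw [ht]
          simp
        · show i x - s (t (i x)) = 0
          rw [ht, hs, sub_self])
    let r1 : (P ⧸ LinearMap.range c) × Y →ₗ[A] Z :=
      LinearMap.coprod ((LinearMap.range c).liftQ (p ∘ₗ s) (by
        rintro _ ⟨x, rfl⟩
        rw [LinearMap.mem_ker, LinearMap.comp_apply, hs, hpi])) p
    refine inAdd_of_retract n σ π hπ (j1 ∘ₗ e.symm.toLinearMap) r1 ?_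
    intro z
    obtain ⟨y, rfl⟩ := hp z
    have : e.symm (p y) = (LinearMap.range i).mkQ y := by
      rw [LinearEquiv.symm_apply_eq, he]
    show r1 (j1 (e.symm (p y))) = p y
    rw [this]
    show p (s (t y)) + p (y - s (t y)) = p y
    rw [← map_add]
    congr 1
    abel
  | succ m ih =>
    intro X Y Z _ _ _ _ _ _ hX hY hZ i p hi hp hip hpd
    obtain ⟨PX, cX, hPX, hcX⟩ := exists_ienv R X hX
    obtain ⟨PZ, cZ, hPZ, hcZ⟩ := exists_ienv R Z hZ
    have hPXp := hcX.inj
    have hPZp := hcZ.inj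
    obtain ⟨t, ht⟩ := hPXp.out i hi cX
    have hpi : ∀ x, p (i x) = 0 := hip.apply_apply_eq_zero
    let q : Y →ₗ[A] PX × PZ := LinearMap.prod t (cZ ∘ₗ p)
    have hq : ∀ y, q y = (t y, cZ (p y)) := fun y => rfl
    have hqs : Function.Injective q := by
      rw [injective_iff_map_eq_zero]
      intro y hy
      rw [hq] at hy
      have h1 : t y = 0 := congrArg Prod.fst hy
      have h2 : cZ (p y) = 0 := congrArg Prod.snd hy
      have h3 : p y = 0 := hcZ.mono (by rw [h2, map_zero])
      obtain ⟨x, rfl⟩ := (hip _).mp h3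
      rw [ht] at h1
      have h4 : x = 0 := hcX.mono (by rw [h1, map_zero])
      rw [h4, map_zero]
    have hprod : Module.Injective A (PX × PZ) := by
      refine ⟨fun U V _ _ _ _ f hf g => ?_⟩
      obtain ⟨a, ha⟩ := hPXp.out f hf (LinearMap.fst A PX PZ ∘ₗ g)
      obtain ⟨b, hb⟩ := hPZp.out f hf (LinearMap.snd A PX PZ ∘ₗ g)
      exact ⟨LinearMap.prod a b, fun x => Prod.ext (ha x) (hb x)⟩
    have hK : HasInjectiveDimensionLT (ModuleCat.of A ((PX × PZ) ⧸ LinearMap.range q)) (m + 1) := by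
      have hs := se q (LinearMap.range q).mkQ hqs (Submodule.mkQ_surjective _)
        (LinearMap.exact_iff.mpr (by simp))
      exact hs.hasInjectiveDimensionLT_X₃ (m + 1) (lt_of_inj hprod m) hpd
    let i' : (PX ⧸ LinearMap.range cX) →ₗ[A] ((PX × PZ) ⧸ LinearMap.range q) :=
      (LinearMap.range cX).mapQ (LinearMap.range q) (LinearMap.inl A PX PZ) (by
        rintro _ ⟨x, rfl⟩
        refine ⟨i x, ?_⟩
        rw [hq, ht, hpi, map_zero]
        rfl)
    let p' : ((PX × PZ) ⧸ LinearMap.range q) →ₗ[A] (PZ ⧸ LinearMap.range cZ) :=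
      (LinearMap.range q).mapQ (LinearMap.range cZ) (LinearMap.snd A PX PZ) (by
        rintro _ ⟨y, rfl⟩
        exact ⟨p y, rfl⟩)
    obtain ⟨X1, h1, Z1, h2, h3⟩ := ih (PX ⧸ LinearMap.range cX) ((PX × PZ) ⧸ LinearMap.range q)
      (PZ ⧸ LinearMap.range cZ)
      inferInstance inferInstance inferInstance i' p'
      (by
        rw [injective_iff_map_eq_zero]
        intro x hx
        obtain ⟨a, rfl⟩ := Submodule.mkQ_surjective _ x
        have hx : (LinearMap.range q).mkQ (a, 0) = 0 := hx
        rw [Submodule.mkQ_apply, Submodule.Quotient.mk_eq_zero] at hx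
        obtain ⟨y, hy⟩ := hx
        rw [hq] at hy
        have h1 : t y = a := congrArg Prod.fst hy
        have h2 : cZ (p y) = 0 := congrArg Prod.snd hy
        have h3 : p y = 0 := hcZ.mono (by rw [h2, map_zero])
        obtain ⟨x, rfl⟩ := (hip _).mp h3
        rw [ht] at h1
        rw [Submodule.mkQ_apply, Submodule.Quotient.mk_eq_zero]
        exact ⟨x, h1⟩)
      (by
        intro z
        obtain ⟨b, rfl⟩ := Submodule.mkQ_surjective _ z
        exact ⟨(LinearMap.range q).mkQ (0, b), rfl⟩)
      (by
        intro w
        obtain ⟨⟨a, b⟩, rfl⟩ := Submodule.mkQ_surjective _ w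
        constructor
        · intro h
          have h : (LinearMap.range cZ).mkQ b = 0 := h
          rw [Submodule.mkQ_apply, Submodule.Quotient.mk_eq_zero] at h
          obtain ⟨z, rfl⟩ := h
          obtain ⟨y, rfl⟩ := hp z
          refine ⟨(LinearMap.range cX).mkQ (a - t y), ?_⟩
          show (LinearMap.range q).mkQ (a - t y, 0) = _
          rw [← sub_eq_zero, ← map_sub, Submodule.mkQ_apply, Submodule.Quotient.mk_eq_zero]
          refine ⟨-y, ?_⟩
          rw [hq]
          refine Prod.ext ?_ ?_ <;> simp
        · rintro ⟨x, hx⟩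
          obtain ⟨a', rfl⟩ := Submodule.mkQ_surjective _ x
          rw [← hx]
          show (LinearMap.range cZ).mkQ 0 = 0
          exact map_zero _)
      hK
    exact ⟨X1, ⟨_, cosyz_of_ienv cZ hcZ, h1⟩, Z1, ⟨_, cosyz_of_ienv cX hcX, h2⟩, h3⟩

end Horseshoe

end Nak

namespace Nak

open ArtinAlg CategoryTheory.Abelian

section Reps

variable {A : Type} [Ring A]

theorem reps_list (M : Type) [AddCommGroup M] [Module A M] (h : IsFiniteLength A M) :
    ∃ l : List (ModuleCat.{0} A), (∀ T ∈ l, IsSimpleModule A T) ∧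
      ∀ (S : ModuleCat.{0} A), IsSimpleModule A S → (∃ f : M →ₗ[A] S, Function.Surjective f) →
        ∃ T ∈ l, Nonempty (S ≃ₗ[A] T) := by
  induction h with
  | of_subsingleton =>
    refine ⟨[], by simp, ?_⟩
    rintro S hS ⟨f, hf⟩
    have := hS.nontrivial
    exact (not_nontrivial _ hf.nontrivial).elim
  | @of_simple_quotient M _ _ N hs hN ih =>
    obtain ⟨l, hl, hl'⟩ := ih
    refine ⟨ModuleCat.of A (M ⧸ N) :: l, ?_, ?_⟩
    · intro T hT
      rcases List.mem_cons.mp hT with rfl | hT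
      · exact hs
      · exact hl T hT
    · rintro S hS ⟨f, hf⟩
      by_cases h0 : N ≤ LinearMap.ker f
      · refine ⟨_, List.mem_cons_self, ?_⟩
        have := LinearMap.bijective_or_eq_zero (N.liftQ f h0)
        rcases this with hb | hz
        · exact ⟨(LinearEquiv.ofBijective _ hb).symm⟩
        · exfalso
          have h1 : f = 0 := by
            rw [← N.liftQ_mkQ f h0, hz, LinearMap.zero_comp]
          have := hS.nontrivial
          obtain ⟨x, hx⟩ := exists_ne (0 : S)
          obtain ⟨y, rfl⟩ := hf x
          rw [h1] at hx
          exact hx rfl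
      · have h1 : f ∘ₗ N.subtype ≠ 0 := by
          intro hz
          apply h0
          intro x hx
          exact LinearMap.congr_fun hz ⟨x, hx⟩
        obtain ⟨T, hT, hT'⟩ := hl' S hS ⟨f ∘ₗ N.subtype, LinearMap.surjective_of_ne_zero h1⟩
        exact ⟨T, List.mem_cons_of_mem _ hT, hT'⟩

theorem exists_reps [IsArtinianRing A] : ∃ (ι : Type) (_ : Fintype ι) (S : ι → ModuleCat.{0} A),
    (∀ i, IsSimpleModule A ↥(S i)) ∧
    (∀ T : ModuleCat.{0} A, IsSimpleModule A ↥T → ∃! i, Nonempty (↥T ≃ₗ[A] ↥(S i))) := by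
  obtain ⟨l, hl, hl'⟩ := reps_list (A := A) A (fl_of_fg A inferInstance)
  let s : Setoid (Fin l.length) :=
    { r := fun i j => Nonempty (l.get i ≃ₗ[A] l.get j)
      iseqv := ⟨fun _ => ⟨LinearEquiv.refl _ _⟩, fun ⟨e⟩ => ⟨e.symm⟩,
        fun ⟨e⟩ ⟨e'⟩ => ⟨e.trans e'⟩⟩ }
  refine ⟨Quotient s, Fintype.ofFinite _, fun q => l.get q.out, fun q => hl _ (List.get_mem _ _), ?_⟩
  intro T hT
  have hT' : ∃ f : A →ₗ[A] T, Function.Surjective f := by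
    have := hT.nontrivial
    obtain ⟨x, hx⟩ := exists_ne (0 : T)
    exact ⟨LinearMap.toSpanSingleton A T x, IsSimpleModule.toSpanSingleton_surjective A hx⟩
  obtain ⟨T', hT'l, ⟨e⟩⟩ := hl' T hT hT'
  obtain ⟨k, rfl⟩ := List.get_of_mem hT'l
  have hk : Nonempty (l.get (Quotient.mk s k).out ≃ₗ[A] l.get k) := Quotient.mk_out (s := s) k
  refine ⟨Quotient.mk s k, ⟨e.trans hk.some.symm⟩, ?_⟩
  rintro q ⟨e'⟩
  rw [← Quotient.out_eq q]
  exact Quotient.sound (s := s) ⟨e'.symm.trans e⟩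

theorem exists_atom_le {Y : Type} [AddCommGroup Y] [Module A Y] [IsArtinian A Y]
    (N : Submodule A Y) (h : N ≠ ⊥) : ∃ T ≤ N, IsSimpleModule A T := by
  have : IsAtomic (Submodule A Y) := isAtomic_of_orderBot_wellFounded_lt wellFounded_lt
  obtain ⟨T, hT, hTN⟩ := (IsAtomic.eq_bot_or_exists_atom_le N).resolve_left h
  exact ⟨T, hTN, isSimpleModule_iff_isAtom.mpr hT⟩

theorem exists_min_cogen (R : Type) [CommRing R] [IsArtinianRing R] [Algebra R A]
    [Module.Finite R A] : ∃ Q : ModuleCat.{0} A, IsMinimalInjectiveCogenerator A Q ∧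
      ∀ (Y : Type) [AddCommGroup Y] [Module A Y], Module.Finite A Y →
      ∃ (n : ℕ) (σ : Y →ₗ[A] (Fin n → Q)), Function.Injective σ := by
  have : IsArtinianRing A := IsArtinianRing.of_finite R A
  obtain ⟨ι, hι, S, hS, hS'⟩ := exists_reps (A := A)
  classical
  have : ∀ i, Module.Finite A (S i) := fun i => by
    have := hS i
    infer_instance
  obtain ⟨Q, f, hQ, hf⟩ := exists_ienv (A := A) R (∀ i, S i) inferInstance
  refine ⟨Q, ⟨ι, hι, S, hS, hS', ModuleCat.ofHom f, (ienv_iff _).mpr hf⟩, ?_⟩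
  intro Y _ _ hY
  obtain ⟨N, ⟨n, σ, rfl⟩, hmin⟩ := WellFounded.has_min
    (wellFounded_lt : WellFounded ((· < ·) : Submodule A Y → _ → Prop))
    {N | ∃ (n : ℕ) (σ : Y →ₗ[A] (Fin n → Q)), N = LinearMap.ker σ} ⟨_, 0, 0, rfl⟩
  refine ⟨n, σ, ?_⟩
  rw [← LinearMap.ker_eq_bot]
  by_contra hne
  obtain ⟨T, hT, hTs⟩ := exists_atom_le _ hne
  obtain ⟨i, ⟨e⟩, -⟩ := hS' (ModuleCat.of A T) hTs
  let g0 : T →ₗ[A] Q := f ∘ₗ LinearMap.single A (fun i => S i) i ∘ₗ e.toLinearMap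
  have hg0 : Function.Injective g0 :=
    hf.mono.comp ((Pi.single_injective (M := fun i => S i) i).comp e.injective)
  obtain ⟨g, hg⟩ := hf.inj.out T.subtype T.injective_subtype g0
  let σ' : Y →ₗ[A] (Fin (n + 1) → Q) :=
    LinearMap.pi (Fin.cons (α := fun _ => Y →ₗ[A] Q) g (fun j => LinearMap.proj j ∘ₗ σ))
  have h1 : ∀ y, σ' y = 0 → g y = 0 ∧ σ y = 0 := by
    intro y hy
    refine ⟨congrFun hy 0, ?_⟩
    ext j
    exact congrFun hy j.succ
  refine hmin (LinearMap.ker σ') ⟨_, _, rfl⟩ ?_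
  refine lt_of_le_of_ne (fun y hy => (h1 y hy).2) ?_
  intro heq
  have := hTs.nontrivial
  obtain ⟨x, hx⟩ := exists_ne (0 : T)
  have h2 : (x : Y) ∈ LinearMap.ker σ' := by rw [heq]; exact hT x.2
  have h3 := (h1 _ h2).1
  apply hx
  apply hg0
  rw [map_zero, ← hg]
  exact h3

theorem del_le [IsArtinianRing A] (S M : ModuleCat.{0} A) (hM : Module.Finite A M)
    (i : S →ₗ[A] M) (hi : Function.Injective i) : delLevel A S ≤ projDim A M := by
  by_cases h : projDim A M = ⊤
  · rw [h]; exact le_top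
  obtain ⟨n, hn⟩ := ENat.ne_top_iff_exists.mp h
  rw [← hn]
  have hS : Module.Finite A S := Module.Finite.of_injective i hi
  obtain ⟨X, h1, Z, h2, h3⟩ := del_aux n S M (M ⧸ LinearMap.range i) hS hM inferInstance
    i (LinearMap.range i).mkQ hi (Submodule.mkQ_surjective _)
    (LinearMap.exact_iff.mpr (by simp)) ((projDim_le_iff n M).mp hn.ge)
  exact sInf_le ⟨n, rfl, X, h1, ModuleCat.of A (M ⧸ LinearMap.range i),
    inferInstanceAs (Module.Finite A (M ⧸ LinearMap.range i)), Z, h2, h3⟩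

theorem des_le (R : Type) [CommRing R] [IsArtinianRing R] [Algebra R A]
    [Module.Finite R A] (S M : ModuleCat.{0} A) (hM : Module.Finite A M)
    (p : M →ₗ[A] S) (hp : Function.Surjective p) : desLevel A S ≤ injDim A M := by
  have : IsArtinianRing A := IsArtinianRing.of_finite R A
  by_cases h : injDim A M = ⊤
  · rw [h]; exact le_top
  obtain ⟨n, hn⟩ := ENat.ne_top_iff_exists.mp h
  rw [← hn]
  have hS : Module.Finite A S := Module.Finite.of_surjective p hp
  obtain ⟨Q, hQ, hQ'⟩ := exists_min_cogen (A := A) R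
  obtain ⟨X, h1, Z, h2, h3⟩ := des_aux R Q hQ' n (LinearMap.ker p) M S inferInstance hM hS
    (LinearMap.ker p).subtype p (Submodule.injective_subtype _) hp
    (LinearMap.exact_subtype_ker_map p) ((injDim_le_iff n M).mp hn.ge)
  exact sInf_le ⟨n, rfl, X, h1, Q, hQ, ModuleCat.of A (LinearMap.ker p),
    inferInstanceAs (Module.Finite A (LinearMap.ker p)), Z, h2, h3⟩

end Reps

end Nak

namespace Nak

open ArtinAlg CategoryTheory.Abelian

section Uniserial

variable {A : Type} [Ring A]
variable {P P' M N C J L I I' X T T' U E : Type}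
variable [AddCommGroup P] [Module A P] [AddCommGroup P'] [Module A P'] [AddCommGroup M] [Module A M]
variable [AddCommGroup N] [Module A N] [AddCommGroup C] [Module A C] [AddCommGroup J] [Module A J]
variable [AddCommGroup L] [Module A L] [AddCommGroup I] [Module A I] [AddCommGroup I'] [Module A I']
variable [AddCommGroup X] [Module A X] [AddCommGroup T] [Module A T] [AddCommGroup T'] [Module A T']
variable [AddCommGroup U] [Module A U] [AddCommGroup E] [Module A E]

theorem exists_desc (g : P →ₗ[A] C) (hg : Function.Surjective g) (m : P →ₗ[A] N)
    (h : ∀ x, g x = 0 → m x = 0) : ∃ k : C →ₗ[A] N, ∀ x, k (g x) = m x := by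
  refine ⟨(LinearMap.ker g).liftQ m h ∘ₗ (g.quotKerEquivOfSurjective hg).symm.toLinearMap, ?_⟩
  intro x
  have : (g.quotKerEquivOfSurjective hg).symm (g x) = (LinearMap.ker g).mkQ x := by
    rw [LinearEquiv.symm_apply_eq]
    rfl
  show (LinearMap.ker g).liftQ m h ((g.quotKerEquivOfSurjective hg).symm (g x)) = m x
  rw [this]
  rfl

theorem exists_fact (g : J →ₗ[A] I) (hg : Function.Injective g) (m : X →ₗ[A] I)
    (h : ∀ x, ∃ y, g y = m x) : ∃ k : X →ₗ[A] J, ∀ x, g (k x) = m x := by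
  refine ⟨(LinearEquiv.ofInjective g hg).symm.toLinearMap ∘ₗ m.codRestrict (LinearMap.range g) h, ?_⟩
  intro x
  have := (LinearEquiv.ofInjective g hg).apply_symm_apply (m.codRestrict (LinearMap.range g) h x)
  exact congrArg Subtype.val this

theorem proj_lift (hP : Module.Projective A P) (g : M →ₗ[A] N) (hg : Function.Surjective g)
    (f : P →ₗ[A] N) : ∃ h : P →ₗ[A] M, ∀ x, g (h x) = f x := by
  obtain ⟨h, hh⟩ := Module.projective_lifting_property g f hg
  exact ⟨h, fun x => LinearMap.congr_fun hh x⟩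

theorem Uni.of_surj (h : Uni A M) (f : M →ₗ[A] N) (hf : Function.Surjective f) : Uni A N := by
  intro N₁ N₂
  rcases h (N₁.comap f) (N₂.comap f) with h1 | h1
  · left
    have := Submodule.map_mono (f := f) h1
    rwa [Submodule.map_comap_eq_of_surjective hf, Submodule.map_comap_eq_of_surjective hf] at this
  · right
    have := Submodule.map_mono (f := f) h1
    rwa [Submodule.map_comap_eq_of_surjective hf, Submodule.map_comap_eq_of_surjective hf] at this

theorem Uni.of_inj (h : Uni A N) (f : M →ₗ[A] N) (hf : Function.Injective f) : Uni A M := by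
  intro N₁ N₂
  rcases h (N₁.map f) (N₂.map f) with h1 | h1
  · exact Or.inl ((Submodule.map_le_map_iff_of_injective hf _ _).mp h1)
  · exact Or.inr ((Submodule.map_le_map_iff_of_injective hf _ _).mp h1)

/-- a proper submodule of a uniserial module does not surject onto a nonzero quotient -/
theorem Uni.top (h : Uni A L) [Nontrivial U] (g : L →ₗ[A] U) (hg : Function.Surjective g)
    (f : M →ₗ[A] L) (hf : Function.Surjective (g ∘ₗ f)) : Function.Surjective f := by
  obtain ⟨u, hu⟩ := exists_ne (0 : U)
  rcases h (LinearMap.ker g) (LinearMap.range f) with h1 | h1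
  · intro y
    obtain ⟨x, hx⟩ := hf (g y)
    have hx : g (f x) = g y := hx
    have : y - f x ∈ LinearMap.ker g := by rw [LinearMap.mem_ker, map_sub, hx, sub_self]
    obtain ⟨z, hz⟩ := h1 this
    exact ⟨z + x, by rw [map_add, hz]; abel⟩
  · exfalso
    obtain ⟨x, hx⟩ := hf u
    exact hu (hx.symm.trans (h1 ⟨x, rfl⟩))

theorem Uni.soc (h : Uni A L) [Nontrivial U] (g : U →ₗ[A] L) (hg : Function.Injective g)
    (f : L →ₗ[A] M) (hf : Function.Injective (f ∘ₗ g)) : Function.Injective f := by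
  obtain ⟨u, hu⟩ := exists_ne (0 : U)
  rcases h (LinearMap.ker f) (LinearMap.range g) with h1 | h1
  · rw [injective_iff_map_eq_zero]
    intro x hx
    obtain ⟨y, rfl⟩ := h1 hx
    have : y = 0 := hf (by rw [map_zero]; exact hx)
    rw [this, map_zero]
  · exfalso
    apply hu
    apply hf
    rw [map_zero]
    exact h1 ⟨u, rfl⟩

theorem uni_lift (h : Uni A L) [Nontrivial U] (hP : Module.Projective A P) (f : P →ₗ[A] U)
    (hf : Function.Surjective f) (g : L →ₗ[A] U) (hg : Function.Surjective g) :
    ∃ k : P →ₗ[A] L, Function.Surjective k := by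
  obtain ⟨k, hk⟩ := proj_lift hP g hg f
  refine ⟨k, h.top g hg k ?_⟩
  have : g ∘ₗ k = f := LinearMap.ext hk
  rw [this]
  exact hf

theorem uni_ext (h : Uni A L) [Nontrivial U] (hI : Module.Injective A I) (f : U →ₗ[A] I)
    (hf : Function.Injective f) (g : U →ₗ[A] L) (hg : Function.Injective g) :
    ∃ k : L →ₗ[A] I, Function.Injective k := by
  obtain ⟨k, hk⟩ := hI.out g hg f
  refine ⟨k, h.soc g hg k ?_⟩
  have : k ∘ₗ g = f := LinearMap.ext hk
  rw [this]
  exact hf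

theorem simple_iso_q (hT : IsSimpleModule A T) (hT' : IsSimpleModule A T') (q : E →ₗ[A] T)
    (hq : Function.Surjective q) (g : E →ₗ[A] T') (h : ∀ x, q x = 0 → g x = 0)
    (h0 : ∃ x, g x ≠ 0) : Nonempty (T ≃ₗ[A] T') := by
  obtain ⟨k, hk⟩ := exists_desc q hq g h
  rcases LinearMap.bijective_or_eq_zero k with hb | hz
  · exact ⟨LinearEquiv.ofBijective k hb⟩
  · obtain ⟨x, hx⟩ := h0
    rw [← hk, hz] at hx
    exact (hx rfl).elim

theorem simple_iso_s (hT : IsSimpleModule A T) (hT' : IsSimpleModule A T') (q : T →ₗ[A] E)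
    (hq : Function.Injective q) (g : T' →ₗ[A] E) (h : ∀ x, ∃ y, q y = g x)
    (h0 : ∃ x, g x ≠ 0) : Nonempty (T ≃ₗ[A] T') := by
  obtain ⟨k, hk⟩ := exists_fact q hq g h
  rcases LinearMap.bijective_or_eq_zero k with hb | hz
  · exact ⟨(LinearEquiv.ofBijective k hb).symm⟩
  · obtain ⟨x, hx⟩ := h0
    rw [← hk, hz] at hx
    exact (hx (map_zero q)).elim

/-- the simple quotient of a uniserial module is unique -/
theorem uni_top_unique (h : Uni A E) (hT : IsSimpleModule A T) (hT' : IsSimpleModule A T')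
    (f : E →ₗ[A] T) (hf : Function.Surjective f) (g : E →ₗ[A] T') (hg : Function.Surjective g) :
    Nonempty (T ≃ₗ[A] T') := by
  have n1 := hT.nontrivial
  have n2 := hT'.nontrivial
  obtain ⟨t, ht⟩ := exists_ne (0 : T)
  obtain ⟨t', ht'⟩ := exists_ne (0 : T')
  obtain ⟨x, rfl⟩ := hf t
  obtain ⟨x', rfl⟩ := hg t'
  rcases h (LinearMap.ker f) (LinearMap.ker g) with h1 | h1
  · exact simple_iso_q hT hT' f hf g (fun y hy => h1 hy) ⟨x', ht'⟩
  · exact ⟨(simple_iso_q hT' hT g hg f (fun y hy => h1 hy) ⟨x, ht⟩).some.symm⟩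

/-- the simple submodule of a uniserial module is unique -/
theorem uni_soc_unique (h : Uni A E) (hT : IsSimpleModule A T) (hT' : IsSimpleModule A T')
    (f : T →ₗ[A] E) (hf : Function.Injective f) (g : T' →ₗ[A] E) (hg : Function.Injective g) :
    Nonempty (T ≃ₗ[A] T') := by
  have n1 := hT.nontrivial
  have n2 := hT'.nontrivial
  obtain ⟨t, ht⟩ := exists_ne (0 : T)
  obtain ⟨t', ht'⟩ := exists_ne (0 : T')
  rcases h (LinearMap.range g) (LinearMap.range f) with h1 | h1
  · exact simple_iso_s hT hT' f hf g (fun y => h1 ⟨y, rfl⟩)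
      ⟨t', fun h => ht' (hg (h.trans (map_zero g).symm))⟩
  · exact ⟨(simple_iso_s hT' hT g hg f (fun y => h1 ⟨y, rfl⟩)
      ⟨t, fun h => ht (hf (h.trans (map_zero f).symm))⟩).some.symm⟩

theorem tau_half (hT : IsSimpleModule A T) (hT' : IsSimpleModule A T')
    (hP : Module.Projective A P)
    (c : P →ₗ[A] T) (hc : Function.Surjective c) (c' : P' →ₗ[A] T')
    (a : LinearMap.ker c →ₗ[A] U)
    (a' : LinearMap.ker c' →ₗ[A] U) (ha' : Function.Surjective a') (ha : Function.Surjective a)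
    (f : U →ₗ[A] I) (H : P →ₗ[A] I) (H' : P' →ₗ[A] I)
    (hH : ∀ x : LinearMap.ker c, H (x : P) = f (a x))
    (hH' : ∀ x : LinearMap.ker c', H' (x : P') = f (a' x))
    (hk : LinearMap.ker H ≤ LinearMap.ker c) (hk' : LinearMap.ker H' ≤ LinearMap.ker c')
    (hle : LinearMap.range H ≤ LinearMap.range H') : Nonempty (T ≃ₗ[A] T') := by
  have n1 := hT.nontrivial
  obtain ⟨k, hkk⟩ := proj_lift hP H'.rangeRestrict H'.surjective_rangeRestrict
    (H.codRestrict (LinearMap.range H') fun x => hle ⟨x, rfl⟩)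
  have hkk : ∀ x, H' (k x) = H x := fun x => congrArg Subtype.val (hkk x)
  refine simple_iso_q hT hT' c hc (c' ∘ₗ k) ?_ ?_
  · intro x hx
    obtain ⟨y, hy⟩ := ha' (a ⟨x, hx⟩)
    have h1 : H' (k x - y) = 0 := by
      rw [map_sub, hkk, hH', hy, ← hH]
      simp
    have h2 : c' (k x - y) = 0 := hk' h1
    rw [map_sub] at h2
    have h3 : c' y = 0 := y.2
    rwa [h3, sub_zero] at h2
  · by_contra hcon
    push Not at hcon
    obtain ⟨t, ht⟩ := exists_ne (0 : T)
    obtain ⟨x, rfl⟩ := hc t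
    apply ht
    have h1 : c' (k x) = 0 := hcon x
    obtain ⟨y, hy⟩ := ha (a' ⟨k x, h1⟩)
    have h2 : H (x - y) = 0 := by
      rw [map_sub, ← hkk, hH, hy, ← hH']
      simp
    have h3 : c (x - y) = 0 := hk h2
    rw [map_sub] at h3
    have h4 : c y = 0 := y.2
    rwa [h4, sub_zero] at h3

theorem tau_ext (hP : Uni A P) [Nontrivial U] (hI : Module.Injective A I)
    (c : P →ₗ[A] T) (a : LinearMap.ker c →ₗ[A] U) (ha : Function.Surjective a)
    (f : U →ₗ[A] I) (hf : Function.Injective f) :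
    ∃ H : P →ₗ[A] I, (∀ x : LinearMap.ker c, H (x : P) = f (a x)) ∧
      LinearMap.ker H ≤ LinearMap.ker c := by
  obtain ⟨H, hH⟩ := hI.out (LinearMap.ker c).subtype (Submodule.injective_subtype _) (f ∘ₗ a)
  have hH : ∀ x : LinearMap.ker c, H (x : P) = f (a x) := hH
  refine ⟨H, hH, (hP _ _).resolve_right ?_⟩
  intro h
  obtain ⟨u, hu⟩ := exists_ne (0 : U)
  obtain ⟨x, rfl⟩ := ha u
  apply hu
  apply hf
  rw [map_zero, ← hH]
  exact h x.2

theorem tau_inj (hT : IsSimpleModule A T) (hT' : IsSimpleModule A T') [Nontrivial U]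
    (hP : Module.Projective A P) (hP' : Module.Projective A P')
    (uP : Uni A P) (uP' : Uni A P') (uI : Uni A I) (hI : Module.Injective A I)
    (c : P →ₗ[A] T) (hc : Function.Surjective c) (c' : P' →ₗ[A] T') (hc' : Function.Surjective c')
    (a : LinearMap.ker c →ₗ[A] U) (ha : Function.Surjective a)
    (a' : LinearMap.ker c' →ₗ[A] U) (ha' : Function.Surjective a')
    (f : U →ₗ[A] I) (hf : Function.Injective f) : Nonempty (T ≃ₗ[A] T') := by
  obtain ⟨H, h1, h2⟩ := tau_ext uP hI c a ha f hf
  obtain ⟨H', h1', h2'⟩ := tau_ext uP' hI c' a' ha' f hf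
  rcases uI (LinearMap.range H) (LinearMap.range H') with h | h
  · exact tau_half hT hT' hP c hc c' a a' ha' ha f H H' h1 h1' h2 h2' h
  · exact ⟨(tau_half hT' hT hP' c' hc' c a' a ha ha' f H' H h1' h1 h2' h2 h).some.symm⟩

theorem tau_half' (hT : IsSimpleModule A T) (hT' : IsSimpleModule A T')
    (hI : Module.Injective A I)
    (c : T →ₗ[A] I) (hc : Function.Injective c) (c' : T' →ₗ[A] I')
    (a : U →ₗ[A] I ⧸ LinearMap.range c) (ha : Function.Injective a)
    (a' : U →ₗ[A] I' ⧸ LinearMap.range c') (ha' : Function.Injective a')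
    (f : P →ₗ[A] U) (H : P →ₗ[A] I) (H' : P →ₗ[A] I')
    (hH : ∀ x, (LinearMap.range c).mkQ (H x) = a (f x))
    (hH' : ∀ x, (LinearMap.range c').mkQ (H' x) = a' (f x))
    (hk : LinearMap.range c ≤ LinearMap.range H) (hk' : LinearMap.range c' ≤ LinearMap.range H')
    (hle : LinearMap.ker H' ≤ LinearMap.ker H) : Nonempty (T ≃ₗ[A] T') := by
  have n1 := hT.nontrivial
  obtain ⟨k0, hk0⟩ := exists_desc H'.rangeRestrict H'.surjective_rangeRestrict H (fun x hx =>
    hle (congrArg Subtype.val hx))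
  obtain ⟨k, hkk⟩ := hI.out (LinearMap.range H').subtype (Submodule.injective_subtype _) k0
  have hkk : ∀ x, k (H' x) = H x := fun x => (hkk ⟨H' x, x, rfl⟩).trans (hk0 x)
  have e1 : ∀ x, f x = 0 → ∃ t, c t = H x := by
    intro x hx
    have := hH x
    rw [hx, map_zero, Submodule.mkQ_apply, Submodule.Quotient.mk_eq_zero] at this
    exact this
  have e2 : ∀ x, f x = 0 → ∃ t, c' t = H' x := by
    intro x hx
    have := hH' x
    rw [hx, map_zero, Submodule.mkQ_apply, Submodule.Quotient.mk_eq_zero] at this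
    exact this
  refine simple_iso_s hT hT' c hc (k ∘ₗ c') ?_ ?_
  · intro t
    obtain ⟨p, hp⟩ := hk' ⟨t, rfl⟩
    have h1 : f p = 0 := by
      apply ha'
      rw [map_zero, ← hH', hp]
      simp
    obtain ⟨s, hs⟩ := e1 p h1
    refine ⟨s, ?_⟩
    rw [hs, LinearMap.comp_apply, ← hp, hkk]
  · by_contra hcon
    push Not at hcon
    obtain ⟨t, ht⟩ := exists_ne (0 : T)
    apply ht
    obtain ⟨p, hp⟩ := hk ⟨t, rfl⟩
    have h1 : f p = 0 := by
      apply ha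
      rw [map_zero, ← hH, hp]
      simp
    obtain ⟨s, hs⟩ := e2 p h1
    apply hc
    rw [map_zero, ← hp, ← hkk, ← hs]
    exact hcon s

theorem tau_ext' (uI : Uni A I) [Nontrivial U] (hP : Module.Projective A P)
    (c : T →ₗ[A] I) (a : U →ₗ[A] I ⧸ LinearMap.range c) (ha : Function.Injective a)
    (f : P →ₗ[A] U) (hf : Function.Surjective f) :
    ∃ H : P →ₗ[A] I, (∀ x, (LinearMap.range c).mkQ (H x) = a (f x)) ∧
      LinearMap.range c ≤ LinearMap.range H := by
  obtain ⟨H, hH⟩ := proj_lift hP (LinearMap.range c).mkQ (Submodule.mkQ_surjective _) (a ∘ₗ f)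
  refine ⟨H, hH, (uI _ _).resolve_right ?_⟩
  intro h
  obtain ⟨u, hu⟩ := exists_ne (0 : U)
  obtain ⟨x, rfl⟩ := hf u
  apply hu
  apply ha
  have := hH x
  rw [LinearMap.comp_apply] at this
  rw [map_zero, ← this, Submodule.mkQ_apply, Submodule.Quotient.mk_eq_zero]
  exact h ⟨x, rfl⟩

theorem tau_inj' (hT : IsSimpleModule A T) (hT' : IsSimpleModule A T') [Nontrivial U]
    (hI : Module.Injective A I) (hI' : Module.Injective A I')
    (uI : Uni A I) (uI' : Uni A I') (uP : Uni A P) (hP : Module.Projective A P)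
    (c : T →ₗ[A] I) (hc : Function.Injective c) (c' : T' →ₗ[A] I') (hc' : Function.Injective c')
    (a : U →ₗ[A] I ⧸ LinearMap.range c) (ha : Function.Injective a)
    (a' : U →ₗ[A] I' ⧸ LinearMap.range c') (ha' : Function.Injective a')
    (f : P →ₗ[A] U) (hf : Function.Surjective f) : Nonempty (T ≃ₗ[A] T') := by
  obtain ⟨H, h1, h2⟩ := tau_ext' uI hP c a ha f hf
  obtain ⟨H', h1', h2'⟩ := tau_ext' uI' hP c' a' ha' f hf
  rcases uP (LinearMap.ker H') (LinearMap.ker H) with h | h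
  · exact tau_half' hT hT' hI c hc c' a ha a' ha' f H H' h1 h1' h2 h2' h
  · exact ⟨(tau_half' hT' hT hI' c' hc' c a' ha' a ha f H' H h1' h1 h2' h2 h).some.symm⟩

theorem key (uI : Uni A I) [Nontrivial T] (hP : Module.Projective A P) (g : J →ₗ[A] I)
    (hg : Function.Injective g) (c : P →ₗ[A] T) (hc : Function.Surjective c)
    (ρ : T →ₗ[A] I ⧸ LinearMap.range g) (hρ : Function.Injective ρ) :
    ∃ k : LinearMap.ker c →ₗ[A] J, Function.Surjective k := by
  obtain ⟨H, h1, h2⟩ := tau_ext' uI hP g ρ hρ c hc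
  obtain ⟨k, hk⟩ := exists_fact g hg (H ∘ₗ (LinearMap.ker c).subtype) (by
    intro x
    have := h1 x
    have hx : c x = 0 := x.2
    rw [hx, map_zero, Submodule.mkQ_apply, Submodule.Quotient.mk_eq_zero] at this
    exact this)
  refine ⟨k, fun y => ?_⟩
  obtain ⟨x, hx⟩ := h2 ⟨y, rfl⟩
  have hcx : c x = 0 := by
    apply hρ
    rw [map_zero, ← h1, hx]
    simp
  refine ⟨⟨x, hcx⟩, ?_⟩
  apply hg
  rw [hk]
  exact hx

theorem key' (uP : Uni A P) [Nontrivial T] (hI : Module.Injective A I) (g : P →ₗ[A] C)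
    (hg : Function.Surjective g) (c : T →ₗ[A] I) (hc : Function.Injective c)
    (ρ : LinearMap.ker g →ₗ[A] T) (hρ : Function.Surjective ρ) :
    ∃ k : C →ₗ[A] I ⧸ LinearMap.range c, Function.Injective k := by
  obtain ⟨H, h1, h2⟩ := tau_ext uP hI g ρ hρ c hc
  obtain ⟨k, hk⟩ := exists_desc g hg ((LinearMap.range c).mkQ ∘ₗ H) (by
    intro x hx
    rw [LinearMap.comp_apply, Submodule.mkQ_apply, Submodule.Quotient.mk_eq_zero]
    exact ⟨ρ ⟨x, hx⟩, (h1 ⟨x, hx⟩).symm⟩)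
  refine ⟨k, ?_⟩
  rw [injective_iff_map_eq_zero]
  intro y hy
  obtain ⟨x, rfl⟩ := hg y
  rw [hk, LinearMap.comp_apply, Submodule.mkQ_apply, Submodule.Quotient.mk_eq_zero] at hy
  obtain ⟨t, ht⟩ := hy
  obtain ⟨z, rfl⟩ := hρ t
  rw [← h1] at ht
  have h3 : g (x - z) = 0 := h2 (by rw [LinearMap.mem_ker, map_sub, ht, sub_self])
  have h4 : g z = 0 := z.2
  rwa [map_sub, h4, sub_zero] at h3

end Uniserial

end Nak

namespace Nak

open ArtinAlg CategoryTheory.Abelian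

section Step

variable {A : Type} [Ring A]
variable {X Y Z : Type} [AddCommGroup X] [Module A X] [AddCommGroup Y] [Module A Y]
variable [AddCommGroup Z] [Module A Z]

/-- finite projective dimension, unbundled -/
def Pd (A : Type) [Ring A] (X : Type) [AddCommGroup X] [Module A X] : Prop :=
  FinPd (ModuleCat.of A X)

/-- finite injective dimension, unbundled -/
def Id (A : Type) [Ring A] (X : Type) [AddCommGroup X] [Module A X] : Prop :=
  FinId (ModuleCat.of A X)

theorem Pd.proj (h : Module.Projective A X) : Pd A X := ⟨1, lt_of_proj h 0⟩

theorem Id.inj (h : Module.Injective A X) : Id A X := ⟨1, lt_of_inj h 0⟩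

theorem Pd.retract (h : Pd A Y) (i : X →ₗ[A] Y) (r : Y →ₗ[A] X) (hr : ∀ x, r (i x) = x) :
    Pd A X := by
  obtain ⟨n, hn⟩ := h
  have ρ : Retract (ModuleCat.of A X) (ModuleCat.of A Y) :=
    ⟨ModuleCat.ofHom i, ModuleCat.ofHom r, by ext x; exact hr x⟩
  exact ⟨n, ρ.hasProjectiveDimensionLT n⟩

theorem Id.retract (h : Id A Y) (i : X →ₗ[A] Y) (r : Y →ₗ[A] X) (hr : ∀ x, r (i x) = x) :
    Id A X := by
  obtain ⟨n, hn⟩ := h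
  have ρ : Retract (ModuleCat.of A X) (ModuleCat.of A Y) :=
    ⟨ModuleCat.ofHom i, ModuleCat.ofHom r, by ext x; exact hr x⟩
  exact ⟨n, ρ.hasInjectiveDimensionLT n⟩

theorem Pd.equiv (e : X ≃ₗ[A] Y) (h : Pd A X) : Pd A Y :=
  h.retract e.symm.toLinearMap e.toLinearMap (by simp)

theorem Id.equiv (e : X ≃ₗ[A] Y) (h : Id A X) : Id A Y :=
  h.retract e.symm.toLinearMap e.toLinearMap (by simp)

theorem exact_of (i : X →ₗ[A] Y) (p : Y →ₗ[A] Z) (h : LinearMap.ker p = LinearMap.range i) :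
    Function.Exact i p := LinearMap.exact_iff.mpr h

section
variable (i : X →ₗ[A] Y) (p : Y →ₗ[A] Z)

theorem Pd.t1 (hi : Function.Injective i) (hp : Function.Surjective p)
    (h : LinearMap.ker p = LinearMap.range i)
    (h2 : Pd A Y) (h3 : Pd A Z) : Pd A X :=
  FinPd.x1 (se i p hi hp (exact_of i p h)) h2 h3
theorem Pd.t2 (hi : Function.Injective i) (hp : Function.Surjective p)
    (h : LinearMap.ker p = LinearMap.range i)
    (h2 : Pd A X) (h3 : Pd A Z) : Pd A Y :=
  FinPd.x2 (se i p hi hp (exact_of i p h)) h2 h3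
theorem Pd.t3 (hi : Function.Injective i) (hp : Function.Surjective p)
    (h : LinearMap.ker p = LinearMap.range i)
    (h2 : Pd A X) (h3 : Pd A Y) : Pd A Z :=
  FinPd.x3 (se i p hi hp (exact_of i p h)) h2 h3
theorem Id.t1 (hi : Function.Injective i) (hp : Function.Surjective p)
    (h : LinearMap.ker p = LinearMap.range i)
    (h2 : Id A Y) (h3 : Id A Z) : Id A X :=
  FinId.x1 (se i p hi hp (exact_of i p h)) h2 h3
theorem Id.t2 (hi : Function.Injective i) (hp : Function.Surjective p)
    (h : LinearMap.ker p = LinearMap.range i)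
    (h2 : Id A X) (h3 : Id A Z) : Id A Y :=
  FinId.x2 (se i p hi hp (exact_of i p h)) h2 h3
theorem Id.t3 (hi : Function.Injective i) (hp : Function.Surjective p)
    (h : LinearMap.ker p = LinearMap.range i)
    (h2 : Id A X) (h3 : Id A Y) : Id A Z :=
  FinId.x3 (se i p hi hp (exact_of i p h)) h2 h3
end

theorem exists_max_ge [Module.Finite A X] (N : Submodule A X) (h : N ≠ ⊤) :
    ∃ D, N ≤ D ∧ IsSimpleModule A (X ⧸ D) := by
  obtain ⟨D, hD, hND⟩ := (eq_top_or_exists_le_coatom N).resolve_left h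
  exact ⟨D, hND, isSimpleModule_iff_isCoatom.mpr hD⟩

theorem step1 (R : Type) [CommRing R] [IsArtinianRing R] [Algebra R A] [Module.Finite R A]
    (hNak : IsNakayama A) {P T : Type} [AddCommGroup P] [Module A P] [AddCommGroup T] [Module A T]
    (hT : IsSimpleModule A T) (hPf : Module.Finite A P) (c : P →ₗ[A] T) (hc : PCov c)
    (hpd : ¬ Pd A T) :
    ∃ S U : ModuleCat.{0} A, IsSimpleModule A S ∧ IsSimpleModule A U ∧ ¬ Pd A S ∧
      (∃ a : LinearMap.ker c →ₗ[A] U, Function.Surjective a) ∧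
      ∀ (I : Type) [AddCommGroup I] [Module A I] (e : S →ₗ[A] I), Module.Finite A I →
        Module.Injective A I → Uni A I → Function.Injective e →
        Pd A I ∧ ∃ b : I →ₗ[A] U, Function.Surjective b := by
  have : IsArtinianRing A := IsArtinianRing.of_finite R A
  have uP : Uni A P := pcov_uni hNak hT hPf c hc
  have n1 := hT.nontrivial
  have hL : ¬ Pd A (LinearMap.ker c) := fun h =>
    hpd (Pd.t3 (LinearMap.ker c).subtype c (Submodule.injective_subtype _) hc.surj (by simp) h
      (Pd.proj hc.proj))
  have hL0 : (⊥ : Submodule A (LinearMap.ker c)) ≠ ⊤ := by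
    intro h
    have : Subsingleton (LinearMap.ker c) := (Submodule.subsingleton_iff A).mp (subsingleton_iff_bot_eq_top.mp h)
    exact hL (Pd.proj inferInstance)
  obtain ⟨D, -, hU⟩ := exists_max_ge _ hL0
  have n2 := hU.nontrivial
  have uL : Uni A (LinearMap.ker c) := uP.of_inj (LinearMap.ker c).subtype
    (Submodule.injective_subtype _)
  have hUf : Module.Finite A (LinearMap.ker c ⧸ D) := inferInstance
  obtain ⟨P1, c1, hP1f, hc1⟩ := exists_pcov (A := A) (LinearMap.ker c ⧸ D) hUf
  have uP1 : Uni A P1 := pcov_uni hNak hU hP1f c1 hc1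
  obtain ⟨h, hh⟩ := uni_lift uL hc1.proj c1 hc1.surj D.mkQ D.mkQ_surjective
  have hK : ¬ Pd A (LinearMap.ker h) := fun hp =>
    hL (Pd.t3 (LinearMap.ker h).subtype h (Submodule.injective_subtype _) hh (by simp) hp
      (Pd.proj hc1.proj))
  obtain ⟨B, ⟨hBK, hBp⟩, hBmax⟩ := WellFounded.has_min
    (wellFounded_gt : WellFounded ((· > ·) : Submodule A P1 → _ → Prop))
    {B | B ≤ LinearMap.ker h ∧ Pd A B} ⟨⊥, bot_le, Pd.proj inferInstance⟩
  have hJp : Pd A (P1 ⧸ B) := Pd.t3 B.subtype B.mkQ B.injective_subtype B.mkQ_surjective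
    (by simp) hBp (Pd.proj hc1.proj)
  have hKJ : (LinearMap.ker h).map B.mkQ ≠ ⊥ := by
    intro h0
    have h1 : LinearMap.ker h ≤ B := by
      intro x hx
      have h2 : B.mkQ x ∈ (LinearMap.ker h).map B.mkQ := ⟨x, hx, rfl⟩
      rw [h0, Submodule.mem_bot] at h2
      simpa using h2
    have heq : B = LinearMap.ker h := le_antisymm hBK h1
    rw [heq] at hBp
    exact hK hBp
  obtain ⟨S, hSK, hS⟩ := exists_atom_le _ hKJ
  have n3 := hS.nontrivial
  have hSp : ¬ Pd A S := by
    intro hp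
    have hBB : B ≤ S.comap B.mkQ := by
      intro x hx
      have : B.mkQ x = 0 := by simpa using hx
      rw [Submodule.mem_comap, this]
      exact S.zero_mem
    refine hBmax (S.comap B.mkQ) ⟨?_, ?_⟩ ?_
    · refine (Submodule.comap_mono hSK).trans ?_
      rw [Submodule.comap_map_eq, Submodule.ker_mkQ, sup_eq_left.mpr hBK]
    · refine Pd.t2 (Submodule.inclusion hBB)
        ((B.mkQ ∘ₗ (S.comap B.mkQ).subtype).codRestrict S fun x => x.2)
        (Submodule.inclusion_injective hBB) ?_ ?_ hBp hp
      · rintro ⟨s, hs⟩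
        obtain ⟨x, rfl⟩ := B.mkQ_surjective s
        exact ⟨⟨x, hs⟩, rfl⟩
      · rw [Submodule.range_inclusion]
        ext x
        have h1 : x.1 ∈ B ↔ B.mkQ x.1 = 0 := by simp
        exact Subtype.ext_iff.trans h1.symm
    · refine lt_of_le_of_ne hBB ?_
      intro heq
      obtain ⟨s, hs⟩ := exists_ne (0 : S)
      obtain ⟨x, hx⟩ := B.mkQ_surjective s
      have hxS : x ∈ S.comap B.mkQ := by
        rw [Submodule.mem_comap, hx]
        exact s.2
      rw [← heq] at hxS
      have : B.mkQ x = 0 := by simpa using hxS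
      exact hs (Subtype.ext (hx.symm.trans this))
  obtain ⟨δ, hδ⟩ := exists_desc B.mkQ B.mkQ_surjective h (fun x hx => hBK (by simpa using hx))
  have hδs : Function.Surjective δ := by
    intro y
    obtain ⟨x, rfl⟩ := hh y
    exact ⟨_, hδ x⟩
  have hδS : ∀ s ∈ S, δ s = 0 := by
    intro s hs
    obtain ⟨x, hx, rfl⟩ := hSK hs
    rw [hδ]
    exact hx
  refine ⟨ModuleCat.of A S, ModuleCat.of A (LinearMap.ker c ⧸ D), hS, hU, hSp,
    ⟨D.mkQ, D.mkQ_surjective⟩, ?_⟩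
  intro I _ _ e hIf hI uI he
  change S →ₗ[A] I at e
  have uJ : Uni A (P1 ⧸ B) := uP1.of_surj B.mkQ B.mkQ_surjective
  obtain ⟨g, hg⟩ := uni_ext uJ hI e he S.subtype S.injective_subtype
  have hgs : Function.Surjective g := by
    rw [← LinearMap.range_eq_top]
    by_contra hne
    have hne' : (⊤ : Submodule A (I ⧸ LinearMap.range g)) ≠ ⊥ := by
      intro h0
      apply hne
      have := congrArg (Submodule.comap (LinearMap.range g).mkQ) h0
      rw [Submodule.comap_top, Submodule.comap_bot, Submodule.ker_mkQ] at this
      exact this.symm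
    obtain ⟨T', -, hT'⟩ := exists_atom_le _ hne'
    have n4 := hT'.nontrivial
    obtain ⟨P', c', hP'f, hc'⟩ := exists_pcov (A := A) T' inferInstance
    have uP' : Uni A P' := pcov_uni hNak hT' hP'f c' hc'
    obtain ⟨k, hk⟩ := key uI hc'.proj g hg c' hc'.surj T'.subtype T'.injective_subtype
    obtain ⟨IU, fU, hIUf, hfU⟩ := exists_ienv R (LinearMap.ker c ⧸ D) hUf
    have uIU : Uni A IU := ienv_uni hNak hU hIUf fU hfU
    obtain ⟨ε⟩ := tau_inj hT hT' hc.proj hc'.proj uP uP' uIU hfU.inj c hc.surj c' hc'.surj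
      D.mkQ D.mkQ_surjective (D.mkQ ∘ₗ δ ∘ₗ k)
      (D.mkQ_surjective.comp (hδs.comp hk)) fU hfU.mono
    obtain ⟨k', hk'⟩ := key uI hc.proj g hg c hc.surj (T'.subtype ∘ₗ ε.toLinearMap)
      (T'.injective_subtype.comp ε.injective)
    have hinj : Function.Injective (δ ∘ₗ k') :=
      IsNoetherian.injective_of_surjective_endomorphism _ (hδs.comp hk')
    obtain ⟨s, hs⟩ := exists_ne (0 : S)
    obtain ⟨x, hx⟩ := hk' s
    have : x = 0 := hinj (by rw [map_zero, LinearMap.comp_apply, hx]; exact hδS s s.2)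
    rw [this, map_zero] at hx
    exact hs (Subtype.ext hx.symm)
  let E := LinearEquiv.ofBijective g ⟨hg, hgs⟩
  exact ⟨hJp.equiv E, D.mkQ ∘ₗ δ ∘ₗ E.symm.toLinearMap,
    D.mkQ_surjective.comp (hδs.comp E.symm.surjective)⟩

theorem step2 (R : Type) [CommRing R] [IsArtinianRing R] [Algebra R A] [Module.Finite R A]
    (hNak : IsNakayama A) {I T : Type} [AddCommGroup I] [Module A I] [AddCommGroup T] [Module A T]
    (hT : IsSimpleModule A T) (hIf : Module.Finite A I) (c : T →ₗ[A] I) (hc : IEnv c)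
    (hid : ¬ Id A T) :
    ∃ S U : ModuleCat.{0} A, IsSimpleModule A S ∧ IsSimpleModule A U ∧ ¬ Id A S ∧
      (∃ a : U →ₗ[A] I ⧸ LinearMap.range c, Function.Injective a) ∧
      ∀ (P : Type) [AddCommGroup P] [Module A P] (e : P →ₗ[A] S), Module.Finite A P →
        Module.Projective A P → Uni A P → Function.Surjective e →
        Id A P ∧ ∃ b : U →ₗ[A] P, Function.Injective b := by
  have : IsArtinianRing A := IsArtinianRing.of_finite R A
  have uI : Uni A I := ienv_uni hNak hT hIf c hc
  have n1 := hT.nontrivial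
  have hL : ¬ Id A (I ⧸ LinearMap.range c) := fun h =>
    hid (Id.t1 c (LinearMap.range c).mkQ hc.mono (Submodule.mkQ_surjective _) (by simp)
      (Id.inj hc.inj) h)
  have hL0 : (⊤ : Submodule A (I ⧸ LinearMap.range c)) ≠ ⊥ := by
    intro h
    have : Subsingleton (I ⧸ LinearMap.range c) := 
      (Submodule.subsingleton_iff A).mp (subsingleton_iff_bot_eq_top.mp h.symm)
    exact hL (Id.inj ⟨fun _ _ _ _ _ _ _ _ _ => ⟨0, fun _ => Subsingleton.elim _ _⟩⟩)
  obtain ⟨U, -, hU⟩ := exists_atom_le _ hL0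
  have n2 := hU.nontrivial
  have uL : Uni A (I ⧸ LinearMap.range c) := uI.of_surj (LinearMap.range c).mkQ
    (Submodule.mkQ_surjective _)
  have hUf : Module.Finite A U := inferInstance
  obtain ⟨I1, c1, hI1f, hc1⟩ := exists_ienv R U hUf
  have uI1 : Uni A I1 := ienv_uni hNak hU hI1f c1 hc1
  obtain ⟨h, hh⟩ := uni_ext uL hc1.inj c1 hc1.mono U.subtype U.injective_subtype
  have hK : ¬ Id A (I1 ⧸ LinearMap.range h) := fun hp =>
    hL (Id.t1 h (LinearMap.range h).mkQ hh (Submodule.mkQ_surjective _) (by simp)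
      (Id.inj hc1.inj) hp)
  obtain ⟨C, ⟨hCK, hCp⟩, hCmin⟩ := WellFounded.has_min
    (wellFounded_lt : WellFounded ((· < ·) : Submodule A I1 → _ → Prop))
    {C | LinearMap.range h ≤ C ∧ Id A (I1 ⧸ C)} ⟨⊤, le_top, by
      refine Id.inj ⟨fun _ _ _ _ _ _ _ _ _ => ⟨0, fun _ => ?_⟩⟩
      exact Subsingleton.elim _ _⟩
  have hCid : Id A C := Id.t1 C.subtype C.mkQ C.injective_subtype C.mkQ_surjective
    (by simp) (Id.inj hc1.inj) hCp
  have hCne : (LinearMap.range h).comap C.subtype ≠ ⊤ := by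
    intro h0
    rw [Submodule.comap_subtype_eq_top] at h0
    have heq : C = LinearMap.range h := le_antisymm h0 hCK
    rw [heq] at hCp
    exact hK hCp
  obtain ⟨D, hDh, hS⟩ := exists_max_ge _ hCne
  have n3 := hS.nontrivial
  have hSp : ¬ Id A (C ⧸ D) := by
    intro hp
    have hDC : D.map C.subtype ≤ C := Submodule.map_subtype_le _ _
    have hcm : (D.map C.subtype).comap C.subtype = D :=
      Submodule.comap_map_eq_of_injective C.injective_subtype D
    refine hCmin (D.map C.subtype) ⟨?_, ?_⟩ ?_
    · intro x hx
      exact ⟨⟨x, hCK hx⟩, hDh hx, rfl⟩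
    · refine Id.t2 (D.mapQ (D.map C.subtype) C.subtype (Submodule.le_comap_map _ _))
        ((D.map C.subtype).mapQ C LinearMap.id hDC) ?_ ?_ ?_ hp hCp
      · rw [← LinearMap.ker_eq_bot, Submodule.ker_mapQ, hcm]
        simp
      · intro y
        obtain ⟨x, rfl⟩ := C.mkQ_surjective y
        exact ⟨(D.map C.subtype).mkQ x, rfl⟩
      · rw [Submodule.ker_mapQ, Submodule.range_mapQ]
        simp
    · refine lt_of_le_of_ne hDC ?_
      intro heq
      have : D = ⊤ := by
        rw [← hcm, heq]
        simp
      obtain ⟨s, hs⟩ := exists_ne (0 : C ⧸ D)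
      obtain ⟨x, rfl⟩ := D.mkQ_surjective s
      apply hs
      rw [Submodule.mkQ_apply, Submodule.Quotient.mk_eq_zero, this]
      trivial
  let δ : (I ⧸ LinearMap.range c) →ₗ[A] C := h.codRestrict C fun x => hCK ⟨x, rfl⟩
  have hδs : Function.Injective δ := fun x y hxy => hh (congrArg Subtype.val hxy)
  have hδn : ¬ Function.Surjective δ := by
    intro hs
    apply hCne
    rw [eq_top_iff]
    intro x _
    obtain ⟨y, rfl⟩ := hs x
    exact ⟨y, rfl⟩
  refine ⟨ModuleCat.of A (C ⧸ D), ModuleCat.of A U, hS, hU, hSp,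
    ⟨U.subtype, U.injective_subtype⟩, ?_⟩
  intro P _ _ e hPf hP uP he
  change P →ₗ[A] (C ⧸ D) at e
  have uC : Uni A C := uI1.of_inj C.subtype C.injective_subtype
  obtain ⟨g, hg⟩ := uni_lift uC hP e he D.mkQ D.mkQ_surjective
  have hgs : Function.Injective g := by
    rw [← LinearMap.ker_eq_bot]
    by_contra hne
    have hne' : (⊥ : Submodule A (LinearMap.ker g)) ≠ ⊤ := by
      intro h0
      apply hne
      have : Subsingleton (LinearMap.ker g) := 
        (Submodule.subsingleton_iff A).mp (subsingleton_iff_bot_eq_top.mp h0)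
      exact Submodule.subsingleton_iff_eq_bot.mp this
    obtain ⟨V, -, hT'⟩ := exists_max_ge _ hne'
    have n4 := hT'.nontrivial
    obtain ⟨I', c', hI'f, hc'⟩ := exists_ienv (A := A) R (LinearMap.ker g ⧸ V) inferInstance
    have uI' : Uni A I' := ienv_uni hNak hT' hI'f c' hc'
    obtain ⟨k, hk⟩ := key' uP hc'.inj g hg c' hc'.mono V.mkQ V.mkQ_surjective
    obtain ⟨PU, fU, hPUf, hfU⟩ := exists_pcov (A := A) U hUf
    have uPU : Uni A PU := pcov_uni hNak hU hPUf fU hfU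
    obtain ⟨ε⟩ := tau_inj' hT hT' hc.inj hc'.inj uI uI' uPU hfU.proj c hc.mono c' hc'.mono
      U.subtype U.injective_subtype (k ∘ₗ δ ∘ₗ U.subtype)
      (hk.comp (hδs.comp U.injective_subtype)) fU hfU.surj
    obtain ⟨k', hk'⟩ := key' uP hc.inj g hg c hc.mono (ε.symm.toLinearMap ∘ₗ V.mkQ)
      (ε.symm.surjective.comp V.mkQ_surjective)
    have hsurj : Function.Surjective (δ ∘ₗ k') :=
      IsArtinian.surjective_of_injective_endomorphism _ (hδs.comp hk')
    exact hδn (Function.Surjective.of_comp hsurj)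
  let E := LinearEquiv.ofBijective g ⟨hgs, hg⟩
  exact ⟨hCid.equiv E.symm, E.symm.toLinearMap ∘ₗ δ ∘ₗ U.subtype,
    E.symm.injective.comp (hδs.comp U.injective_subtype)⟩

end Step

end Nak

namespace Nak

open ArtinAlg CategoryTheory.Abelian

theorem claim1 {A : Type} [Ring A] (R : Type) [CommRing R] [IsArtinianRing R] [Algebra R A]
    [Module.Finite R A] (hNak : IsNakayama A) (T : ModuleCat.{0} A) (hT : IsSimpleModule A T)
    (hpd : ¬ Pd A T) (I : ModuleCat.{0} A) (f : T →ₗ[A] I) (hf : IEnv f) :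
    Module.Finite A I ∧ Pd A I := by
  have : IsArtinianRing A := IsArtinianRing.of_finite R A
  obtain ⟨ι, _, S, hS, hSu⟩ := exists_reps (A := A)
  have fgS : ∀ i, Module.Finite A (S i) := fun i => by
    have := hS i
    infer_instance
  choose P c hPf hc using fun i => exists_pcov (A := A) (S i) (fgS i)
  choose J e hJf he using fun i => exists_ienv (A := A) R (S i) (fgS i)
  have uP : ∀ i, Uni A (P i) := fun i => pcov_uni hNak (hS i) (hPf i) (c i) (hc i)
  have uJ : ∀ i, Uni A (J i) := fun i => ienv_uni hNak (hS i) (hJf i) (e i) (he i)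
  have key1 : ∀ i : {i // ¬ Pd A (S i)}, ∃ (j : {i // ¬ Pd A (S i)}) (U : ModuleCat.{0} A),
      IsSimpleModule A U ∧ Pd A (J j) ∧
      (∃ a : LinearMap.ker (c i) →ₗ[A] U, Function.Surjective a) ∧
      (∃ b : J j →ₗ[A] U, Function.Surjective b) := by
    rintro ⟨i, hi⟩
    obtain ⟨S', U, hS', hU, hpS, ha, hall⟩ := step1 R hNak (hS i) (hPf i) (c i) (hc i) hi
    obtain ⟨j, ⟨ε⟩, -⟩ := hSu S' hS'
    obtain ⟨h1, h2⟩ := hall (J j) (e j ∘ₗ ε.toLinearMap) (hJf j) (he j).inj (uJ j)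
      ((he j).mono.comp ε.injective)
    exact ⟨⟨j, fun h => hpS (h.equiv ε.symm)⟩, U, hU, h1, ha, h2⟩
  choose φ U hU hφ hab using key1
  choose a ha using fun i => (hab i).1
  choose b hb using fun i => (hab i).2
  have hinj : Function.Injective φ := by
    intro i i' hii
    have n1 := (hU i).nontrivial
    obtain ⟨b', hb'⟩ : ∃ b' : J (φ i) →ₗ[A] U i', Function.Surjective b' := by
      rw [hii]
      exact ⟨b i', hb i'⟩
    obtain ⟨ε⟩ := uni_top_unique (uJ (φ i)) (hU i) (hU i') (b i) (hb i) b' hb'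
    have fgU : Module.Finite A (U i) := by
      have := hU i
      infer_instance
    obtain ⟨IU, fU, hIUf, hfU⟩ := exists_ienv R (U i) fgU
    obtain ⟨η⟩ := tau_inj (hS i) (hS i') (hc i).proj (hc i').proj (uP i) (uP i')
      (ienv_uni hNak (hU i) hIUf fU hfU) hfU.inj (c i) (hc i).surj (c i') (hc i').surj
      (a i) (ha i) (ε.symm.toLinearMap ∘ₗ a i') (ε.symm.surjective.comp (ha i')) fU hfU.mono
    exact Subtype.ext ((hSu (S i) (hS i)).unique ⟨LinearEquiv.refl A _⟩ ⟨η⟩)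
  have hsurj : Function.Surjective φ := Finite.injective_iff_surjective.mp hinj
  obtain ⟨j, ⟨ε⟩, -⟩ := hSu T hT
  have hj : ¬ Pd A (S j) := fun h => hpd (h.equiv ε.symm)
  obtain ⟨i, hi⟩ := hsurj ⟨j, hj⟩
  have hPJ : Pd A (J j) := by
    have := hφ i
    rw [hi] at this
    exact this
  obtain ⟨g, hg⟩ := (he j).inj.out f hf.mono (e j ∘ₗ ε.toLinearMap)
  have hgi : Function.Injective g := by
    rw [← LinearMap.ker_eq_bot]
    apply hf.ess
    rw [eq_bot_iff]
    intro x hx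
    have h0 : g (f x) = 0 := hx
    rw [hg] at h0
    have := ((he j).mono.comp ε.injective) (h0.trans (map_zero (e j ∘ₗ ε.toLinearMap)).symm)
    exact this
  obtain ⟨r, hr⟩ := hf.inj.out g hgi LinearMap.id
  have := hJf j
  exact ⟨Module.Finite.of_surjective r fun x => ⟨g x, hr x⟩, hPJ.retract g r hr⟩

theorem claim2 {A : Type} [Ring A] (R : Type) [CommRing R] [IsArtinianRing R] [Algebra R A]
    [Module.Finite R A] (hNak : IsNakayama A) (T : ModuleCat.{0} A) (hT : IsSimpleModule A T)
    (hid : ¬ Id A T) (P : ModuleCat.{0} A) (f : P →ₗ[A] T) (hf : PCov f) :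
    Module.Finite A P ∧ Id A P := by
  have : IsArtinianRing A := IsArtinianRing.of_finite R A
  obtain ⟨ι, _, S, hS, hSu⟩ := exists_reps (A := A)
  have fgS : ∀ i, Module.Finite A (S i) := fun i => by
    have := hS i
    infer_instance
  choose Q e hQf he using fun i => exists_pcov (A := A) (S i) (fgS i)
  choose J c hJf hc using fun i => exists_ienv (A := A) R (S i) (fgS i)
  have uQ : ∀ i, Uni A (Q i) := fun i => pcov_uni hNak (hS i) (hQf i) (e i) (he i)
  have uJ : ∀ i, Uni A (J i) := fun i => ienv_uni hNak (hS i) (hJf i) (c i) (hc i)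
  have key1 : ∀ i : {i // ¬ Id A (S i)}, ∃ (j : {i // ¬ Id A (S i)}) (U : ModuleCat.{0} A),
      IsSimpleModule A U ∧ Id A (Q j) ∧
      (∃ a : U →ₗ[A] J i ⧸ LinearMap.range (c i), Function.Injective a) ∧
      (∃ b : U →ₗ[A] Q j, Function.Injective b) := by
    rintro ⟨i, hi⟩
    obtain ⟨S', U, hS', hU, hpS, ha, hall⟩ := step2 R hNak (hS i) (hJf i) (c i) (hc i) hi
    obtain ⟨j, ⟨ε⟩, -⟩ := hSu S' hS'
    obtain ⟨h1, h2⟩ := hall (Q j) (ε.symm.toLinearMap ∘ₗ e j) (hQf j) (he j).proj (uQ j)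
      (ε.symm.surjective.comp (he j).surj)
    exact ⟨⟨j, fun h => hpS (h.equiv ε.symm)⟩, U, hU, h1, ha, h2⟩
  choose φ U hU hφ hab using key1
  choose a ha using fun i => (hab i).1
  choose b hb using fun i => (hab i).2
  have hinj : Function.Injective φ := by
    intro i i' hii
    have n1 := (hU i).nontrivial
    obtain ⟨b', hb'⟩ : ∃ b' : U i' →ₗ[A] Q (φ i), Function.Injective b' := by
      rw [hii]
      exact ⟨b i', hb i'⟩
    obtain ⟨ε⟩ := uni_soc_unique (uQ (φ i)) (hU i) (hU i') (b i) (hb i) b' hb'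
    have fgU : Module.Finite A (U i) := by
      have := hU i
      infer_instance
    obtain ⟨PU, fU, hPUf, hfU⟩ := exists_pcov (A := A) (U i) fgU
    obtain ⟨η⟩ := tau_inj' (hS i) (hS i') (hc i).inj (hc i').inj (uJ i) (uJ i')
      (pcov_uni hNak (hU i) hPUf fU hfU) hfU.proj (c i) (hc i).mono (c i') (hc i').mono
      (a i) (ha i) (a i' ∘ₗ ε.toLinearMap) ((ha i').comp ε.injective) fU hfU.surj
    exact Subtype.ext ((hSu (S i) (hS i)).unique ⟨LinearEquiv.refl A _⟩ ⟨η⟩)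
  have hsurj : Function.Surjective φ := Finite.injective_iff_surjective.mp hinj
  obtain ⟨j, ⟨ε⟩, -⟩ := hSu T hT
  have hj : ¬ Id A (S j) := fun h => hid (h.equiv ε.symm)
  obtain ⟨i, hi⟩ := hsurj ⟨j, hj⟩
  have hPQ : Id A (Q j) := by
    have := hφ i
    rw [hi] at this
    exact this
  obtain ⟨g, hg⟩ := proj_lift (he j).proj f hf.surj (ε.symm.toLinearMap ∘ₗ e j)
  have hgs : Function.Surjective g := by
    rw [← LinearMap.range_eq_top]
    apply hf.ess
    rw [eq_top_iff]
    intro x _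
    obtain ⟨y, hy⟩ := (ε.symm.surjective.comp (he j).surj) x
    exact ⟨g y, ⟨y, rfl⟩, (hg y).trans hy⟩
  obtain ⟨s, hs⟩ := proj_lift hf.proj g hgs LinearMap.id
  have := hQf j
  exact ⟨Module.Finite.of_surjective g hgs, hPQ.retract s g hs⟩

theorem final {A : Type} [Ring A] (R : Type) [CommRing R] [IsArtinianRing R] [Algebra R A]
    [Module.Finite R A] (hNak : IsNakayama A) (d d' : ℕ∞)
    (hd : d = sSup {x : ℕ∞ | ∃ S MS : ModuleCat.{0} A, IsSimpleModule A ↥S ∧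
      ((projDim A S ≠ ⊤ ∧ MS = S) ∨ (projDim A S = ⊤ ∧ IsInjEnvOf A S MS)) ∧
      x = projDim A MS})
    (hd' : d' = sSup {x : ℕ∞ | ∃ S NS : ModuleCat.{0} A, IsSimpleModule A ↥S ∧
      ((injDim A S ≠ ⊤ ∧ NS = S) ∨ (injDim A S = ⊤ ∧ IsProjCoverOf A S NS)) ∧
      x = injDim A NS}) :
    finProDim A = finInjDim A ∧ finInjDim A = delAlg A ∧ delAlg A = desAlg A ∧
      desAlg A = d ∧ d = d' := by
  have : IsArtinianRing A := IsArtinianRing.of_finite R A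
  have fg : ∀ S : ModuleCat.{0} A, IsSimpleModule A S → Module.Finite A S := fun S h => inferInstance
  have h1 : finInjDim A ≤ delAlg A := finInj_le_del
  have h2 : delAlg A ≤ d := by
    apply sSup_le
    rintro _ ⟨S, hS, rfl⟩
    by_cases hp : projDim A S = ⊤
    · obtain ⟨I, f, hIf, hf⟩ := exists_ienv R S (fg S hS)
      refine (del_le S I hIf f hf.mono).trans ?_
      rw [hd]
      exact le_sSup ⟨S, I, hS, Or.inr ⟨hp, ModuleCat.ofHom f, (ienv_iff _).mpr hf⟩, rfl⟩
    · refine (del_le S S (fg S hS) LinearMap.id Function.injective_id).trans ?_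
      rw [hd]
      exact le_sSup ⟨S, S, hS, Or.inl ⟨hp, rfl⟩, rfl⟩
  have h3 : d ≤ finProDim A := by
    rw [hd]
    apply sSup_le
    rintro _ ⟨S, M, hS, h, rfl⟩
    rcases h with ⟨h, rfl⟩ | ⟨h, f, hf⟩
    · exact le_sSup ⟨M, fg M hS, rfl, h⟩
    · have hS' : ¬ Pd A S := fun hh => (projDim_ne_top_iff S).mpr hh h
      obtain ⟨hfin, hpd⟩ := claim1 R hNak S hS hS' M f.hom ((ienv_iff f).mp hf)
      exact le_sSup ⟨M, hfin, rfl, (projDim_ne_top_iff M).mpr hpd⟩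
  have h4 : finProDim A ≤ desAlg A := finPro_le_des
  have h5 : desAlg A ≤ d' := by
    apply sSup_le
    rintro _ ⟨S, hS, rfl⟩
    by_cases hp : injDim A S = ⊤
    · obtain ⟨P, f, hPf, hf⟩ := exists_pcov (A := A) S (fg S hS)
      refine (des_le R S P hPf f hf.surj).trans ?_
      rw [hd']
      exact le_sSup ⟨S, P, hS, Or.inr ⟨hp, ModuleCat.ofHom f, (pcov_iff _).mpr hf⟩, rfl⟩
    · refine (des_le R S S (fg S hS) LinearMap.id Function.surjective_id).trans ?_
      rw [hd']
      exact le_sSup ⟨S, S, hS, Or.inl ⟨hp, rfl⟩, rfl⟩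
  have h6 : d' ≤ finInjDim A := by
    rw [hd']
    apply sSup_le
    rintro _ ⟨S, M, hS, h, rfl⟩
    rcases h with ⟨h, rfl⟩ | ⟨h, f, hf⟩
    · exact le_sSup ⟨M, fg M hS, rfl, h⟩
    · have hS' : ¬ Id A S := fun hh => (injDim_ne_top_iff S).mpr hh h
      obtain ⟨hfin, hpd⟩ := claim2 R hNak S hS hS' M f.hom ((pcov_iff f).mp hf)
      exact le_sSup ⟨M, hfin, rfl, (injDim_ne_top_iff M).mpr hpd⟩
  have e1 : finInjDim A = delAlg A := le_antisymm h1 (h2.trans (h3.trans (h4.trans (h5.trans h6))))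
  have e2 : delAlg A = d := le_antisymm h2 (h3.trans (h4.trans (h5.trans (h6.trans h1))))
  have e3 : d = finProDim A := le_antisymm h3 (h4.trans (h5.trans (h6.trans (h1.trans h2))))
  have e4 : finProDim A = desAlg A := le_antisymm h4 (h5.trans (h6.trans (h1.trans (h2.trans h3))))
  have e5 : desAlg A = d' := le_antisymm h5 (h6.trans (h1.trans (h2.trans (h3.trans h4))))
  exact ⟨(e1.trans (e2.trans e3)).symm, e1, e2.trans (e3.trans e4), (e3.trans e4).symm,
    e3.trans (e4.trans e5)⟩

end Nak

open ArtinAlg in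
/-- Let `A` be a Nakayama algebra. For a simple module `S` let
`M_S = S` if `pd S < ∞` and `M_S = I S` otherwise, and let `N_S = S` if `id S < ∞` and
`N_S = P S` otherwise; set `d = max_S pd M_S` and `d' = max_S id N_S`. Then
`fin-pro A = fin-inj A = del A = des A = d = d'`. -/
theorem statement_10 (R : Type) [CommRing R] [IsArtinianRing R]
    (A : Type) [Ring A] [Algebra R A] [Module.Finite R A]
    (hNak : IsNakayama A) (d d' : ℕ∞)
    (hd : d = sSup {x : ℕ∞ | ∃ S MS : ModuleCat.{0} A, IsSimpleModule A ↥S ∧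
      ((projDim A S ≠ ⊤ ∧ MS = S) ∨ (projDim A S = ⊤ ∧ IsInjEnvOf A S MS)) ∧
      x = projDim A MS})
    (hd' : d' = sSup {x : ℕ∞ | ∃ S NS : ModuleCat.{0} A, IsSimpleModule A ↥S ∧
      ((injDim A S ≠ ⊤ ∧ NS = S) ∨ (injDim A S = ⊤ ∧ IsProjCoverOf A S NS)) ∧
      x = injDim A NS}) :
    finProDim A = finInjDim A ∧ finInjDim A = delAlg A ∧ delAlg A = desAlg A ∧
      desAlg A = d ∧ d = d' := by
  exact Nak.final R hNak d d' hd hd'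
end
end

section
/- Let A be a Nakayama algebra and X an indecomposable module, and set e(X) = min{pd X, pd IX}, where IX is the injective envelope of X. Then e(X) = min{pd Y : Y finitely generated and X ⊆ Y}, and del X ≤ e(X). -/
open CategoryTheory CategoryTheory.Limits

noncomputable section

namespace NK

open ArtinAlg

variable {A : Type} [Ring A]

/-- Uniserial, unbundled. -/
def Uni (A : Type) [Ring A] (M : Type) [AddCommGroup M] [Module A M] : Prop :=
  ∀ N₁ N₂ : Submodule A M, N₁ ≤ N₂ ∨ N₂ ≤ N₁

/-- Projective dimension `< n`, unbundled. -/
abbrev PD (A : Type) [Ring A] (M : Type) [AddCommGroup M] [Module A M] (n : ℕ) : Prop :=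
  HasProjectiveDimensionLT (ModuleCat.of A M) n

variable {M N P : Type} [AddCommGroup M] [Module A M] [AddCommGroup N] [Module A N]
  [AddCommGroup P] [Module A P]

lemma Uni.of_inj (h : Uni A M) (f : N →ₗ[A] M) (hf : Function.Injective f) : Uni A N := by
  intro N₁ N₂
  rcases h (N₁.map f) (N₂.map f) with h | h
  · exact Or.inl ((Submodule.map_le_map_iff_of_injective hf _ _).1 h)
  · exact Or.inr ((Submodule.map_le_map_iff_of_injective hf _ _).1 h)

lemma PD.mono {n m : ℕ} (h : PD A M n) (hnm : n ≤ m) : PD A M m :=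
  hasProjectiveDimensionLT_of_ge _ n m hnm

lemma PD.equiv {n : ℕ} (h : PD A M n) (e : M ≃ₗ[A] N) : PD A N n :=
  hasProjectiveDimensionLT_of_iso e.toModuleIso n

lemma PD.retract {n : ℕ} (h : PD A M n) (i : N →ₗ[A] M) (r : M →ₗ[A] N)
    (hir : r ∘ₗ i = LinearMap.id) : PD A N n := by
  have R : Retract (ModuleCat.of A N) (ModuleCat.of A M) :=
    { i := ModuleCat.ofHom i
      r := ModuleCat.ofHom r
      retract := by rw [← ModuleCat.ofHom_comp, hir]; rfl }
  exact R.hasProjectiveDimensionLT n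

lemma pd_one_iff : PD A M 1 ↔ Module.Projective A M := by
  rw [PD, ← projective_iff_hasProjectiveDimensionLT_one, IsProjective.iff_projective]

lemma PD.zero [Subsingleton M] (n : ℕ) : PD A M n := by
  have : PD A M 0 := (ModuleCat.isZero_of_subsingleton _).hasProjectiveDimensionLT_zero
  exact this.mono (Nat.zero_le _)

lemma PD.subsingleton (h : PD A M 0) : Subsingleton M := by
  have := isZero_of_hasProjectiveDimensionLT_zero (ModuleCat.of A M)
  exact (ModuleCat.isZero_iff_subsingleton).1 this

lemma ses (f : P →ₗ[A] M) (hf : Function.Surjective f) :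
    ∃ S : ShortComplex (ModuleCat.{0} A), S.ShortExact ∧ S.X₁ = ModuleCat.of A (LinearMap.ker f) ∧
      S.X₂ = ModuleCat.of A P ∧ S.X₃ = ModuleCat.of A M := by
  refine ⟨ShortComplex.mk (ModuleCat.ofHom (LinearMap.ker f).subtype) (ModuleCat.ofHom f) ?_,
    ?_, rfl, rfl, rfl⟩
  · ext x; exact x.2
  · refine ShortComplex.ShortExact.mk' ?_ ?_ ?_
    · rw [ShortComplex.moduleCat_exact_iff]
      intro x hx
      exact ⟨⟨x, hx⟩, rfl⟩
    · rw [ModuleCat.mono_iff_injective]; exact Subtype.val_injective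
    · rw [ModuleCat.epi_iff_surjective]; exact hf

lemma PD.ker {n : ℕ} [hP : Module.Projective A P] (f : P →ₗ[A] M) (hf : Function.Surjective f)
    (h : PD A M (n + 2)) : PD A (LinearMap.ker f) (n + 1) := by
  obtain ⟨S, hS, h1, h2, h3⟩ := ses f hf
  rw [PD, ← h1]
  have h2' : HasProjectiveDimensionLT S.X₂ (n + 1) := by
    rw [h2]; exact PD.mono (pd_one_iff.2 hP) (by omega)
  have h3' : HasProjectiveDimensionLT S.X₃ (n + 1 + 1) := by rw [h3]; exact h
  exact hS.hasProjectiveDimensionLT_X₁ _ h2' h3'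

lemma PD.of_ker {n : ℕ} [hP : Module.Projective A P] (f : P →ₗ[A] M) (hf : Function.Surjective f)
    (h : PD A (LinearMap.ker f) n) : PD A M (n + 1) := by
  obtain ⟨S, hS, h1, h2, h3⟩ := ses f hf
  rw [PD, ← h3]
  have h2' : HasProjectiveDimensionLT S.X₂ (n + 1) := by
    rw [h2]; exact PD.mono (pd_one_iff.2 hP) (by omega)
  have h1' : HasProjectiveDimensionLT S.X₁ n := by rw [h1]; exact h
  exact hS.hasProjectiveDimensionLT_X₃ _ h1' h2'

lemma projDimLE_iff (n : ℕ) (M : ModuleCat.{0} A) : ProjDimLE A n M ↔ PD A M (n + 1) := by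
  constructor
  · intro h
    induction h with
    | zero M h => exact projective_iff_hasProjectiveDimensionLT_one.1 h
    | succ n M P f hP hf h ih =>
      have hS : (ShortComplex.mk (kernel.ι f) f (kernel.condition f)).ShortExact :=
        ShortComplex.ShortExact.mk' (ShortComplex.exact_kernel f) inferInstance hf
      exact hS.hasProjectiveDimensionLT_X₃ (n + 1) ih
        (hasProjectiveDimensionLT_of_ge P 1 _ (by omega))
  · induction n generalizing M with
    | zero => exact fun h => ProjDimLE.zero _ (projective_iff_hasProjectiveDimensionLT_one.2 h)
    | succ n ih =>
      intro h
      have hS : (ShortComplex.mk (kernel.ι (Projective.π M)) (Projective.π M)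
          (kernel.condition _)).ShortExact :=
        ShortComplex.ShortExact.mk' (ShortComplex.exact_kernel _) inferInstance inferInstance
      refine ProjDimLE.succ n M (Projective.over M) (Projective.π M) inferInstance inferInstance
        (ih _ ?_)
      exact hS.hasProjectiveDimensionLT_X₁ (n + 1)
        (hasProjectiveDimensionLT_of_ge _ 1 _ (by omega)) h

/-- A surjection from a uniserial module onto a nonzero projective module is injective. -/
lemma inj_of_proj (hM : Uni A M) [Module.Projective A N] [Nontrivial N] (f : M →ₗ[A] N)
    (hf : Function.Surjective f) : Function.Injective f := by
  obtain ⟨s, hs⟩ := Module.projective_lifting_property f LinearMap.id hf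
  have hs' : ∀ x, f (s x) = x := fun x => LinearMap.congr_fun hs x
  rw [← LinearMap.ker_eq_bot]
  rcases hM (LinearMap.ker f) (LinearMap.range s) with h | h
  · rw [eq_bot_iff]
    intro x hx
    obtain ⟨y, rfl⟩ := h hx
    have : y = 0 := by rw [← hs' y]; exact hx
    simp [this]
  · exfalso
    obtain ⟨y, hy⟩ := exists_ne (0 : N)
    apply hy
    rw [← hs' y]
    exact h ⟨y, rfl⟩

/-- In a retract situation from complementary submodules. -/
lemma compl_proj {N₁ N₂ : Submodule A M} (h : IsCompl N₁ N₂) :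
    ∃ r : M →ₗ[A] N₁, r ∘ₗ N₁.subtype = LinearMap.id ∧ LinearMap.ker r = N₂ :=
  ⟨Submodule.projectionOnto _ _ h, by ext x; simp, by simp⟩

lemma cover_of_uni (hP : Uni A P) [hpr : Module.Projective A P] [Nontrivial M] (f : P →ₗ[A] M)
    (hf : Function.Surjective f) : IsProjectiveCoverHom A (ModuleCat.ofHom f) := by
  refine ⟨(IsProjective.iff_projective P).1 hpr, (ModuleCat.epi_iff_surjective _).2 hf, ?_⟩
  intro K g hg
  rw [ModuleCat.epi_iff_surjective] at hg ⊢
  rcases hP (LinearMap.range g.hom) (LinearMap.ker f) with h | h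
  · exfalso
    obtain ⟨y, hy⟩ := exists_ne (0 : M)
    obtain ⟨x, hx⟩ := hg y
    apply hy
    rw [← hx]
    exact h ⟨x, rfl⟩
  · intro p
    obtain ⟨x, hx⟩ := hg (f p)
    have hx' : f (g.hom x) = f p := hx
    have : p - g.hom x ∈ LinearMap.range g.hom := h (by simp [hx'])
    obtain ⟨z, hz⟩ := this
    exact ⟨z + x, by
      change g.hom (z + x) = p
      rw [map_add, hz]; abel⟩

lemma uni_of_indec (hNak : IsNakayama A) [hf : Module.Finite A M] [hn : Nontrivial M]
    (h : ∀ N₁ N₂ : Submodule A M, IsCompl N₁ N₂ → N₁ = ⊥ ∨ N₂ = ⊥) : Uni A M :=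
  hNak (ModuleCat.of A M) hf ⟨hn, h⟩

/-- Uniserial projective covers. -/
lemma exists_cover [IsArtinianRing A] (hNak : IsNakayama A) (hM : Uni A M) [Module.Finite A M] :
    ∃ (P : Type) (_ : AddCommGroup P) (_ : Module A P) (_ : Module.Finite A P)
      (_ : Module.Projective A P) (f : P →ₗ[A] M), Uni A P ∧ Function.Surjective f ∧
      IsProjectiveCoverHom A (ModuleCat.ofHom f) := by
  rcases subsingleton_or_nontrivial M with hs | hn
  · refine ⟨M, inferInstance, inferInstance, inferInstance, inferInstance, LinearMap.id, hM,
      Function.surjective_id, (IsProjective.iff_projective M).1 inferInstance,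
      (ModuleCat.epi_iff_surjective _).2 Function.surjective_id, ?_⟩
    intro K g hg
    rw [ModuleCat.epi_iff_surjective]
    intro x
    exact ⟨0, Subsingleton.elim _ _⟩
  -- a free module of finite rank surjecting on `M`
  obtain ⟨k, F, hF⟩ := Module.Finite.exists_fin' A M
  have hwf := (inferInstance : WellFoundedLT (Submodule A (Fin k → A)))
  let S : Set (Submodule A (Fin k → A)) :=
    {N | Module.Projective A N ∧ Function.Surjective (F ∘ₗ N.subtype)}
  have hS : S.Nonempty := by
    refine ⟨⊤, Module.Projective.of_equiv' (Submodule.topEquiv (R := A)).symm, ?_⟩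
    intro x
    obtain ⟨y, hy⟩ := hF x
    exact ⟨⟨y, trivial⟩, hy⟩
  obtain ⟨N, ⟨hNp, hNs⟩, hmin⟩ := hwf.wf.has_min S hS
  have hNn : Nontrivial N := hNs.nontrivial
  have key : ∀ N₁ N₂ : Submodule A N, IsCompl N₁ N₂ →
      LinearMap.range (F ∘ₗ N.subtype ∘ₗ N₁.subtype) = ⊤ → N₂ = ⊥ := by
    intro N₁ N₂ hc hr
    obtain ⟨r, hr1, hr2⟩ := compl_proj hc
    have hp : Module.Projective A N₁ := Module.Projective.of_split N₁.subtype r hr1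
    let e : N₁ ≃ₗ[A] N₁.map N.subtype := Submodule.equivMapOfInjective N.subtype
      (Submodule.injective_subtype _) N₁
    have hmem : N₁.map N.subtype ∈ S := by
      refine ⟨Module.Projective.of_equiv' e, ?_⟩
      intro x
      obtain ⟨y, hy⟩ := LinearMap.range_eq_top.1 hr x
      exact ⟨e y, hy⟩
    have hle : N₁.map N.subtype ≤ N := Submodule.map_subtype_le _ _
    have heq : N₁.map N.subtype = N := by
      by_contra hne
      exact hmin _ hmem (lt_of_le_of_ne hle hne)
    have : N₁ = ⊤ := by
      rw [eq_top_iff]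
      intro x _
      have : (x : Fin k → A) ∈ N₁.map N.subtype := by rw [heq]; exact x.2
      obtain ⟨y, hy, hyx⟩ := this
      have : y = x := Subtype.ext hyx
      exact this ▸ hy
    subst this
    exact top_disjoint.1 hc.disjoint
  have hU : Uni A N := by
    apply uni_of_indec hNak
    intro N₁ N₂ hc
    set R₁ := LinearMap.range (F ∘ₗ N.subtype ∘ₗ N₁.subtype)
    set R₂ := LinearMap.range (F ∘ₗ N.subtype ∘ₗ N₂.subtype)
    have hsup : R₁ ⊔ R₂ = ⊤ := by
      rw [eq_top_iff]
      intro x _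
      obtain ⟨y, hy⟩ := hNs x
      have : y ∈ N₁ ⊔ N₂ := by rw [hc.sup_eq_top]; trivial
      obtain ⟨a, ha, b, hb, rfl⟩ := Submodule.mem_sup.1 this
      rw [← hy, map_add]
      exact Submodule.add_mem_sup ⟨⟨a, ha⟩, rfl⟩ ⟨⟨b, hb⟩, rfl⟩
    rcases hM R₁ R₂ with h | h
    · left
      rw [sup_eq_right.2 h] at hsup
      exact key N₂ N₁ hc.symm hsup
    · right
      rw [sup_eq_left.2 h] at hsup
      exact key N₁ N₂ hc hsup
  exact ⟨N, inferInstance, inferInstance, inferInstance, hNp, F ∘ₗ N.subtype, hU, hNs,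
    cover_of_uni hU _ hNs⟩

/-- If a uniserial module embeds in a finitely generated module, it embeds in a uniserial one of
no larger projective dimension. -/
lemma exists_uni_sup [IsArtinianRing A] (hNak : IsNakayama A) (hM : Uni A M) [Nontrivial M]
    [Module.Finite A N] (f : M →ₗ[A] N) (hf : Function.Injective f) {n : ℕ} (hN : PD A N n) :
    ∃ K : Submodule A N, Uni A K ∧ PD A K n ∧ ∃ g : M →ₗ[A] K, Function.Injective g := by
  have hwf := (inferInstance : WellFoundedLT (Submodule A N))
  let S : Set (Submodule A N) :=
    {K | PD A K n ∧ ∃ g : M →ₗ[A] K, Function.Injective g}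
  have hS : S.Nonempty := by
    refine ⟨⊤, hN.equiv (Submodule.topEquiv (R := A) (M := N)).symm,
      (Submodule.topEquiv (R := A) (M := N)).symm.toLinearMap ∘ₗ f, ?_⟩
    exact (Submodule.topEquiv (R := A) (M := N)).symm.injective.comp hf
  obtain ⟨K, ⟨hKp, g, hg⟩, hmin⟩ := hwf.wf.has_min S hS
  have hKn : Nontrivial K := hg.nontrivial
  have key : ∀ N₁ N₂ : Submodule A K, IsCompl N₁ N₂ →
      LinearMap.ker g ⊔ N₂.comap g = ⊥ → N₂ = ⊥ := by
    intro N₁ N₂ hc hr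
    obtain ⟨r, hr1, hr2⟩ := compl_proj hc
    have hp : PD A N₁ n := hKp.retract N₁.subtype r hr1
    let e : N₁ ≃ₗ[A] N₁.map K.subtype := Submodule.equivMapOfInjective K.subtype
      (Submodule.injective_subtype _) N₁
    have hmem : N₁.map K.subtype ∈ S := by
      refine ⟨hp.equiv e, e.toLinearMap ∘ₗ r ∘ₗ g, ?_⟩
      refine e.injective.comp ?_
      rw [← LinearMap.ker_eq_bot, LinearMap.ker_comp, hr2, eq_bot_iff, ← hr]
      exact le_sup_right
    have hle : N₁.map K.subtype ≤ K := Submodule.map_subtype_le _ _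
    have heq : N₁.map K.subtype = K := by
      by_contra hne
      exact hmin _ hmem (lt_of_le_of_ne hle hne)
    have : N₁ = ⊤ := by
      rw [eq_top_iff]
      intro x _
      have : (x : N) ∈ N₁.map K.subtype := by rw [heq]; exact x.2
      obtain ⟨y, hy, hyx⟩ := this
      have : y = x := Subtype.ext hyx
      exact this ▸ hy
    subst this
    exact top_disjoint.1 hc.disjoint
  refine ⟨K, ?_, hKp, g, hg⟩
  apply uni_of_indec hNak
  intro N₁ N₂ hc
  have hk : LinearMap.ker g = ⊥ := LinearMap.ker_eq_bot.2 hg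
  have hinf : N₁.comap g ⊓ N₂.comap g = ⊥ := by
    rw [← Submodule.comap_inf, hc.inf_eq_bot, ← LinearMap.ker, hk]
  rcases hM (N₁.comap g) (N₂.comap g) with h | h
  · left
    refine key N₂ N₁ hc.symm ?_
    rw [hk, bot_sup_eq, ← hinf, inf_eq_left.2 h]
  · right
    refine key N₁ N₂ hc ?_
    rw [hk, bot_sup_eq, ← hinf, inf_eq_right.2 h]

lemma Uni.of_surj (h : Uni A M) (f : M →ₗ[A] N) (hf : Function.Surjective f) : Uni A N := by
  intro N₁ N₂
  rcases h (N₁.comap f) (N₂.comap f) with h | h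
  · exact Or.inl ((Submodule.comap_le_comap_iff_of_surjective hf).1 h)
  · exact Or.inr ((Submodule.comap_le_comap_iff_of_surjective hf).1 h)

lemma Uni.sub (h : Uni A M) (N : Submodule A M) : Uni A N :=
  h.of_inj N.subtype N.injective_subtype

/-- Syzygies of a submodule surject on syzygies of the module. -/
lemma rot [IsArtinianRing A] (hNak : IsNakayama A) (j : M →ₗ[A] N) (hj : Function.Injective j)
    (g : P →ₗ[A] N) (hg : Function.Surjective g) (hP : Uni A P) [Module.Finite A P] :
    ∃ (Q : Type) (_ : AddCommGroup Q) (_ : Module A Q) (_ : Module.Finite A Q)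
      (_ : Module.Projective A Q) (p : Q →ₗ[A] M), Uni A Q ∧ Function.Surjective p ∧
      ∃ s : LinearMap.ker p →ₗ[A] LinearMap.ker g, Function.Surjective s := by
  let Y := (LinearMap.range j).comap g
  obtain ⟨Q, _, _, _, _, q, hQ, hq, -⟩ := exists_cover hNak (hP.sub Y)
  let e := LinearEquiv.ofInjective j hj
  let c : Q →ₗ[A] LinearMap.range j :=
    LinearMap.codRestrict _ (g ∘ₗ Y.subtype ∘ₗ q) (fun x => (q x).2)
  let p : Q →ₗ[A] M := e.symm.toLinearMap ∘ₗ c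
  have hp : ∀ x, j (p x) = g (q x) := by
    intro x
    have h1 : e (p x) = c x := by simp [p]
    exact congrArg Subtype.val h1
  have hker : ∀ x, x ∈ LinearMap.ker p ↔ (q x : P) ∈ LinearMap.ker g := by
    intro x
    rw [LinearMap.mem_ker, LinearMap.mem_ker, ← hp, map_eq_zero_iff j hj]
  refine ⟨Q, inferInstance, inferInstance, inferInstance, inferInstance, p, hQ, ?_, ?_⟩
  · intro m
    obtain ⟨y, hy⟩ := hg (j m)
    obtain ⟨x, hx⟩ := hq ⟨y, ⟨m, hy.symm⟩⟩
    refine ⟨x, hj ?_⟩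
    rw [hp, hx, hy]
  · refine ⟨(Y.subtype ∘ₗ q).restrict (fun x hx => (hker x).1 hx), ?_⟩
    rintro ⟨y, hy⟩
    obtain ⟨x, hx⟩ := hq ⟨y, ⟨0, by rw [map_zero]; exact hy.symm⟩⟩
    refine ⟨⟨x, (hker x).2 (by rw [hx]; exact hy)⟩, Subtype.ext ?_⟩
    change (q x : P) = y
    rw [hx]

lemma pd_ab [IsArtinianRing A] (hNak : IsNakayama A) (n : ℕ) :
    (∀ (X Y Z : Type) [AddCommGroup X] [AddCommGroup Y] [AddCommGroup Z]
      [Module A X] [Module A Y] [Module A Z] [Module.Finite A Z], Uni A Z →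
      ∀ (i : X →ₗ[A] Y) (j : Y →ₗ[A] Z), Function.Injective i → Function.Injective j →
      PD A Y (n + 1) → PD A X (n + 1) ∨ PD A Z (n + 1)) ∧
    (∀ (U V W : Type) [AddCommGroup U] [AddCommGroup V] [AddCommGroup W]
      [Module A U] [Module A V] [Module A W] [Module.Finite A U], Uni A U →
      ∀ (u : U →ₗ[A] V) (v : V →ₗ[A] W), Function.Surjective u → Function.Surjective v →
      PD A V (n + 1) → PD A U (n + 1) ∨ PD A W (n + 1)) := by
  induction n with
  | zero =>
    refine ⟨?_, ?_⟩
    · intro X Y Z _ _ _ _ _ _ _ hZ i j hi hj hY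
      rcases subsingleton_or_nontrivial Y with hs | hn
      · have : Subsingleton X := hi.subsingleton
        exact Or.inl (PD.zero _)
      right
      have hYp : Module.Projective A Y := pd_one_iff.1 hY
      obtain ⟨P, _, _, _, hPp, g, hP, hg, -⟩ := exists_cover hNak hZ
      let e := LinearEquiv.ofInjective j hj
      have : Module.Projective A (LinearMap.range j) := Module.Projective.of_equiv' e
      have : Nontrivial (LinearMap.range j) := e.symm.surjective.nontrivial
      let c : (LinearMap.range j).comap g →ₗ[A] LinearMap.range j := g.restrict (fun x hx => hx)
      have hc : Function.Surjective c := by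
        rintro ⟨y, hy⟩
        obtain ⟨x, rfl⟩ := hg y
        exact ⟨⟨x, hy⟩, rfl⟩
      have hci := inj_of_proj (hP.sub _) c hc
      have hgi : Function.Injective g := by
        rw [injective_iff_map_eq_zero]
        intro x hx
        have hm : x ∈ (LinearMap.range j).comap g := by simp [hx]
        have hcx : c ⟨x, hm⟩ = 0 := Subtype.ext hx
        have : (⟨x, hm⟩ : (LinearMap.range j).comap g) = 0 := hci (by rw [hcx, map_zero])
        exact congrArg Subtype.val this
      exact (pd_one_iff.2 hPp).equiv (LinearEquiv.ofBijective g ⟨hgi, hg⟩)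
    · intro U V W _ _ _ _ _ _ _ hU u v hu hv hV
      rcases subsingleton_or_nontrivial V with hs | hn
      · have : Subsingleton W := hv.subsingleton
        exact Or.inr (PD.zero _)
      left
      have hVp : Module.Projective A V := pd_one_iff.1 hV
      exact hV.equiv (LinearEquiv.ofBijective u ⟨inj_of_proj hU u hu, hu⟩).symm
  | succ n ih =>
    obtain ⟨ihA, ihB⟩ := ih
    refine ⟨?_, ?_⟩
    · intro X Y Z _ _ _ _ _ _ _ hZ i j hi hj hY
      obtain ⟨P, _, _, _, hPp, g, hP, hg, -⟩ := exists_cover hNak hZ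
      obtain ⟨Q, _, _, _, hQp, p, hQ, hp, s, hs⟩ := rot hNak j hj g hg hP
      obtain ⟨T, _, _, _, hTp, q, hT, hq, t, ht⟩ := rot hNak i hi p hp hQ
      rcases ihB _ _ _ (hT.sub _) t s ht hs (PD.ker p hp hY) with h | h
      · exact Or.inl (PD.of_ker q hq h)
      · exact Or.inr (PD.of_ker g hg h)
    · intro U V W _ _ _ _ _ _ _ hU u v hu hv hV
      obtain ⟨P, _, _, _, hPp, g, hP, hg, -⟩ := exists_cover hNak hU
      have hug : Function.Surjective (u ∘ₗ g) := hu.comp hg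
      have hvug : Function.Surjective (v ∘ₗ u ∘ₗ g) := hv.comp hug
      rcases ihA _ _ _ (hP.sub (LinearMap.ker (v ∘ₗ u ∘ₗ g)))
        (Submodule.inclusion (LinearMap.ker_le_ker_comp g u))
        (Submodule.inclusion (LinearMap.ker_le_ker_comp (u ∘ₗ g) v))
        (Submodule.inclusion_injective _) (Submodule.inclusion_injective _)
        (PD.ker (u ∘ₗ g) hug hV) with h | h
      · exact Or.inl (PD.of_ker g hg h)
      · exact Or.inr (PD.of_ker _ hvug h)

/-- The injective envelope of a uniserial module is uniserial of finite length. -/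
lemma ess_ext [IsArtinianRing A] (hNak : IsNakayama A) (hM : Uni A M) [Nontrivial M]
    (f : M →ₗ[A] N) (hf : Function.Injective f)
    (hess : ∀ K : Submodule A N, K ⊓ LinearMap.range f = ⊥ → K = ⊥) :
    Uni A N ∧ Module.Finite A N := by
  have hunif : ∀ K L : Submodule A N, K ⊓ L = ⊥ → K = ⊥ ∨ L = ⊥ := by
    intro K L hKL
    have hinf : K.comap f ⊓ L.comap f = ⊥ := by
      rw [← Submodule.comap_inf, hKL]
      exact LinearMap.ker_eq_bot.2 hf
    have aux : ∀ K : Submodule A N, K.comap f = ⊥ → K = ⊥ := by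
      intro K hK
      apply hess
      rw [inf_comm, ← Submodule.map_comap_eq, hK, Submodule.map_bot]
    rcases hM (K.comap f) (L.comap f) with h | h
    · left; apply aux; rw [← hinf, inf_eq_left.2 h]
    · right; apply aux; rw [← hinf, inf_eq_right.2 h]
  have hfg : ∀ K : Submodule A N, K.FG → Uni A K := by
    intro K hK
    have : Module.Finite A K := Module.Finite.iff_fg.2 hK
    rcases subsingleton_or_nontrivial K with hs | hn
    · intro N₁ N₂
      exact Or.inl (le_of_eq (Subsingleton.elim _ _))
    apply uni_of_indec hNak
    intro N₁ N₂ hc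
    have hinj : Function.Injective K.subtype := K.injective_subtype
    have := hunif (N₁.map K.subtype) (N₂.map K.subtype) (by
      rw [← Submodule.map_inf _ hinj, hc.inf_eq_bot, Submodule.map_bot])
    exact this.imp
      (fun h => Submodule.map_injective_of_injective hinj (by rw [h, Submodule.map_bot]))
      (fun h => Submodule.map_injective_of_injective hinj (by rw [h, Submodule.map_bot]))
  have hpair : ∀ a b : N, a ∈ Submodule.span A {b} ∨ b ∈ Submodule.span A {a} := by
    intro a b
    let K := Submodule.span A ({a, b} : Set N)
    have ha : a ∈ K := Submodule.subset_span (by simp)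
    have hb : b ∈ K := Submodule.subset_span (by simp)
    have hK : Uni A K := hfg K (Submodule.fg_span (Set.toFinite _))
    have aux : ∀ x y : K, Submodule.span A {x} ≤ Submodule.span A {y} →
        (x : N) ∈ Submodule.span A {(y : N)} := by
      intro x y h
      obtain ⟨r, hr⟩ := Submodule.mem_span_singleton.1 (h (Submodule.mem_span_singleton_self x))
      exact Submodule.mem_span_singleton.2 ⟨r, congrArg Subtype.val hr⟩
    rcases hK (Submodule.span A {(⟨a, ha⟩ : K)}) (Submodule.span A {(⟨b, hb⟩ : K)}) with h | h
    · exact Or.inl (aux ⟨a, ha⟩ ⟨b, hb⟩ h)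
    · exact Or.inr (aux ⟨b, hb⟩ ⟨a, ha⟩ h)
  refine ⟨?_, ?_⟩
  · intro N₁ N₂
    by_contra! hcon
    obtain ⟨h1, h2⟩ := hcon
    obtain ⟨a, ha1, ha2⟩ := Set.not_subset.1 h1
    obtain ⟨b, hb1, hb2⟩ := Set.not_subset.1 h2
    rcases hpair a b with h | h
    · exact ha2 ((Submodule.span_singleton_le_iff_mem b N₂).2 hb1 h)
    · exact hb2 ((Submodule.span_singleton_le_iff_mem a N₁).2 ha1 h)
  · -- choose a cyclic submodule of maximal length
    have hle : ∀ a : N, Order.height (Submodule.span A {a}) ≤ Module.length A A := by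
      intro a
      rw [← Module.length_submodule, ← LinearMap.range_toSpanSingleton]
      exact Module.length_le_of_surjective _ (LinearMap.toSpanSingleton A N a).surjective_rangeRestrict
    have htop : Module.length A A ≠ ⊤ := Module.length_ne_top
    have hlt : ∀ a : N, Order.height (Submodule.span A {a}) ≠ ⊤ :=
      fun a => ne_top_of_le_ne_top htop (hle a)
    let l : N → ℕ := fun a => (Order.height (Submodule.span A {a})).toNat
    have hb : BddAbove (Set.range l) := by
      refine ⟨(Module.length A A).toNat, ?_⟩
      rintro _ ⟨a, rfl⟩
      exact ENat.toNat_le_toNat (hle a) htop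
    obtain ⟨a, ha⟩ : sSup (Set.range l) ∈ Set.range l :=
      Nat.sSup_mem (Set.range_nonempty l) hb
    have hmax : ∀ b, l b ≤ l a := fun b => ha ▸ le_csSup hb ⟨b, rfl⟩
    refine Module.Finite.of_fg_top ⟨{a}, ?_⟩
    rw [eq_top_iff]
    intro b _
    rw [Finset.coe_singleton]
    rcases hpair a b with h | h
    · by_contra hba
      have hlt1 : Submodule.span A {a} < Submodule.span A {b} := by
        refine lt_of_le_of_ne ((Submodule.span_singleton_le_iff_mem _ _).2 h) ?_
        intro he
        exact hba (he ▸ Submodule.mem_span_singleton_self b)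
      have hlt2 := Order.height_strictMono hlt1 (hlt a).lt_top
      have hlt3 : l a < l b := by
        rw [← ENat.natCast_toNat (hlt a), ← ENat.natCast_toNat (hlt b)] at hlt2
        exact_mod_cast hlt2
      exact absurd (hmax b) (not_le.2 hlt3)
    · exact h

lemma syz_iso {X Y Z : ModuleCat.{0} A} (e : X ≅ Y) (h : IsSyzygyOf A X Z) : IsSyzygyOf A Y Z := by
  obtain ⟨P, f, ⟨hP, hf, hmin⟩, ⟨i⟩⟩ := h
  refine ⟨P, f ≫ e.hom, ⟨hP, inferInstance, ?_⟩, ⟨i ≪≫ (kernelCompMono f e.hom).symm⟩⟩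
  intro N g hg
  apply hmin
  have : g ≫ f = (g ≫ f ≫ e.hom) ≫ e.inv := by simp
  rw [this]
  infer_instance

lemma nsyz_iso {n : ℕ} {X Y Z : ModuleCat.{0} A} (e : X ≅ Y) (h : IsNthSyzygy A n X Z) :
    IsNthSyzygy A n Y Z := by
  cases n with
  | zero =>
    obtain ⟨i⟩ := h
    exact ⟨i ≪≫ e⟩
  | succ n =>
    obtain ⟨W, hW, hn⟩ := h
    exact ⟨W, syz_iso e hW, hn⟩

lemma syz_of_cover {f : P →ₗ[A] M} (hf : IsProjectiveCoverHom A (ModuleCat.ofHom f)) :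
    IsSyzygyOf A (ModuleCat.of A M) (ModuleCat.of A (LinearMap.ker f)) :=
  ⟨ModuleCat.of A P, ModuleCat.ofHom f, hf, ⟨(ModuleCat.kernelIsoKer (ModuleCat.ofHom f)).symm⟩⟩

lemma exists_nsyz [IsArtinianRing A] (hNak : IsNakayama A) (n : ℕ) :
    ∀ (M : Type) [AddCommGroup M] [Module A M] [Module.Finite A M], Uni A M →
    ∃ X : ModuleCat.{0} A, IsNthSyzygy A n (ModuleCat.of A M) X ∧ Module.Finite A X ∧
      (PD A M (n + 1) → Projective X) := by
  induction n with
  | zero =>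
    intro M _ _ hf hM
    exact ⟨ModuleCat.of A M, ⟨Iso.refl _⟩, hf,
      fun h => projective_iff_hasProjectiveDimensionLT_one.2 h⟩
  | succ n ih =>
    intro M _ _ hf hM
    obtain ⟨P, _, _, _, hPp, g, hP, hg, hc⟩ := exists_cover hNak hM
    obtain ⟨X, hX, hXf, hXp⟩ := ih (LinearMap.ker g) (hP.sub _)
    exact ⟨X, ⟨_, syz_of_cover hc, hX⟩, hXf, fun h => hXp (PD.ker g hg h)⟩

/-- Some `a`-th syzygy of `M` and `b`-th syzygy of `N` are isomorphic or both projective. -/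
def Rel (A : Type) [Ring A] (a b : ℕ) (M N : Type) [AddCommGroup M] [Module A M]
    [AddCommGroup N] [Module A N] : Prop :=
  ∃ X X' : ModuleCat.{0} A, IsNthSyzygy A a (ModuleCat.of A M) X ∧
    IsNthSyzygy A b (ModuleCat.of A N) X' ∧ Module.Finite A X ∧ Module.Finite A X' ∧
    ((Projective X ∧ Projective X') ∨ Nonempty (X ≅ X'))

lemma Rel.symm {a b : ℕ} (h : Rel A a b M N) : Rel A b a N M := by
  obtain ⟨X, X', h1, h2, h3, h4, h5⟩ := h
  exact ⟨X', X, h2, h1, h4, h3, h5.imp (fun h => ⟨h.2, h.1⟩) (fun ⟨e⟩ => ⟨e.symm⟩)⟩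

lemma Rel.equiv_left {a b : ℕ} (h : Rel A a b M N) (e : M ≃ₗ[A] P) : Rel A a b P N := by
  obtain ⟨X, X', h1, h2, h3⟩ := h
  exact ⟨X, X', nsyz_iso e.toModuleIso h1, h2, h3⟩

lemma Rel.succ_left {a b : ℕ} {f : P →ₗ[A] M} (hf : IsProjectiveCoverHom A (ModuleCat.ofHom f))
    (h : Rel A a b (LinearMap.ker f) N) : Rel A (a + 1) b M N := by
  obtain ⟨X, X', h1, h2, h3⟩ := h
  exact ⟨X, X', ⟨_, syz_of_cover hf, h1⟩, h2, h3⟩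

lemma Rel.of_pd [IsArtinianRing A] (hNak : IsNakayama A) {a b : ℕ} [Module.Finite A M]
    [Module.Finite A N] (hM : Uni A M) (hN : Uni A N) (hMp : PD A M (a + 1))
    (hNp : PD A N (b + 1)) : Rel A a b M N := by
  obtain ⟨X, h1, h2, h3⟩ := exists_nsyz hNak a M hM
  obtain ⟨X', h1', h2', h3'⟩ := exists_nsyz hNak b N hN
  exact ⟨X, X', h1, h1', h2, h2', Or.inl ⟨h3 hMp, h3' hNp⟩⟩

lemma Rel.of_equiv [IsArtinianRing A] (hNak : IsNakayama A) (n : ℕ) [Module.Finite A M]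
    (hM : Uni A M) (e : M ≃ₗ[A] N) : Rel A n n M N := by
  obtain ⟨X, h1, h2, h3⟩ := exists_nsyz hNak n M hM
  exact ⟨X, X, h1, nsyz_iso e.toModuleIso h1, h2, h2, Or.inr ⟨Iso.refl _⟩⟩

lemma ker_map (g : P →ₗ[A] M) (hg : Function.Surjective g) (f : M →ₗ[A] N) :
    ∃ h : LinearMap.ker (f ∘ₗ g) →ₗ[A] LinearMap.ker f, Function.Surjective h ∧
      Nonempty (LinearMap.ker h ≃ₗ[A] LinearMap.ker g) := by
  let h : LinearMap.ker (f ∘ₗ g) →ₗ[A] LinearMap.ker f := g.restrict (fun x hx => hx)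
  refine ⟨h, ?_, ⟨?_⟩⟩
  · rintro ⟨y, hy⟩
    obtain ⟨x, rfl⟩ := hg y
    exact ⟨⟨x, hy⟩, rfl⟩
  · let i : LinearMap.ker g →ₗ[A] LinearMap.ker h :=
      LinearMap.codRestrict _ (Submodule.inclusion (LinearMap.ker_le_ker_comp g f))
        (fun x => Subtype.ext x.2)
    refine (LinearEquiv.ofBijective i ⟨?_, ?_⟩).symm
    · intro x y hxy
      have h1 := congrArg Subtype.val hxy
      have h2 := congrArg Subtype.val h1
      exact Subtype.ext h2
    · rintro ⟨⟨x, hx⟩, hx'⟩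
      exact ⟨⟨x, congrArg Subtype.val hx'⟩, rfl⟩

/-- Kernel of a map to a zero module. -/
def kerEquivOfSubsingleton [Subsingleton N] (f : M →ₗ[A] N) : LinearMap.ker f ≃ₗ[A] M :=
  (LinearEquiv.ofEq _ _ (by ext x; simpa using Subsingleton.elim _ _)).trans
    (Submodule.topEquiv (R := A) (M := M))

lemma rel_cde [IsArtinianRing A] (hNak : IsNakayama A) (n : ℕ) :
    (∀ (Y W : Type) [AddCommGroup Y] [AddCommGroup W] [Module A Y] [Module A W]
      [Module.Finite A Y], Uni A Y → ∀ f : Y →ₗ[A] W, Function.Surjective f →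
      PD A Y (n + 1) → Rel A n (n + 1) (LinearMap.ker f) W) ∧
    (∀ (V X : Type) [AddCommGroup V] [AddCommGroup X] [Module A V] [Module A X]
      [Module.Finite A V], Uni A V → ∀ f : V →ₗ[A] X, Function.Surjective f →
      PD A (LinearMap.ker f) n → Rel A n n X V) ∧
    (∀ (X K : Type) [AddCommGroup X] [AddCommGroup K] [Module A X] [Module A K]
      [Module.Finite A X], Uni A X → ∀ f : X →ₗ[A] K, Function.Surjective f →
      PD A K (n + 1) → Rel A n n (LinearMap.ker f) X) := by
  induction n with
  | zero =>
    refine ⟨?_, ?_, ?_⟩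
    · intro Y W _ _ _ _ _ hY f hf hp
      have : Module.Finite A W := Module.Finite.of_surjective f hf
      rcases subsingleton_or_nontrivial W with hs | hn
      · exact Rel.of_pd hNak (hY.sub _) (hY.of_surj f hf)
          (hp.equiv (kerEquivOfSubsingleton f).symm) (PD.zero _)
      · have : Module.Projective A Y := pd_one_iff.1 hp
        exact (Rel.succ_left (cover_of_uni hY f hf)
          (Rel.of_equiv hNak 0 (hY.sub _) (LinearEquiv.refl _ _))).symm
    · intro V X _ _ _ _ _ hV f hf hp
      have hs := hp.subsingleton
      have hi : Function.Injective f := by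
        rw [← LinearMap.ker_eq_bot]; exact Submodule.eq_bot_of_subsingleton
      exact (Rel.of_equiv hNak 0 hV (LinearEquiv.ofBijective f ⟨hi, hf⟩)).symm
    · intro X K _ _ _ _ _ hX f hf hp
      rcases subsingleton_or_nontrivial K with hs | hn
      · exact Rel.of_equiv hNak 0 (hX.sub _) (kerEquivOfSubsingleton f)
      · have : Module.Projective A K := pd_one_iff.1 hp
        have hi := inj_of_proj hX f hf
        have hs : Subsingleton (LinearMap.ker f) := by
          rw [LinearMap.ker_eq_bot.2 hi]; infer_instance
        exact Rel.of_pd hNak (hX.sub _) hX (PD.zero _)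
          (hp.equiv (LinearEquiv.ofBijective f ⟨hi, hf⟩).symm)
  | succ n ih =>
    obtain ⟨ihC, ihD, ihE⟩ := ih
    have hD : ∀ (V X : Type) [AddCommGroup V] [AddCommGroup X] [Module A V] [Module A X]
      [Module.Finite A V], Uni A V → ∀ f : V →ₗ[A] X, Function.Surjective f →
      PD A (LinearMap.ker f) (n + 1) → Rel A (n + 1) (n + 1) X V := by
      intro V X _ _ _ _ _ hV f hf hp
      have : Module.Finite A X := Module.Finite.of_surjective f hf
      rcases subsingleton_or_nontrivial X with hs | hn
      · exact Rel.of_pd hNak (hV.of_surj f hf) hV (PD.zero _)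
          ((hp.equiv (kerEquivOfSubsingleton f)).mono (by omega))
      obtain ⟨P, _, _, _, hPp, g, hP, hg, hc⟩ := exists_cover hNak hV
      obtain ⟨h, hh, ⟨e⟩⟩ := ker_map g hg f
      have h1 := ihE _ _ (hP.sub _) h hh hp
      exact ((h1.equiv_left e).succ_left hc).symm.succ_left
        (cover_of_uni hP (f ∘ₗ g) (hf.comp hg))
    refine ⟨?_, hD, ?_⟩
    · intro Y W _ _ _ _ _ hY f hf hp
      have : Module.Finite A W := Module.Finite.of_surjective f hf
      rcases subsingleton_or_nontrivial W with hs | hn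
      · exact Rel.of_pd hNak (hY.sub _) (hY.of_surj f hf)
          (hp.equiv (kerEquivOfSubsingleton f).symm) (PD.zero _)
      obtain ⟨P, _, _, _, hPp, g, hP, hg, hc⟩ := exists_cover hNak hY
      obtain ⟨h, hh, ⟨e⟩⟩ := ker_map g hg f
      have h1 := hD _ _ (hP.sub _) h hh ((PD.ker g hg hp).equiv e.symm)
      exact (h1.symm.succ_left (cover_of_uni hP (f ∘ₗ g) (hf.comp hg))).symm
    · intro X K _ _ _ _ _ hX f hf hp
      rcases subsingleton_or_nontrivial K with hs | hn
      · exact Rel.of_equiv hNak _ (hX.sub _) (kerEquivOfSubsingleton f)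
      obtain ⟨P, _, _, _, hPp, g, hP, hg, hc⟩ := exists_cover hNak hX
      obtain ⟨h, hh, ⟨e⟩⟩ := ker_map g hg f
      have h1 := ihC _ _ (hP.sub _) h hh (PD.ker (f ∘ₗ g) (hf.comp hg) hp)
      exact ((h1.equiv_left e).succ_left hc).symm

lemma inAdd_of_proj {X W : ModuleCat.{0} A} [Module.Finite A X] (hX : Projective X) :
    InAdd A X (ModuleCat.of A (A × W)) := by
  have hp : Module.Projective A X := (IsProjective.iff_projective X).2 hX
  obtain ⟨k, F, hF⟩ := Module.Finite.exists_fin' A X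
  obtain ⟨s, hs⟩ := Module.projective_lifting_property F LinearMap.id hF
  let a : (Fin k → A) →ₗ[A] (Fin k → A × W) := LinearMap.pi
    (fun i => LinearMap.inl A A W ∘ₗ LinearMap.proj i)
  let b : (Fin k → A × W) →ₗ[A] (Fin k → A) := LinearMap.pi
    (fun i => LinearMap.fst A A W ∘ₗ LinearMap.proj i)
  refine ⟨k, ModuleCat.ofHom (a ∘ₗ s), ModuleCat.ofHom (F ∘ₗ b), ?_⟩
  ext x
  exact LinearMap.congr_fun hs x

lemma inAdd_of_iso {X W : ModuleCat.{0} A} (e : X ≅ W) :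
    InAdd A X (ModuleCat.of A (A × W)) := by
  let a : X →ₗ[A] (Fin 1 → A × W) := LinearMap.pi
    (fun _ => LinearMap.inr A A W ∘ₗ e.hom.hom)
  let b : (Fin 1 → A × W) →ₗ[A] X :=
    e.inv.hom ∘ₗ LinearMap.snd A A W ∘ₗ LinearMap.proj 0
  refine ⟨1, ModuleCat.ofHom a, ModuleCat.ofHom b, ?_⟩
  ext x
  change e.inv (e.hom x) = x
  simp

lemma delLE_of_rel {n : ℕ} [Module.Finite A N] (h : Rel A n (n + 1) M N) :
    DelLE A n (ModuleCat.of A M) := by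
  obtain ⟨X, X', h1, h2, h3, h4, h5⟩ := h
  refine ⟨X, h1, ModuleCat.of A N, ‹_›, X', h2, ?_⟩
  rcases h5 with h | h
  · exact inAdd_of_proj h.1
  · obtain ⟨e⟩ := h
    exact inAdd_of_iso e

end NK


open ArtinAlg in
/-- Let `A` be a Nakayama algebra and `X` an indecomposable module, and
set `e(X) = min {pd X, pd (I X)}`. Then
`e(X) = min {pd Y : Y finitely generated and X ⊆ Y}`, and `del X ≤ e(X)`. -/
theorem statement_11 (R : Type) [CommRing R] [IsArtinianRing R]
    (A : Type) [Ring A] [Algebra R A] [Module.Finite R A]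
    (hNak : IsNakayama A)
    (X : ModuleCat.{0} A) (hX : Module.Finite A ↥X) (hInd : Indec A X)
    (I : ModuleCat.{0} A) (hI : IsInjEnvOf A X I) :
    min (projDim A X) (projDim A I) =
      sInf {x : ℕ∞ | ∃ Y : ModuleCat.{0} A, Module.Finite A ↥Y ∧
        (∃ f : X ⟶ Y, CategoryTheory.Mono f) ∧ x = projDim A Y} ∧
    delLevel A X ≤ min (projDim A X) (projDim A I) := by
  have hArt : IsArtinianRing A := IsArtinianRing.of_finite R A
  have hXn : Nontrivial X := hInd.1
  have hXu : NK.Uni A X := hNak X hX hInd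
  obtain ⟨f, hIinj, hfm, hess⟩ := hI
  have hfi : Function.Injective f.hom := (ModuleCat.mono_iff_injective f).1 hfm
  have hess' : ∀ K : Submodule A I, K ⊓ LinearMap.range f.hom = ⊥ → K = ⊥ := by
    intro K hK
    have hm : Mono (ModuleCat.ofHom K.mkQ) := by
      apply hess
      rw [ModuleCat.mono_iff_injective]
      change Function.Injective (K.mkQ ∘ₗ f.hom)
      rw [injective_iff_map_eq_zero]
      intro x hx
      have hxK : f.hom x ∈ K := (Submodule.Quotient.mk_eq_zero K).1 hx
      have : f.hom x ∈ K ⊓ LinearMap.range f.hom := ⟨hxK, x, rfl⟩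
      rw [hK, Submodule.mem_bot] at this
      exact hfi (by rw [this, map_zero])
    have hinj : Function.Injective K.mkQ := (ModuleCat.mono_iff_injective _).1 hm
    rw [← Submodule.ker_mkQ K]
    exact LinearMap.ker_eq_bot.2 hinj
  obtain ⟨hIu, hIf⟩ := NK.ess_ext hNak hXu f.hom hfi hess'
  refine ⟨le_antisymm ?_ ?_, ?_⟩
  · refine le_sInf ?_
    rintro _ ⟨Y, hYf, ⟨g, hg⟩, rfl⟩
    refine le_sInf ?_
    rintro _ ⟨n, rfl, hn⟩
    rw [NK.projDimLE_iff] at hn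
    have hgi : Function.Injective g.hom := (ModuleCat.mono_iff_injective g).1 hg
    obtain ⟨K, hKu, hKp, i, hi⟩ := NK.exists_uni_sup hNak hXu g.hom hgi hn
    have hmi : Mono (ModuleCat.ofHom i) := (ModuleCat.mono_iff_injective _).2 hi
    let j := (Injective.factorThru f (ModuleCat.ofHom i)).hom
    have hj : ∀ x, j (i x) = f.hom x := fun x =>
      LinearMap.congr_fun (congrArg ModuleCat.Hom.hom
        (Injective.comp_factorThru f (ModuleCat.ofHom i))) x
    have hji : Function.Injective j := by
      rw [← LinearMap.ker_eq_bot]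
      rcases hKu (LinearMap.ker j) (LinearMap.range i) with h | h
      · rw [eq_bot_iff]
        intro y hy
        obtain ⟨x, rfl⟩ := h hy
        have : f.hom x = 0 := by rw [← hj]; exact hy
        have : x = 0 := hfi (by rw [this, map_zero])
        simp [this]
      · exfalso
        obtain ⟨x, hx⟩ := exists_ne (0 : X)
        apply hx
        apply hfi
        rw [← hj, map_zero]
        exact h ⟨x, rfl⟩
    rcases (NK.pd_ab hNak n).1 X K I hIu i j hi hji hKp with h | h
    · exact (min_le_left _ _).trans (sInf_le ⟨n, rfl, (NK.projDimLE_iff n X).2 h⟩)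
    · exact (min_le_right _ _).trans (sInf_le ⟨n, rfl, (NK.projDimLE_iff n I).2 h⟩)
  · refine le_min (sInf_le ⟨X, hX, ⟨𝟙 X, inferInstance⟩, rfl⟩) (sInf_le ⟨I, hIf, ⟨f, hfm⟩, rfl⟩)
  · refine le_min (le_sInf ?_) (le_sInf ?_)
    · rintro _ ⟨n, rfl, hn⟩
      rw [NK.projDimLE_iff] at hn
      refine sInf_le ⟨n, rfl, ?_⟩
      exact NK.delLE_of_rel (M := X) (NK.Rel.of_pd (N := X) hNak hXu hXu hn (hn.mono (by omega)))
    · rintro _ ⟨n, rfl, hn⟩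
      rw [NK.projDimLE_iff] at hn
      refine sInf_le ⟨n, rfl, ?_⟩
      have h1 := (NK.rel_cde hNak n).1 I _ hIu (LinearMap.range f.hom).mkQ
        (Submodule.mkQ_surjective _) hn
      let e : LinearMap.ker (LinearMap.range f.hom).mkQ ≃ₗ[A] X :=
        (LinearEquiv.ofEq _ _ (Submodule.ker_mkQ _)).trans
          (LinearEquiv.ofInjective f.hom hfi).symm
      exact NK.delLE_of_rel (M := X) (h1.equiv_left e)
end
end
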